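/- Let D be a field and let k ≥ 1, n ≥ 1. If D is infinite and either (k = 1 and n ≥ 2) or (2 ≤ k ≤ n), then the relative integral group homology H_k(Sp_{2n+2}(D), Sp_{2n}(D); Z) vanishes; equivalently, the map H_k(Sp_{2n}(D); Z) → H_k(Sp_{2n+2}(D); Z) induced by the hyperbolic embedding is surjective and the induced map in degree k − 1 is injective. If D is a finite field, the same conclusion holds provided n ≥ 2k. -/

import Mathlib

namespace Stmt2

open Finsupp in
/-- The `n`-th differential of the (inhomogeneous) bar complex computing the homology of the
group `G` with trivial coefficients in the commutative ring `R`.  The module of `n`-chains is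
the free `R`-module on `n`-tuples of elements of `G`, and on a basis element
`(g₁, …, g_{n+1})` the differential is
`(g₂,…,g_{n+1}) + ∑ᵢ (-1)ⁱ (g₁,…,gᵢgᵢ₊₁,…,g_{n+1}) + (-1)^{n+1} (g₁,…,g_n)`. -/
noncomputable def barDiff (R : Type) [CommRing R] (G : Type*) [Group G] (n : ℕ) :
    ((Fin (n + 1) → G) →₀ R) →ₗ[R] ((Fin n → G) →₀ R) :=
  Finsupp.lift ((Fin n → G) →₀ R) R (Fin (n + 1) → G) fun c =>
    Finsupp.single (fun j : Fin n => c j.succ) (1 : R)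
      + ∑ i : Fin n, Finsupp.single
          (fun j : Fin n => if (j : ℕ) < (i : ℕ) then c (Fin.castSucc j)
            else if (j : ℕ) = (i : ℕ) then c (Fin.castSucc i) * c i.succ
            else c j.succ) ((-1 : R) ^ ((i : ℕ) + 1))
      + Finsupp.single (fun j : Fin n => c (Fin.castSucc j)) ((-1 : R) ^ (n + 1))

/-- The submodule of `k`-cycles of the bar complex of `G` (with trivial coefficients `R`). -/
noncomputable def barCycles (R : Type) [CommRing R] (G : Type*) [Group G] :
    (k : ℕ) → Submodule R ((Fin k → G) →₀ R)
  | 0 => ⊤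
  | (k + 1) => LinearMap.ker (barDiff R G k)

/-- The submodule of `k`-boundaries of the bar complex of `G`. -/
noncomputable def barBoundaries (R : Type) [CommRing R] (G : Type*) [Group G] (k : ℕ) :
    Submodule R ((Fin k → G) →₀ R) :=
  LinearMap.range (barDiff R G k)

/-- Group homology `H_k(G; R)` with trivial coefficients, defined via the bar complex as the
image of the `k`-cycles in the quotient of the `k`-chains by the `k`-boundaries
(i.e. as `Z_k / B_k`). -/
noncomputable def barHomology (R : Type) [CommRing R] (G : Type*) [Group G] (k : ℕ) :=
  ↥(Submodule.map (barBoundaries R G k).mkQ (barCycles R G k))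

noncomputable instance (R : Type) [CommRing R] (G : Type*) [Group G] (k : ℕ) :
    AddCommGroup (barHomology R G k) :=
  inferInstanceAs (AddCommGroup ↥(Submodule.map (barBoundaries R G k).mkQ (barCycles R G k)))

noncomputable instance (R : Type) [CommRing R] (G : Type*) [Group G] (k : ℕ) :
    Module R (barHomology R G k) :=
  inferInstanceAs (Module R ↥(Submodule.map (barBoundaries R G k).mkQ (barCycles R G k)))

/-- The map induced on bar chains by a map `φ : G' → G` of groups; for a group homomorphism
`φ` this is the usual chain map inducing `H_k(φ) : H_k(G'; R) → H_k(G; R)`. -/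
noncomputable def barMap (R : Type) [CommRing R] {G' G : Type*} [Group G'] [Group G]
    (φ : G' → G) (k : ℕ) : ((Fin k → G') →₀ R) →ₗ[R] ((Fin k → G) →₀ R) :=
  Finsupp.lmapDomain R R fun c => φ ∘ c

/-- The statement that the map `H_k(G'; R) → H_k(G; R)` induced by `φ : G' → G` is
surjective, expressed at the chain level of the bar complexes:  every `k`-cycle of `G` differs
from the image of a `k`-cycle of `G'` by a `k`-boundary. -/
def BarInducedSurj (R : Type) [CommRing R] {G' G : Type*} [Group G'] [Group G]
    (φ : G' → G) (k : ℕ) : Prop :=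
  ∀ z ∈ barCycles R G k, ∃ w ∈ barCycles R G' k,
    z - barMap R φ k w ∈ barBoundaries R G k

/-- The statement that the map `H_k(G'; R) → H_k(G; R)` induced by `φ : G' → G` is
injective, expressed at the chain level of the bar complexes:  a `k`-cycle of `G'` whose image
is a `k`-boundary of `G` is already a `k`-boundary of `G'`. -/
def BarInducedInj (R : Type) [CommRing R] {G' G : Type*} [Group G'] [Group G]
    (φ : G' → G) (k : ℕ) : Prop :=
  ∀ w ∈ barCycles R G' k,
    barMap R φ k w ∈ barBoundaries R G k → w ∈ barBoundaries R G' k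

open Matrix

variable (D : Type) [Field D]

/-- The Gram matrix `J_n = [[0, Iₙ], [−Iₙ, 0]]` of the standard nondegenerate alternating
form with respect to a hyperbolic basis `e_{−n}, …, e_{−1}, e_1, …, e_n`. -/
def Jmat (n : ℕ) : Matrix (Fin n ⊕ Fin n) (Fin n ⊕ Fin n) D :=
  Matrix.fromBlocks 0 1 (-1) 0

/-- The symplectic group `Sp_{2n}(D) = {A ∈ GL_{2n}(D) : Aᵀ Jₙ A = Jₙ}`. -/
def SpGroup (n : ℕ) : Subgroup (GL (Fin n ⊕ Fin n) D) where
  carrier := {A : GL (Fin n ⊕ Fin n) D |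
    (A : Matrix (Fin n ⊕ Fin n) (Fin n ⊕ Fin n) D)ᵀ * Jmat D n *
      (A : Matrix (Fin n ⊕ Fin n) (Fin n ⊕ Fin n) D) = Jmat D n}
  one_mem' := by simp
  mul_mem' := by
    intro a b ha hb
    simp only [Set.mem_setOf_eq, Units.val_mul, Matrix.transpose_mul] at ha hb ⊢
    calc (b : Matrix _ _ D)ᵀ * (a : Matrix _ _ D)ᵀ * Jmat D n *
          ((a : Matrix _ _ D) * (b : Matrix _ _ D))
        = (b : Matrix _ _ D)ᵀ * ((a : Matrix _ _ D)ᵀ * Jmat D n * (a : Matrix _ _ D)) *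
          (b : Matrix _ _ D) := by simp only [Matrix.mul_assoc]
      _ = Jmat D n := by rw [ha, hb]
  inv_mem' := by
    intro a ha
    simp only [Set.mem_setOf_eq] at ha ⊢
    calc ((a⁻¹ : GL _ D) : Matrix _ _ D)ᵀ * Jmat D n * ((a⁻¹ : GL _ D) : Matrix _ _ D)
        = ((a⁻¹ : GL _ D) : Matrix _ _ D)ᵀ *
            ((a : Matrix _ _ D)ᵀ * Jmat D n * (a : Matrix _ _ D)) *
            ((a⁻¹ : GL _ D) : Matrix _ _ D) := by rw [ha]
      _ = ((a : Matrix _ _ D) * ((a⁻¹ : GL _ D) : Matrix _ _ D))ᵀ * Jmat D n *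
            ((a : Matrix _ _ D) * ((a⁻¹ : GL _ D) : Matrix _ _ D)) := by
          simp only [Matrix.transpose_mul, Matrix.mul_assoc]
      _ = Jmat D n := by rw [Units.mul_inv]; simp

theorem mem_spGroup_iff (n : ℕ) (A : GL (Fin n ⊕ Fin n) D) :
    A ∈ SpGroup D n ↔
      (A : Matrix (Fin n ⊕ Fin n) (Fin n ⊕ Fin n) D)ᵀ * Jmat D n *
        (A : Matrix (Fin n ⊕ Fin n) (Fin n ⊕ Fin n) D) = Jmat D n :=
  Iff.rfl

/-- The identification of the index sets of the hyperbolic bases, where the two new basis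
vectors `e_{−(n+1)}` and `e_{n+1}` are appended at the last position of each of the two
blocks of `n` basis vectors. -/
def sumEquiv (n : ℕ) : ((Fin n ⊕ Fin n) ⊕ (Fin 1 ⊕ Fin 1)) ≃ (Fin (n + 1) ⊕ Fin (n + 1)) where
  toFun := Sum.elim (Sum.map Fin.castSucc Fin.castSucc)
    (Sum.elim (fun _ => Sum.inl (Fin.last n)) (fun _ => Sum.inr (Fin.last n)))
  invFun := Sum.elim
    (fun i => Fin.lastCases (Sum.inr (Sum.inl 0)) (fun j => Sum.inl (Sum.inl j)) i)
    (fun i => Fin.lastCases (Sum.inr (Sum.inr 0)) (fun j => Sum.inl (Sum.inr j)) i)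
  left_inv := by
    rintro ((i | i) | (x | x))
    · simp
    · simp
    · simp only [Sum.elim_inl, Sum.elim_inr, Fin.lastCases_last]
      rw [Subsingleton.elim (0 : Fin 1) x]
    · simp only [Sum.elim_inl, Sum.elim_inr, Fin.lastCases_last]
      rw [Subsingleton.elim (0 : Fin 1) x]
  right_inv := by
    rintro (i | i) <;> induction i using Fin.lastCases <;> simp

/-- The matrix `diag(A, I₂)` extending `A` by the identity on the two new basis vectors
`e_{−(n+1)}`, `e_{n+1}`. -/
noncomputable def embMat (n : ℕ)
    (A : Matrix (Fin n ⊕ Fin n) (Fin n ⊕ Fin n) D) :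
    Matrix (Fin (n + 1) ⊕ Fin (n + 1)) (Fin (n + 1) ⊕ Fin (n + 1)) D :=
  (Matrix.fromBlocks A 0 0 (1 : Matrix (Fin 1 ⊕ Fin 1) (Fin 1 ⊕ Fin 1) D)).submatrix
    (sumEquiv n).symm (sumEquiv n).symm

theorem jmat_decomp (n : ℕ) :
    (Matrix.fromBlocks (Jmat D n) 0 0 (Jmat D 1)).submatrix
      (sumEquiv n).symm (sumEquiv n).symm = Jmat D (n + 1) := by
  have key : ∀ p q, Matrix.fromBlocks (Jmat D n) 0 0 (Jmat D 1) p q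
      = Jmat D (n + 1) (sumEquiv n p) (sumEquiv n q) := by
    rintro ((p | p) | (p | p)) ((q | q) | (q | q)) <;>
      simp [sumEquiv, Jmat, Matrix.one_apply, Fin.castSucc_inj,
        (Fin.castSucc_lt_last _).ne, (Fin.castSucc_lt_last _).ne'] <;>
      exact Subsingleton.elim _ _
  ext x y
  rw [Matrix.submatrix_apply, key, Equiv.apply_symm_apply, Equiv.apply_symm_apply]

/-- The extension-by-the-identity map `GL_{2n}(D) → GL_{2n+2}(D)`. -/
noncomputable def embGL (n : ℕ) (A : GL (Fin n ⊕ Fin n) D) :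
    GL (Fin (n + 1) ⊕ Fin (n + 1)) D where
  val := embMat D n (A : Matrix _ _ D)
  inv := embMat D n ((A⁻¹ : GL _ D) : Matrix _ _ D)
  val_inv := by
    simp only [embMat, Matrix.submatrix_mul_equiv, Matrix.fromBlocks_multiply,
      Matrix.mul_zero, Matrix.zero_mul, Matrix.mul_one, Matrix.one_mul, add_zero, zero_add,
      Units.mul_inv, Matrix.fromBlocks_one, Matrix.submatrix_one_equiv]
  inv_val := by
    simp only [embMat, Matrix.submatrix_mul_equiv, Matrix.fromBlocks_multiply,
      Matrix.mul_zero, Matrix.zero_mul, Matrix.mul_one, Matrix.one_mul, add_zero, zero_add,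
      Units.inv_mul, Matrix.fromBlocks_one, Matrix.submatrix_one_equiv]

/-- The hyperbolic embedding `Sp_{2n}(D) → Sp_{2n+2}(D)`, acting as `A` on the old basis
vectors and fixing the two new hyperbolic basis vectors `e_{−(n+1)}` and `e_{n+1}`. -/
noncomputable def embSp (n : ℕ) (A : ↥(SpGroup D n)) : ↥(SpGroup D (n + 1)) :=
  ⟨embGL D n ↑A, by
    have hA := (mem_spGroup_iff D n ↑A).1 A.2
    rw [mem_spGroup_iff]
    show (embMat D n (((A : GL (Fin n ⊕ Fin n) D) : Matrix _ _ D)))ᵀ * Jmat D (n + 1) *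
        embMat D n (((A : GL (Fin n ⊕ Fin n) D) : Matrix _ _ D)) = Jmat D (n + 1)
    rw [← jmat_decomp D n]
    simp only [embMat, Matrix.transpose_submatrix, Matrix.fromBlocks_transpose,
      Matrix.submatrix_mul_equiv, Matrix.fromBlocks_multiply]
    simp [hA]⟩



/-! ### Generic complexes -/

section Cx

variable {A : ℕ → Type} [∀ j, AddCommGroup (A j)]

/-- being a cycle (in degree zero there is no condition) -/
def IsCyc (d : ∀ j, A (j + 1) →ₗ[ℤ] A j) : ∀ j, A j → Prop
  | 0, _ => True
  | (j + 1), z => d j z = 0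

/-- being a boundary -/
def IsBd (d : ∀ j, A (j + 1) →ₗ[ℤ] A j) (j : ℕ) (z : A j) : Prop := ∃ y, d j y = z

variable {d : ∀ j, A (j + 1) →ₗ[ℤ] A j}

theorem IsCyc.add {j : ℕ} {x y : A j} (hx : IsCyc d j x) (hy : IsCyc d j y) :
    IsCyc d j (x + y) := by
  cases j with
  | zero => trivial
  | succ j => simp only [IsCyc] at *; rw [map_add, hx, hy, add_zero]

theorem IsCyc.neg {j : ℕ} {x : A j} (hx : IsCyc d j x) : IsCyc d j (-x) := by
  cases j with
  | zero => trivial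
  | succ j => simp only [IsCyc] at *; rw [map_neg, hx, neg_zero]

theorem IsCyc.sub {j : ℕ} {x y : A j} (hx : IsCyc d j x) (hy : IsCyc d j y) :
    IsCyc d j (x - y) := by
  rw [sub_eq_add_neg]; exact hx.add hy.neg

theorem IsCyc.zero {j : ℕ} : IsCyc d j (0 : A j) := by
  cases j with
  | zero => trivial
  | succ j => simp only [IsCyc]; rw [map_zero]

theorem IsCyc.sum {ι : Type} {j : ℕ} (t : Finset ι) (f : ι → A j)
    (h : ∀ i ∈ t, IsCyc d j (f i)) : IsCyc d j (∑ i ∈ t, f i) :=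
  Finset.sum_induction f (IsCyc d j) (fun _ _ => IsCyc.add) IsCyc.zero h

theorem IsBd.add {j : ℕ} {x y : A j} (hx : IsBd d j x) (hy : IsBd d j y) :
    IsBd d j (x + y) := by
  obtain ⟨a, rfl⟩ := hx
  obtain ⟨b, rfl⟩ := hy
  exact ⟨a + b, map_add _ _ _⟩

theorem IsBd.neg {j : ℕ} {x : A j} (hx : IsBd d j x) : IsBd d j (-x) := by
  obtain ⟨a, rfl⟩ := hx
  exact ⟨-a, map_neg _ _⟩

theorem IsBd.sub {j : ℕ} {x y : A j} (hx : IsBd d j x) (hy : IsBd d j y) :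
    IsBd d j (x - y) := by
  rw [sub_eq_add_neg]; exact hx.add hy.neg

theorem IsBd.zero {j : ℕ} : IsBd d j (0 : A j) := ⟨0, map_zero _⟩

theorem IsBd.sum {ι : Type} {j : ℕ} (t : Finset ι) (f : ι → A j)
    (h : ∀ i ∈ t, IsBd d j (f i)) : IsBd d j (∑ i ∈ t, f i) :=
  Finset.sum_induction f (IsBd d j) (fun _ _ => IsBd.add) IsBd.zero h

theorem IsBd.zsmul {j : ℕ} (c : ℤ) {x : A j} (hx : IsBd d j x) : IsBd d j (c • x) := by
  obtain ⟨a, rfl⟩ := hx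
  exact ⟨c • a, map_zsmul _ _ _⟩

theorem IsCyc.zsmul {j : ℕ} (c : ℤ) {x : A j} (hx : IsCyc d j x) : IsCyc d j (c • x) := by
  cases j with
  | zero => trivial
  | succ j => simp only [IsCyc] at *; rw [map_zsmul, hx, smul_zero]

variable {B : ℕ → Type} [∀ j, AddCommGroup (B j)] {e : ∀ j, B (j + 1) →ₗ[ℤ] B j}

theorem IsCyc.map (f : ∀ j, A j →ₗ[ℤ] B j) (hf : ∀ j x, e j (f (j + 1) x) = f j (d j x))
    {j : ℕ} {x : A j} (hx : IsCyc d j x) : IsCyc e j (f j x) := by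
  cases j with
  | zero => trivial
  | succ j => simp only [IsCyc] at *; rw [hf, hx, map_zero]

theorem IsBd.map (f : ∀ j, A j →ₗ[ℤ] B j) (hf : ∀ j x, e j (f (j + 1) x) = f j (d j x))
    {j : ℕ} {x : A j} (hx : IsBd d j x) : IsBd e j (f j x) := by
  obtain ⟨y, rfl⟩ := hx
  exact ⟨f (j + 1) y, hf j y⟩

theorem IsBd.isCyc (dd : ∀ j x, d j (d (j + 1) x) = 0) {j : ℕ} {x : A j} (hx : IsBd d j x) :
    IsCyc d j x := by
  obtain ⟨y, rfl⟩ := hx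
  cases j with
  | zero => trivial
  | succ j => exact dd j y

end Cx

/-! ### Double complexes -/

section Dbl

variable {A : ℕ → ℕ → Type} [∀ P j, AddCommGroup (A P j)]
  (dh : ∀ P j, A (P + 1) j →ₗ[ℤ] A P j) (dv : ∀ P j, A P (j + 1) →ₗ[ℤ] A P j)

/-- exactness of the `j`-th row at `P` -/
def RowEx (P j : ℕ) : Prop :=
  ∀ x : A P j, IsCyc (A := fun P => A P j) (fun P => dh P j) P x → ∃ y, dh P j y = x

/-- the second differential vanishing condition -/
def E2 (Q j : ℕ) : Prop :=
  ∀ w : A (Q + 1) j, IsCyc (dv (Q + 1)) j w → IsBd (dv Q) j (dh Q j w) →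
    ∃ y : A (Q + 2) j, IsCyc (dv (Q + 2)) j y ∧ IsBd (dv (Q + 1)) j (w - dh (Q + 1) j y)

variable {dh dv}
variable (dhdh : ∀ P j x, dh P j (dh (P + 1) j x) = 0)
  (dvdv : ∀ P j x, dv P j (dv P (j + 1) x) = 0)
  (comm : ∀ P j x, dh P j (dv (P + 1) j x) = dv P j (dh P (j + 1) x))

include dhdh dvdv comm

theorem dbl_S : ∀ (j P : ℕ) (x : A P j), IsCyc (dv P) j x →
    IsCyc (A := fun P => A P j) (fun P => dh P j) P x →
    (∀ i, i ≤ j → RowEx dh (P + i) (j - i)) →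
    (∀ Q j', P + 1 ≤ Q → Q + j' = P + j → E2 dh dv Q j') →
    ∃ w : A (P + 1) j, IsCyc (dv (P + 1)) j w ∧ dh P j w = x := by
  intro j
  induction j with
  | zero =>
    intro P x _ hx hr _
    obtain ⟨w, hw⟩ := hr 0 le_rfl x hx
    exact ⟨w, trivial, hw⟩
  | succ j ih =>
    intro P x hc hx hr hE
    obtain ⟨z, hz⟩ := hr 0 (Nat.zero_le _) x hx
    have hz' : dh P (j + 1) z = x := hz
    have hc' : dv P j x = 0 := hc
    obtain ⟨w, hw1, hw2⟩ := ih (P + 1) (dv (P + 1) j z)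
      (IsBd.isCyc (dvdv (P + 1)) ⟨z, rfl⟩)
      (by show dh P j _ = 0; rw [comm, hz', hc'])
      (by
        intro i hi
        have := hr (i + 1) (by omega)
        have e1 : P + (i + 1) = P + 1 + i := by omega
        have e2 : j + 1 - (i + 1) = j - i := by omega
        rw [e1, e2] at this
        exact this)
      (by intro Q j' h1 h2; exact hE Q j' (by omega) (by omega))
    obtain ⟨y, _, y', hy'⟩ := hE (P + 1) j le_rfl (by omega) w hw1 ⟨z, hw2.symm⟩
    refine ⟨z - dh (P + 1) (j + 1) y', ?_, ?_⟩
    · show dv (P + 1) j _ = 0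
      rw [map_sub, ← comm, hy', map_sub, dhdh, sub_zero, hw2, sub_self]
    · rw [map_sub, dhdh, hz', sub_zero]

theorem dbl_surj (q : ℕ) (hr : ∀ P j, P + j = q → RowEx dh P j)
    (hE : ∀ Q j, 1 ≤ Q → Q + j = q → E2 dh dv Q j) (x : A 0 q) (hx : IsCyc (dv 0) q x) :
    ∃ w : A 1 q, IsCyc (dv 1) q w ∧ dh 0 q w = x :=
  dbl_S dhdh dvdv comm q 0 x hx trivial (fun i hi => hr _ _ (by omega))
    (fun Q j' h1 h2 => hE Q j' (by omega) (by omega))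

theorem dbl_inj (q : ℕ) (hr : ∀ P j, P + j = q + 1 → RowEx dh P j)
    (hE : ∀ Q j, 2 ≤ Q → Q + j = q + 1 → E2 dh dv Q j)
    (hd : ∀ w : A 2 q, IsCyc (dv 2) q w → IsBd (dv 1) q (dh 1 q w))
    (z : A 1 q) (hz : IsCyc (dv 1) q z) (hb : IsBd (dv 0) q (dh 0 q z)) : IsBd (dv 1) q z := by
  obtain ⟨y, hy⟩ := hb
  obtain ⟨y0, hy0⟩ := hr 0 (q + 1) (by omega) y trivial
  obtain ⟨w, hw, hwz⟩ := dbl_S dhdh dvdv comm q 1 (z - dv 1 q y0)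
    (hz.sub (IsBd.isCyc (dvdv 1) ⟨y0, rfl⟩))
    (by show dh 0 q _ = 0; rw [map_sub, comm, hy0, hy, sub_self])
    (fun i hi => hr _ _ (by omega))
    (fun Q j' h1 h2 => hE Q j' (by omega) (by omega))
  have := (hd w hw).add (⟨y0, rfl⟩ : IsBd (dv 1) q (dv 1 q y0))
  rw [hwz, sub_add_cancel] at this
  exact this

end Dbl

/-! ### Alternating sums -/

section Alt

theorem alt_sum_zero {M N R : Type} [AddCommGroup M] [AddCommGroup N] [AddCommGroup R] (n : ℕ)
    (f : Fin (n + 2) → M →ₗ[ℤ] N) (g : Fin (n + 1) → N →ₗ[ℤ] R)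
    (h : ∀ i j : Fin (n + 1), i ≤ j → ∀ x, g i (f j.succ x) = g j (f i.castSucc x)) (x : M) :
    ∑ i : Fin (n + 1), (-1 : ℤ) ^ (i : ℕ) • g i (∑ j : Fin (n + 2), (-1 : ℤ) ^ (j : ℕ) • f j x)
      = 0 := by
  simp only [map_sum, map_zsmul, Finset.smul_sum, smul_smul]
  rw [← Finset.sum_product']
  let P := Fin (n + 1) × Fin (n + 2)
  let S : Finset P := {ij : P | (ij.2 : ℕ) ≤ (ij.1 : ℕ)}
  rw [Finset.univ_product_univ, ← Finset.sum_add_sum_compl S, ← eq_neg_iff_add_eq_zero,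
    ← Finset.sum_neg_distrib]
  let φ : ∀ ij : P, ij ∈ S → P := fun ij hij =>
    (Fin.castLT ij.2 (lt_of_le_of_lt (Finset.mem_filter.mp hij).right (Fin.is_lt ij.1)), ij.1.succ)
  apply Finset.sum_bij φ
  · intro ij hij
    simp_rw [φ, S, Finset.compl_filter, Finset.mem_filter_univ, Fin.val_succ, Fin.val_castLT]
      at hij ⊢
    lia
  · rintro ⟨i, j⟩ hij ⟨i', j'⟩ hij' h
    rw [Prod.mk_inj]
    exact ⟨by simpa [φ] using congr_arg Prod.snd h,
      by simpa [φ, Fin.castSucc_castLT] using congr_arg Fin.castSucc (congr_arg Prod.fst h)⟩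
  · rintro ⟨i', j'⟩ hij'
    simp_rw [S, Finset.compl_filter, Finset.mem_filter_univ, not_le] at hij'
    refine ⟨(j'.pred <| ?_, Fin.castSucc i'), ?_, ?_⟩
    · rintro rfl
      simp only [Fin.val_zero, not_lt_zero] at hij'
    · simpa [S] using Nat.le_sub_one_of_lt hij'
    · simp only [φ, Fin.castLT_castSucc, Fin.succ_pred]
  · rintro ⟨i, j⟩ hij
    dsimp
    have hle : (j : ℕ) ≤ (i : ℕ) := by simpa [S] using hij
    have h1 := h (Fin.castLT j (lt_of_le_of_lt hle i.2)) i (by rw [Fin.le_def]; exact hle) x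
    rw [Fin.castSucc_castLT] at h1
    show _ = -(((-1 : ℤ) ^ (j : ℕ) * (-1) ^ ((i : ℕ) + 1)) • g _ (f i.succ x))
    rw [h1, ← neg_smul]
    congr 1
    ring

end Alt




/-! ### Chains on orbits -/

section Orb

/-- orbits -/
abbrev Orb (H Ω : Type) [Group H] [MulAction H Ω] := MulAction.orbitRel.Quotient H Ω

variable {H K Ω Ψ M : Type} [Group H] [MulAction H Ω] [Group K] [MulAction K Ψ] [AddCommGroup M]

/-- the orbit of an element -/
def mkO (H : Type) {Ω : Type} [Group H] [MulAction H Ω] (ω : Ω) : Orb H Ω := Quotient.mk _ ω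

theorem mkO_eq {a b : Ω} : mkO H a = mkO H b ↔ ∃ h : H, h • a = b := by
  unfold mkO
  rw [Quotient.eq, MulAction.orbitRel_apply, MulAction.mem_orbit_symm, MulAction.mem_orbit_iff]

theorem mkO_smul (h : H) (a : Ω) : mkO H (h • a) = mkO H a := (mkO_eq.2 ⟨h, rfl⟩).symm

theorem mkO_out (y : Orb H Ω) : mkO H (Quotient.out y) = y := Quotient.out_eq y

/-- chains on orbits -/
abbrev Ch (H Ω : Type) [Group H] [MulAction H Ω] := Orb H Ω →₀ ℤ

/-- basis elements -/
noncomputable def bs (H : Type) {Ω : Type} [Group H] [MulAction H Ω] (ω : Ω) : Ch H Ω :=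
  Finsupp.single (mkO H ω) 1

theorem bs_smul (h : H) (a : Ω) : bs H (h • a) = bs H a := by
  unfold bs; rw [mkO_smul]

/-- extension of an invariant function by linearity -/
noncomputable def clift (f : Ω → M) (hf : ∀ (h : H) (ω : Ω), f (h • ω) = f ω) :
    Ch H Ω →ₗ[ℤ] M :=
  Finsupp.lift M ℤ (Orb H Ω) (Quotient.lift f (by
    intro a b hab
    obtain ⟨h, rfl⟩ := mkO_eq.1 (Quotient.sound hab : mkO H a = mkO H b)
    exact (hf h a).symm))

@[simp] theorem clift_bs (f : Ω → M) (hf : ∀ (h : H) (ω : Ω), f (h • ω) = f ω) (ω : Ω) :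
    clift f hf (bs H ω) = f ω := by
  simp [clift, bs, mkO]

theorem ch_ext {f g : Ch H Ω →ₗ[ℤ] M} (h : ∀ ω, f (bs H ω) = g (bs H ω)) : f = g := by
  apply Finsupp.lhom_ext'
  intro y
  apply LinearMap.ext_ring
  obtain ⟨ω, rfl⟩ := Quotient.exists_rep y
  exact h ω

theorem ch_ext_apply {f g : Ch H Ω →ₗ[ℤ] M} (h : ∀ ω, f (bs H ω) = g (bs H ω)) (x : Ch H Ω) :
    f x = g x := by rw [ch_ext h]

theorem ch_induction {p : Ch H Ω → Prop} (h0 : p 0) (ha : ∀ x y, p x → p y → p (x + y))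
    (hs : ∀ (c : ℤ) ω, p (c • bs H ω)) (x : Ch H Ω) : p x := by
  induction x using Finsupp.induction_linear with
  | zero => exact h0
  | add f g hf hg => exact ha f g hf hg
  | single y c =>
    obtain ⟨ω, rfl⟩ := Quotient.exists_rep y
    have := hs c ω
    simpa [bs, mkO] using this

/-- functoriality -/
noncomputable def cmap (f : Ω → Ψ) (hf : ∀ (h : H) (ω : Ω), ∃ k : K, f (h • ω) = k • f ω) :
    Ch H Ω →ₗ[ℤ] Ch K Ψ :=
  clift (fun ω => bs K (f ω)) (by
    intro h ω
    obtain ⟨k, hk⟩ := hf h ω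
    rw [hk, bs_smul])

@[simp] theorem cmap_bs (f : Ω → Ψ) (hf : ∀ (h : H) (ω : Ω), ∃ k : K, f (h • ω) = k • f ω)
    (ω : Ω) : cmap f hf (bs H ω) = bs K (f ω) := by
  simp [cmap]

/-- alternating sums of linear maps -/
noncomputable def altS {N : Type} [AddCommGroup N] {n : ℕ} (f : Fin n → M →ₗ[ℤ] N) :
    M →ₗ[ℤ] N := ∑ i : Fin n, (-1 : ℤ) ^ (i : ℕ) • f i

theorem altS_apply {N : Type} [AddCommGroup N] {n : ℕ} (f : Fin n → M →ₗ[ℤ] N) (x : M) :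
    altS f x = ∑ i : Fin n, (-1 : ℤ) ^ (i : ℕ) • f i x := by
  simp [altS, LinearMap.sum_apply]

theorem altS_altS {N R : Type} [AddCommGroup N] [AddCommGroup R] {n : ℕ}
    (f : Fin (n + 2) → M →ₗ[ℤ] N) (g : Fin (n + 1) → N →ₗ[ℤ] R)
    (h : ∀ i j : Fin (n + 1), i ≤ j → ∀ x, g i (f j.succ x) = g j (f i.castSucc x)) (x : M) :
    altS g (altS f x) = 0 := by
  rw [altS_apply, altS_apply]
  exact alt_sum_zero n f g h x

theorem altS_natural {M' N N' : Type} [AddCommGroup N] [AddCommGroup M'] [AddCommGroup N'] {n : ℕ}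
    (f : Fin n → M →ₗ[ℤ] N) (f' : Fin n → M' →ₗ[ℤ] N') (a : M →ₗ[ℤ] M') (b : N →ₗ[ℤ] N')
    (h : ∀ i x, f' i (a x) = b (f i x)) (x : M) : altS f' (a x) = b (altS f x) := by
  simp only [altS_apply, map_sum, map_zsmul, h]

theorem altS_natural' {M' N N' : Type} [AddCommGroup N] [AddCommGroup M'] [AddCommGroup N']
    {n m : ℕ}
    (f : Fin n → M →ₗ[ℤ] N) (f' : Fin n → M' →ₗ[ℤ] N') (a : Fin m → M →ₗ[ℤ] M')
    (b : Fin m → N →ₗ[ℤ] N')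
    (h : ∀ i k x, f' i (a k x) = b k (f i x)) (x : M) :
    altS f' (altS a x) = altS b (altS f x) := by
  have : ∀ x, altS f' (altS a x) = altS b (altS f x) := by
    intro x
    rw [altS_apply a, altS_apply b, map_sum]
    refine Finset.sum_congr rfl fun k _ => ?_
    rw [map_zsmul]
    congr 1
    exact altS_natural f f' (a k) (b k) (fun i x => h i k x) x
  exact this x

theorem range_mapRange {ι N : Type} [AddCommGroup N] (f : M →ₗ[ℤ] N) (k : ι →₀ N)
    (h : ∀ i, ∃ y, f y = k i) : ∃ y : ι →₀ M, Finsupp.mapRange.linearMap f y = k := by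
  classical
  choose g hg using h
  refine ⟨Finsupp.onFinset k.support (fun i => if k i = 0 then 0 else g i) ?_, ?_⟩
  · intro i hi
    rw [Finsupp.mem_support_iff]
    intro h0
    simp [h0] at hi
  · ext i
    simp only [Finsupp.mapRange.linearMap_apply, Finsupp.mapRange_apply, Finsupp.onFinset_apply]
    split_ifs with h0
    · rw [map_zero, h0]
    · exact hg i

end Orb

/-! ### Tuples -/

section Tuples

variable (α : Type)

/-- free chains on tuples -/
abbrev Fr (J : ℕ) := (Fin J → α) →₀ ℤ

variable {α}

/-- basis -/
noncomputable def fs {J : ℕ} (x : Fin J → α) : Fr α J := Finsupp.single x 1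

/-- face maps on tuples -/
def fc {J : ℕ} (i : Fin (J + 1)) (x : Fin (J + 1) → α) : Fin J → α := fun j => x (i.succAbove j)

theorem fc_fc {J : ℕ} (i j : Fin (J + 1)) (h : i ≤ j) (x : Fin (J + 2) → α) :
    fc i (fc j.succ x) = fc j (fc i.castSucc x) := by
  funext k
  simp only [fc]
  congr 1
  simp only [Fin.ext_iff, Fin.succAbove, Fin.lt_def, Fin.le_def] at *
  split_ifs <;> simp_all <;> omega

theorem fc_succ_cons {J : ℕ} (i : Fin (J + 1)) (t : α) (x : Fin (J + 1) → α) :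
    fc i.succ (Fin.cons t x : Fin (J + 2) → α) = Fin.cons t (fc i x) := by
  funext k
  refine Fin.cases ?_ (fun k => ?_) k
  · simp [fc]
  · simp [fc]

theorem fc_zero_cons {J : ℕ} (t : α) (x : Fin J → α) :
    fc 0 (Fin.cons t x : Fin (J + 1) → α) = x := by
  funext k
  simp [fc]

theorem fr_ext {M : Type} [AddCommGroup M] {J : ℕ} {f g : Fr α J →ₗ[ℤ] M}
    (h : ∀ x, f (fs x) = g (fs x)) (z : Fr α J) : f z = g z := by
  have : f = g := by
    apply Finsupp.lhom_ext'
    intro y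
    apply LinearMap.ext_ring
    exact h y
  rw [this]

/-- functoriality of free chains -/
noncomputable def fmap {β : Type} {J J' : ℕ} (f : (Fin J → α) → (Fin J' → β)) :
    Fr α J →ₗ[ℤ] Fr β J' := Finsupp.lmapDomain ℤ ℤ f

@[simp] theorem fmap_fs {β : Type} {J J' : ℕ} (f : (Fin J → α) → (Fin J' → β)) (x : Fin J → α) :
    fmap f (fs x) = fs (f x) := by
  simp [fmap, fs]

/-- boundary on tuples -/
noncomputable def fd (J : ℕ) : Fr α (J + 1) →ₗ[ℤ] Fr α J := altS (fun i => fmap (fc i))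

theorem fd_fd (J : ℕ) (x : Fr α (J + 2)) : fd J (fd (J + 1) x) = 0 := by
  apply altS_altS
  intro i j hij x
  refine fr_ext (f := fmap (fc i) ∘ₗ fmap (fc j.succ))
    (g := fmap (fc j) ∘ₗ fmap (fc i.castSucc)) ?_ x
  intro x
  simp [fc_fc i j hij]

/-- coning -/
noncomputable def fcons {J : ℕ} (t : α) : Fr α J →ₗ[ℤ] Fr α (J + 1) :=
  fmap (fun x => (Fin.cons t x : Fin (J + 1) → α))

@[simp] theorem fcons_fs {J : ℕ} (t : α) (x : Fin J → α) :
    fcons t (fs x) = fs (Fin.cons t x : Fin (J + 1) → α) := by simp [fcons]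

theorem fd_fcons {J : ℕ} (t : α) (x : Fr α (J + 1)) :
    fd (J + 1) (fcons t x) = x - fcons t (fd J x) := by
  refine fr_ext (f := fd (J + 1) ∘ₗ fcons t)
    (g := LinearMap.id - fcons t ∘ₗ fd J) ?_ x
  intro x
  simp only [LinearMap.comp_apply, LinearMap.sub_apply, LinearMap.id_apply, fcons_fs, fd,
    altS_apply, fmap_fs, map_sum, map_zsmul]
  rw [Fin.sum_univ_succ, sub_eq_add_neg, ← Finset.sum_neg_distrib]
  congr 1
  · simp [fc_zero_cons]
  · refine Finset.sum_congr rfl fun i _ => ?_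
    rw [fc_succ_cons, Fin.val_succ, pow_succ, mul_neg_one, neg_smul]

theorem fd_fcons_zero (t : α) (x : Fr α 0) : fd 0 (fcons t x) = x := by
  refine fr_ext (f := fd 0 ∘ₗ fcons t) (g := LinearMap.id) ?_ x
  intro x
  simp [fd, altS_apply, fc_zero_cons]

/-- the prism operator, on tuples -/
noncomputable def prT (f : α → α) : ∀ J : ℕ, (Fin J → α) → Fr α (J + 1)
  | 0, _ => 0
  | (J + 1), x => fcons (x 0) (fs (fun j => f (x j))) - fcons (x 0) (prT f J (Fin.tail x))

/-- the prism operator -/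
noncomputable def prism (f : α → α) (J : ℕ) : Fr α J →ₗ[ℤ] Fr α (J + 1) :=
  Finsupp.lift _ ℤ _ (prT f J)

@[simp] theorem prism_fs (f : α → α) (J : ℕ) (x : Fin J → α) : prism f J (fs x) = prT f J x := by
  simp [prism, fs]

theorem prism_fcons (f : α → α) (J : ℕ) (t : α) (z : Fr α J) :
    prism f (J + 1) (fcons t z) =
      fcons t (fmap (fun x j => f ((Fin.cons t x : Fin (J + 1) → α) j)) z)
        - fcons t (prism f J z) := by
  refine fr_ext (f := prism f (J + 1) ∘ₗ fcons t)
    (g := fcons t ∘ₗ (fmap (fun x j => f ((Fin.cons t x : Fin (J + 1) → α) j)))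
        - fcons t ∘ₗ (prism f J)) ?_ z
  intro x
  simp [prT]

theorem fd_fs_cons {J : ℕ} (t : α) (x : Fin (J + 1) → α) :
    fd (J + 1) (fs (Fin.cons t x : Fin (J + 2) → α)) = fs x - fcons t (fd J (fs x)) := by
  rw [← fcons_fs, fd_fcons]

theorem fmap_fd {β : Type} (f : α → β) (J : ℕ) (z : Fr α (J + 1)) :
    fd J (fmap (fun x j => f (x j)) z) = fmap (fun x j => f (x j)) (fd J z) := by
  apply altS_natural
  intro i x
  refine fr_ext (f := fmap (fc i) ∘ₗ fmap (fun x j => f (x j)))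
    (g := fmap (fun x j => f (x j)) ∘ₗ fmap (fc i)) ?_ x
  intro x
  simp [fc]
  rfl

theorem prism_eq (f : α → α) (J : ℕ) (z : Fr α (J + 1)) :
    fd (J + 1) (prism f (J + 1) z) + prism f J (fd J z)
      = fmap (fun x j => f (x j)) z - z := by
  induction J with
  | zero =>
    refine fr_ext (f := fd 1 ∘ₗ prism f 1 + prism f 0 ∘ₗ fd 0)
      (g := fmap (fun x j => f (x j)) - LinearMap.id) ?_ z
    intro x
    simp only [LinearMap.add_apply, LinearMap.comp_apply, LinearMap.sub_apply, LinearMap.id_apply,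
      fmap_fs, prism_fs, prT, map_zero, sub_zero]
    have h1 : ∀ y : Fr α 0, prism f 0 y = 0 := by
      intro y
      refine fr_ext (f := prism f 0) (g := 0) ?_ y
      intro x
      simp [prT]
    rw [h1, add_zero, fd_fcons]
    congr 1
    simp only [fd, altS_apply]
    simp
    congr 1
    funext j
    obtain rfl : j = (0 : Fin 1) := Subsingleton.elim (α := Fin 1) _ _
    rfl
  | succ J ih =>
    refine fr_ext (f := fd (J + 2) ∘ₗ prism f (J + 2) + prism f (J + 1) ∘ₗ fd (J + 1))
      (g := fmap (fun x j => f (x j)) - LinearMap.id) ?_ z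
    intro x
    obtain ⟨t, x, rfl⟩ : ∃ t y, x = Fin.cons t y := ⟨x 0, Fin.tail x, (Fin.cons_self_tail x).symm⟩
    simp only [LinearMap.add_apply, LinearMap.comp_apply, LinearMap.sub_apply, LinearMap.id_apply,
      ← fcons_fs]
    rw [prism_fcons, map_sub, fd_fcons, fd_fcons, fd_fcons, map_sub, prism_fcons]
    have h2 := ih (fs x)
    have h3 : fd (J + 1) (prism f (J + 1) (fs x)) =
      fmap (fun x j => f (x j)) (fs x) - fs x - prism f J (fd J (fs x)) := by
      rw [← h2]; abel
    have h4 : fd (J + 1) (fmap (fun x j => f ((Fin.cons t x : Fin (J + 2) → α) j)) (fs x))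
      = fmap (fun x j => f (x j)) (fs x)
        - fmap (fun x j => f ((Fin.cons t x : Fin (J + 1) → α) j)) (fd J (fs x)) := by
      have h5 : ∀ {L : ℕ} (w : Fr α L), fmap (fun x j => f ((Fin.cons t x : Fin (L + 1) → α) j)) w
          = fmap (fun x j => f (x j)) (fcons t w) := by
        intro L w
        refine fr_ext (f := fmap (fun x j => f ((Fin.cons t x : Fin (L + 1) → α) j)))
          (g := fmap (fun x j => f (x j)) ∘ₗ fcons t) ?_ w
        intro x
        simp
      rw [h5, fmap_fd, fd_fcons, map_sub, h5]
    rw [h3, h4]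
    simp only [map_sub, fmap_fs, fcons_fs]
    have h6 : fs (fun j => f ((Fin.cons t x : Fin (J + 2) → α) j)) =
      fmap (fun x j => f (x j)) (fs (Fin.cons t x : Fin (J + 2) → α)) := by simp
    abel

end Tuples




/-! ### Chains of a subgroup, computed inside the big group -/

section GrpCh

set_option linter.unusedSectionVars false

variable {G : Type} [Group G]

/-- chains computing the homology of `L` -/
abbrev CC (L : Subgroup G) (j : ℕ) := Ch L (Fin (j + 1) → G)

theorem fc_smul {S : Type} [SMul S G] {J : ℕ} (i : Fin (J + 1)) (h : S) (x : Fin (J + 1) → G) :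
    fc i (h • x) = h • fc i x := rfl

/-- face maps on chains -/
noncomputable def cf (L : Subgroup G) {j : ℕ} (i : Fin (j + 2)) : CC L (j + 1) →ₗ[ℤ] CC L j :=
  cmap (fc i) (fun h x => ⟨h, fc_smul i h x⟩)

@[simp] theorem cf_bs (L : Subgroup G) {j : ℕ} (i : Fin (j + 2)) (t : Fin (j + 2) → G) :
    cf L i (bs L t) = bs L (fc i t) := by simp [cf]

/-- the differential -/
noncomputable def cd (L : Subgroup G) (j : ℕ) : CC L (j + 1) →ₗ[ℤ] CC L j :=
  altS (fun i => cf L i)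

theorem cd_cd (L : Subgroup G) (j : ℕ) (x : CC L (j + 2)) : cd L j (cd L (j + 1) x) = 0 := by
  apply altS_altS
  intro i k hik x
  refine ch_ext_apply (f := cf _ i ∘ₗ cf _ k.succ)
    (g := cf _ k ∘ₗ cf _ i.castSucc) ?_ x
  intro x
  simp [fc_fc i k hik]

/-- inclusion of subgroups on chains -/
noncomputable def inc {L M : Subgroup G} (h : L ≤ M) (j : ℕ) : CC L j →ₗ[ℤ] CC M j :=
  cmap id (fun l _ => ⟨⟨l.1, h l.2⟩, rfl⟩)

@[simp] theorem inc_bs {L M : Subgroup G} (h : L ≤ M) (j : ℕ) (t : Fin (j + 1) → G) :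
    inc h j (bs L t) = bs M t := by simp [inc]

theorem cd_inc {L M : Subgroup G} (h : L ≤ M) (j : ℕ) (x : CC L (j + 1)) :
    cd M j (inc h (j + 1) x) = inc h j (cd L j x) := by
  apply altS_natural
  intro i x
  refine ch_ext_apply (f := cf _ i ∘ₗ inc h _) (g := inc h _ ∘ₗ cf _ i) ?_ x
  intro x
  simp

theorem inc_inc {L M N : Subgroup G} (h : L ≤ M) (h' : M ≤ N) (j : ℕ) (x : CC L j) :
    inc h' j (inc h j x) = inc (h.trans h') j x := by
  refine ch_ext_apply (f := inc h' j ∘ₗ inc h j) (g := inc (h.trans h') j) ?_ x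
  intro x
  simp

/-- surjectivity on homology -/
def SurjOn (L M : Subgroup G) (q : ℕ) : Prop :=
  ∃ h : L ≤ M, ∀ z : CC M q, IsCyc (cd M) q z →
    ∃ w : CC L q, IsCyc (cd L) q w ∧ IsBd (cd M) q (z - inc h q w)

/-- injectivity on homology -/
def InjOn (L M : Subgroup G) (q : ℕ) : Prop :=
  ∃ h : L ≤ M, ∀ w : CC L q, IsCyc (cd L) q w → IsBd (cd M) q (inc h q w) → IsBd (cd L) q w

theorem SurjOn.refl (L : Subgroup G) (q : ℕ) : SurjOn L L q := by
  refine ⟨le_rfl, fun z hz => ⟨z, hz, ?_⟩⟩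
  have : inc (le_refl L) q z = z :=
    ch_ext_apply (f := inc (le_refl L) q) (g := LinearMap.id) (fun x => by simp) z
  rw [this, sub_self]
  exact IsBd.zero

theorem InjOn.refl (L : Subgroup G) (q : ℕ) : InjOn L L q := by
  refine ⟨le_rfl, fun z hz hb => ?_⟩
  have : inc (le_refl L) q z = z :=
    ch_ext_apply (f := inc (le_refl L) q) (g := LinearMap.id) (fun x => by simp) z
  rwa [this] at hb

theorem SurjOn.trans {L M N : Subgroup G} {q : ℕ} (h1 : SurjOn L M q) (h2 : SurjOn M N q) :
    SurjOn L N q := by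
  obtain ⟨hLM, h1⟩ := h1
  obtain ⟨hMN, h2⟩ := h2
  refine ⟨hLM.trans hMN, fun z hz => ?_⟩
  obtain ⟨w, hw, hwb⟩ := h2 z hz
  obtain ⟨u, hu, hub⟩ := h1 w hw
  refine ⟨u, hu, ?_⟩
  have := hwb.add (hub.map (inc hMN) (cd_inc hMN))
  rw [map_sub, inc_inc] at this
  convert this using 1
  abel

theorem InjOn.trans {L M N : Subgroup G} {q : ℕ} (h1 : InjOn L M q) (h2 : InjOn M N q) :
    InjOn L N q := by
  obtain ⟨hLM, h1⟩ := h1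
  obtain ⟨hMN, h2⟩ := h2
  refine ⟨hLM.trans hMN, fun z hz hb => h1 z hz (h2 _ (hz.map (inc hLM) (cd_inc hLM)) ?_)⟩
  rwa [inc_inc]

/-- projection from free chains on tuples -/
noncomputable def toCC (L : Subgroup G) (j : ℕ) : Fr G (j + 1) →ₗ[ℤ] CC L j :=
  Finsupp.lift _ ℤ _ (fun t => bs L t)

@[simp] theorem toCC_fs (L : Subgroup G) (j : ℕ) (t : Fin (j + 1) → G) :
    toCC L j (fs t) = bs L t := by simp [toCC, fs]

theorem cd_toCC (L : Subgroup G) (j : ℕ) (z : Fr G (j + 2)) :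
    cd L j (toCC L (j + 1) z) = toCC L j (fd (j + 1) z) := by
  apply altS_natural
  intro i x
  refine fr_ext (f := cf _ i ∘ₗ toCC L (j + 1)) (g := toCC L j ∘ₗ fmap (fc i)) ?_ x
  intro x
  simp

theorem toCC_surj (L : Subgroup G) (j : ℕ) (z : CC L j) : ∃ y, toCC L j y = z := by
  induction z using ch_induction with
  | h0 => exact ⟨0, map_zero _⟩
  | ha x y hx hy =>
    obtain ⟨a, rfl⟩ := hx
    obtain ⟨b, rfl⟩ := hy
    exact ⟨a + b, map_add _ _ _⟩
  | hs c ω => exact ⟨c • fs ω, by simp⟩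

theorem prT_smul (L : Subgroup G) (f : G → G) (hf : ∀ (l : L) (t : G), f (l • t) = l • f t) :
    ∀ (J : ℕ) (l : L) (x : Fin J → G), prT f J (l • x) = fmap (fun y => l • y) (prT f J x) := by
  have key : ∀ (J : ℕ) (l : L) (t : G) (z : Fr G J),
      fcons (l • t) (fmap (fun y => l • y) z) = fmap (fun y => l • y) (fcons t z) := by
    intro J l t z
    refine fr_ext (f := fcons (l • t) ∘ₗ fmap (fun y => l • y))
      (g := fmap (fun y => l • y) ∘ₗ fcons t) ?_ z
    intro x
    simp only [LinearMap.comp_apply, fmap_fs, fcons_fs]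
    congr 1
    funext k
    refine Fin.cases ?_ (fun k => ?_) k <;> simp
  intro J
  induction J with
  | zero => intro l x; simp [prT]
  | succ J ih =>
    intro l x
    simp only [prT, map_sub]
    rw [← key, ← key, fmap_fs, ← ih]
    congr 3
    funext j
    simp [hf]

/-- maps of chains induced by equivariant maps -/
noncomputable def eqm (L : Subgroup G) (f : G → G) (hf : ∀ (l : L) (t : G), f (l • t) = l • f t)
    (j : ℕ) : CC L j →ₗ[ℤ] CC L j :=
  cmap (fun t i => f (t i)) (fun l t => ⟨l, by funext i; simp [hf]⟩)

@[simp] theorem eqm_bs (L : Subgroup G) (f : G → G)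
    (hf : ∀ (l : L) (t : G), f (l • t) = l • f t) (j : ℕ) (t : Fin (j + 1) → G) :
    eqm L f hf j (bs L t) = bs L (fun i => f (t i)) := by simp [eqm]

theorem toCC_fmap_smul (L : Subgroup G) (j : ℕ) (l : L) (z : Fr G (j + 1)) :
    toCC L j (fmap (fun y => l • y) z) = toCC L j z := by
  refine fr_ext (f := toCC L j ∘ₗ fmap (fun y => l • y)) (g := toCC L j) ?_ z
  intro x
  simp [bs_smul]

/-- An equivariant self map acts trivially on homology. -/
theorem eqm_homotopic (L : Subgroup G) (f : G → G)
    (hf : ∀ (l : L) (t : G), f (l • t) = l • f t) (j : ℕ) (s : CC L j) (hs : IsCyc (cd L) j s) :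
    IsBd (cd L) j (eqm L f hf j s - s) := by
  have hdesc : ∀ j, ∃ p : CC L j →ₗ[ℤ] CC L (j + 1),
      ∀ z, p (toCC L j z) = toCC L (j + 1) (prism f (j + 1) z) := by
    intro j
    have hinv : ∀ (l : L) (x : Fin (j + 1) → G), toCC L (j + 1) (prT f (j + 1) (l • x))
        = toCC L (j + 1) (prT f (j + 1) x) := by
      intro l x
      rw [prT_smul L f hf, toCC_fmap_smul]
    refine ⟨clift (fun x => toCC L (j + 1) (prT f (j + 1) x)) hinv, ?_⟩
    · intro z
      refine fr_ext (f := clift _ hinv ∘ₗ toCC L j) (g := toCC L (j + 1) ∘ₗ prism f (j + 1)) ?_ z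
      intro x
      simp
  have heq : ∀ z : Fr G (j + 1), eqm L f hf j (toCC L j z)
      = toCC L j (fmap (fun x i => f (x i)) z) := by
    intro z
    refine fr_ext (f := eqm L f hf j ∘ₗ toCC L j)
      (g := toCC L j ∘ₗ fmap (fun x i => f (x i))) ?_ z
    intro x
    simp
  obtain ⟨p, hp⟩ := hdesc j
  obtain ⟨z, rfl⟩ := toCC_surj L j s
  refine ⟨p (toCC L j z), ?_⟩
  have h := prism_eq f j z
  rw [hp, cd_toCC, heq, ← map_sub, ← h, map_add]
  cases j with
  | zero =>
    have h1 : ∀ y : Fr G 0, prism f 0 y = 0 := by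
      intro y
      refine fr_ext (f := prism f 0) (g := 0) ?_ y
      intro x
      simp [prT]
    rw [h1, map_zero, add_zero]
  | succ j =>
    obtain ⟨p', hp'⟩ := hdesc j
    have hs' : cd L j (toCC L (j + 1) z) = 0 := hs
    rw [cd_toCC] at hs'
    rw [← hp', hs', map_zero, add_zero]

end GrpCh




/-! ### The double complex of a semi-simplicial set with group action -/

/-- semisimplicial sets with an action of `H`, indexed by the number of vertices -/
structure SS {G : Type} [Group G] (H : Subgroup G) where
  X : ℕ → Type
  act : ∀ P, MulAction H (X P)
  δ : ∀ {P : ℕ}, Fin (P + 1) → X (P + 1) → X P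
  δ_smul : ∀ {P : ℕ} (i : Fin (P + 1)) (h : H) (x : X (P + 1)), δ i (h • x) = h • δ i x
  δ_δ : ∀ {P : ℕ} (i j : Fin (P + 1)), i ≤ j → ∀ x : X (P + 2),
    δ i (δ j.succ x) = δ j (δ i.castSucc x)

attribute [instance] SS.act

section Machine

variable {G : Type} [Group G] {H : Subgroup G} (S : SS H)

/-- the double complex -/
abbrev AA (P j : ℕ) := Ch H (S.X P × (Fin (j + 1) → G))

/-- horizontal faces -/
noncomputable def hf {P : ℕ} (j : ℕ) (i : Fin (P + 1)) : AA S (P + 1) j →ₗ[ℤ] AA S P j :=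
  cmap (fun p => (S.δ i p.1, p.2)) (fun h p => ⟨h, by
    rw [Prod.smul_fst, S.δ_smul]; rfl⟩)

@[simp] theorem hf_bs {P : ℕ} (j : ℕ) (i : Fin (P + 1)) (x : S.X (P + 1)) (t : Fin (j + 1) → G) :
    hf S j i (bs H (x, t)) = bs H (S.δ i x, t) := by simp [hf]

/-- vertical faces -/
noncomputable def vf (P : ℕ) {j : ℕ} (i : Fin (j + 2)) : AA S P (j + 1) →ₗ[ℤ] AA S P j :=
  cmap (fun p => (p.1, fc i p.2)) (fun h _ => ⟨h, rfl⟩)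

@[simp] theorem vf_bs (P : ℕ) {j : ℕ} (i : Fin (j + 2)) (x : S.X P) (t : Fin (j + 2) → G) :
    vf S P i (bs H (x, t)) = bs H (x, fc i t) := by simp [vf]

/-- horizontal differential -/
noncomputable def dh (P j : ℕ) : AA S (P + 1) j →ₗ[ℤ] AA S P j := altS (fun i => hf S j i)

/-- vertical differential -/
noncomputable def dv (P j : ℕ) : AA S P (j + 1) →ₗ[ℤ] AA S P j := altS (fun i => vf S P i)

theorem dh_dh (P j : ℕ) (x : AA S (P + 2) j) : dh S P j (dh S (P + 1) j x) = 0 := by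
  apply altS_altS
  intro i k hik x
  refine ch_ext_apply (f := hf S j i ∘ₗ hf S j k.succ)
    (g := hf S j k ∘ₗ hf S j i.castSucc) ?_ x
  rintro ⟨x, t⟩
  simp [S.δ_δ i k hik]

theorem dv_dv (P j : ℕ) (x : AA S P (j + 2)) : dv S P j (dv S P (j + 1) x) = 0 := by
  apply altS_altS
  intro i k hik x
  refine ch_ext_apply (f := vf S P i ∘ₗ vf S P k.succ)
    (g := vf S P k ∘ₗ vf S P i.castSucc) ?_ x
  rintro ⟨x, t⟩
  simp [fc_fc i k hik]

theorem dh_dv (P j : ℕ) (x : AA S (P + 1) (j + 1)) :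
    dh S P j (dv S (P + 1) j x) = dv S P j (dh S P (j + 1) x) := by
  apply altS_natural'
  intro i k x
  refine ch_ext_apply (f := hf S j i ∘ₗ vf S (P + 1) k)
    (g := vf S P k ∘ₗ hf S (j + 1) i) ?_ x
  rintro ⟨x, t⟩
  simp

variable {S}

/-- stabilizers, as subgroups of the big group -/
def stb {P : ℕ} (x : S.X P) : Subgroup G := (MulAction.stabilizer H x).map H.subtype

theorem mem_stb {P : ℕ} {x : S.X P} {g : G} : g ∈ stb x ↔ ∃ h : H, h.1 = g ∧ h • x = x := by
  unfold stb
  rw [Subgroup.mem_map]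
  constructor
  · rintro ⟨h, hh, rfl⟩
    exact ⟨h, rfl, hh⟩
  · rintro ⟨h, rfl, hh⟩
    exact ⟨h, hh, rfl⟩

theorem stb_le {P : ℕ} (x : S.X P) : stb x ≤ H := by
  intro g hg
  obtain ⟨h, rfl, _⟩ := mem_stb.1 hg
  exact h.2

/-- pushing chains of the stabilizer into the double complex -/
noncomputable def push {P : ℕ} (x : S.X P) {L : Subgroup G} (hL : L ≤ stb x) (j : ℕ) :
    CC L j →ₗ[ℤ] AA S P j :=
  cmap (fun t => (x, t)) (fun l t => by
    obtain ⟨h, h1, h2⟩ := mem_stb.1 (hL l.2)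
    refine ⟨h, ?_⟩
    have h3 : l • t = h • t := by
      funext i
      show (l : G) * t i = (h : G) * t i
      rw [h1]
    rw [Prod.smul_mk, h2, h3])

@[simp] theorem push_bs {P : ℕ} (x : S.X P) {L : Subgroup G} (hL : L ≤ stb x) (j : ℕ)
    (t : Fin (j + 1) → G) : push x hL j (bs L t) = bs H (x, t) := by simp [push]

theorem dv_push {P : ℕ} (x : S.X P) {L : Subgroup G} (hL : L ≤ stb x) (j : ℕ)
    (s : CC L (j + 1)) : dv S P j (push x hL (j + 1) s) = push x hL j (cd L j s) := by
  apply altS_natural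
  intro i x'
  refine ch_ext_apply (f := vf S P i ∘ₗ push x hL (j + 1)) (g := push x hL j ∘ₗ cf L i) ?_ x'
  intro t
  simp

theorem push_inc {P : ℕ} (x : S.X P) {L M : Subgroup G} (hL : L ≤ M) (hM : M ≤ stb x) (j : ℕ)
    (s : CC L j) : push x hM j (inc hL j s) = push x (hL.trans hM) j s := by
  refine ch_ext_apply (f := push x hM j ∘ₗ inc hL j) (g := push x (hL.trans hM) j) ?_ s
  intro t
  simp

theorem stb_le_face {P : ℕ} (x : S.X (P + 1)) (i : Fin (P + 1)) : stb x ≤ stb (S.δ i x) := by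
  intro g hg
  obtain ⟨h, h1, h2⟩ := mem_stb.1 hg
  exact mem_stb.2 ⟨h, h1, by rw [← S.δ_smul, h2]⟩

theorem hf_push {P : ℕ} (x : S.X (P + 1)) {L : Subgroup G} (hL : L ≤ stb x) (j : ℕ)
    (i : Fin (P + 1)) (s : CC L j) :
    hf S j i (push x hL j s) = push (S.δ i x) (hL.trans (stb_le_face x i)) j s := by
  refine ch_ext_apply (f := hf S j i ∘ₗ push x hL j)
    (g := push (S.δ i x) (hL.trans (stb_le_face x i)) j) ?_ s
  intro t
  simp

/-- homotopy lemma -/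
theorem push_homotopic {P : ℕ} (x x' : S.X P) {L : Subgroup G} (hL : L ≤ stb x)
    (hL' : L ≤ stb x') (g : H) (hg : ∀ l ∈ L, (g : G) * l = l * g) (hx : g • x = x') (j : ℕ)
    (s : CC L j) (hs : IsCyc (cd L) j s) :
    IsBd (dv S P) j (push x hL j s - push x' hL' j s) := by
  have hf : ∀ (l : L) (t : G), (g : G)⁻¹ * (l • t) = l • ((g : G)⁻¹ * t) := by
    intro l t
    show (g : G)⁻¹ * ((l : G) * t) = (l : G) * ((g : G)⁻¹ * t)
    have := hg l l.2
    rw [← mul_assoc, ← mul_assoc]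
    congr 1
    rw [inv_mul_eq_iff_eq_mul, ← mul_assoc, this, mul_assoc, mul_inv_cancel, mul_one]
  have h1 := (eqm_homotopic L (fun t => (g : G)⁻¹ * t) hf j s hs).map (push x hL) (dv_push x hL)
  have h2 : ∀ s, push x hL j (eqm L (fun t => (g : G)⁻¹ * t) hf j s) = push x' hL' j s := by
    intro s
    refine ch_ext_apply (f := push x hL j ∘ₗ eqm L (fun t => (g : G)⁻¹ * t) hf j)
      (g := push x' hL' j) ?_ s
    intro t
    simp only [LinearMap.comp_apply, eqm_bs, push_bs]
    rw [← bs_smul g]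
    congr 1
    rw [Prod.smul_mk, hx]
    congr 1
    funext i
    show (g : G) * ((g : G)⁻¹ * t i) = t i
    simp
  rw [map_sub, h2] at h1
  have := h1.neg
  rwa [neg_sub] at this

open Classical in
/-- components -/
noncomputable def comp {P : ℕ} (x : S.X P) (j : ℕ) : AA S P j →ₗ[ℤ] CC (stb x) j :=
  clift (fun p => if h : ∃ h : H, h • p.1 = x then bs (stb x) (h.choose • p.2) else 0) (by
    rintro k ⟨y, t⟩
    by_cases h : ∃ h : H, h • y = x
    · have h' : ∃ h : H, h • (k • y) = x := by
        obtain ⟨h, hh⟩ := h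
        exact ⟨h * k⁻¹, by rw [smul_smul, mul_assoc, inv_mul_cancel, mul_one, hh]⟩
      show dite (∃ h : H, h • (k • y) = x) _ _ = dite (∃ h : H, h • y = x) _ _
      rw [dif_pos h, dif_pos h']
      have e1 := h.choose_spec
      have e2 := h'.choose_spec
      have e3 : ((h'.choose * k * h.choose⁻¹ : H) : G) ∈ stb x := by
        refine mem_stb.2 ⟨_, rfl, ?_⟩
        rw [← smul_smul, ← smul_smul, inv_smul_eq_iff.2 e1.symm]
        exact e2
      rw [← bs_smul (⟨_, e3⟩ : stb x) (h.choose • t)]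
      congr 1
      funext i
      show (h'.choose : G) * ((k : G) * t i) = ((h'.choose * k * h.choose⁻¹ : H) : G) *
        ((h.choose : G) * t i)
      simp [mul_assoc]
    · have h' : ¬ ∃ h : H, h • (k • y) = x := by
        rintro ⟨h'', hh⟩
        exact h ⟨h'' * k, by rw [← smul_smul, hh]⟩
      show dite (∃ h : H, h • (k • y) = x) _ _ = dite (∃ h : H, h • y = x) _ _
      rw [dif_neg h, dif_neg h'])

theorem comp_bs {P : ℕ} (x : S.X P) (j : ℕ) (y : S.X P) (t : Fin (j + 1) → G) (h : H)
    (hh : h • y = x) : comp x j (bs H (y, t)) = bs (stb x) (h • t) := by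
  classical
  have h' : ∃ h : H, h • y = x := ⟨h, hh⟩
  unfold comp
  rw [clift_bs]
  show dite (∃ h : H, h • y = x) _ _ = _
  rw [dif_pos h']
  have e1 := h'.choose_spec
  have e3 : ((h'.choose * h⁻¹ : H) : G) ∈ stb x := by
    refine mem_stb.2 ⟨_, rfl, ?_⟩
    rw [← smul_smul, inv_smul_eq_iff.2 hh.symm]
    exact e1
  rw [← bs_smul (⟨_, e3⟩ : stb x) (h • t)]
  congr 1
  funext i
  show (h'.choose : G) * (t i) = ((h'.choose * h⁻¹ : H) : G) * ((h : G) * t i)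
  simp [mul_assoc]

theorem comp_bs_not {P : ℕ} (x : S.X P) (j : ℕ) (y : S.X P) (t : Fin (j + 1) → G)
    (hh : ¬ ∃ h : H, h • y = x) : comp x j (bs H (y, t)) = 0 := by
  classical
  unfold comp
  rw [clift_bs]
  show dite (∃ h : H, h • y = x) _ _ = _
  rw [dif_neg hh]

theorem cd_comp {P : ℕ} (x : S.X P) (j : ℕ) (w : AA S P (j + 1)) :
    cd (stb x) j (comp x (j + 1) w) = comp x j (dv S P j w) := by
  apply altS_natural
  intro i w
  refine ch_ext_apply (f := cf (stb x) i ∘ₗ comp x (j + 1)) (g := comp x j ∘ₗ vf S P i) ?_ w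
  rintro ⟨y, t⟩
  simp only [LinearMap.comp_apply, vf_bs]
  by_cases h : ∃ h : H, h • y = x
  · obtain ⟨h, hh⟩ := h
    rw [comp_bs _ _ _ _ h hh, comp_bs _ _ _ _ h hh, cf_bs]
    rfl
  · rw [comp_bs_not _ _ _ _ h, comp_bs_not _ _ _ _ h, map_zero]

theorem comp_push {P : ℕ} (x : S.X P) (j : ℕ) (s : CC (stb x) j) :
    comp x j (push x le_rfl j s) = s := by
  refine ch_ext_apply (f := comp x j ∘ₗ push x le_rfl j) (g := LinearMap.id) ?_ s
  intro t
  simp [comp_bs x j x t 1 (one_smul _ _)]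

theorem push_comp_bs {P : ℕ} (x : S.X P) (j : ℕ) (y : S.X P) (t : Fin (j + 1) → G) (h : H)
    (hh : h • y = x) : push x le_rfl j (comp x j (bs H (y, t))) = bs H (y, t) := by
  rw [comp_bs x j y t h hh, push_bs, ← bs_smul h (y, t), Prod.smul_mk, hh]

theorem decomp {P j : ℕ} (w : AA S P j) : ∃ t : Finset (Orb H (S.X P)), ∀ t', t ⊆ t' →
    w = ∑ y ∈ t', push (Quotient.out y) le_rfl j (comp (Quotient.out y) j w) := by
  classical
  induction w using ch_induction with
  | h0 => exact ⟨∅, fun t' _ => by simp⟩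
  | ha x y hx hy =>
    obtain ⟨a, ha⟩ := hx
    obtain ⟨b, hb⟩ := hy
    refine ⟨a ∪ b, fun t' ht => ?_⟩
    simp only [map_add, Finset.sum_add_distrib]
    rw [← ha t' (Finset.union_subset_left ht), ← hb t' (Finset.union_subset_right ht)]
  | hs c ω =>
    obtain ⟨y, t⟩ := ω
    refine ⟨{mkO H y}, fun t' ht => ?_⟩
    have hm : mkO H y ∈ t' := ht (Finset.mem_singleton_self _)
    simp only [map_zsmul]
    rw [← Finset.smul_sum, Finset.sum_eq_single_of_mem _ hm]
    · obtain ⟨h, hh⟩ := mkO_eq.1 (mkO_out (mkO H y)).symm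
      rw [push_comp_bs _ _ _ _ h hh]
    · intro b _ hb
      rw [comp_bs_not, map_zero]
      rintro ⟨h, hh⟩
      apply hb
      rw [← mkO_out b, ← hh, mkO_smul]

/-- cycles are sums of pushes of cycles -/
theorem cyc_induction {P j : ℕ} {p : AA S P j → Prop} (h0 : p 0)
    (ha : ∀ x y, p x → p y → p (x + y))
    (hp : ∀ (x : S.X P) (s : CC (stb x) j), IsCyc (cd (stb x)) j s → p (push x le_rfl j s))
    (w : AA S P j) (hw : IsCyc (dv S P) j w) : p w := by
  obtain ⟨t, ht⟩ := decomp w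
  rw [ht t (Finset.Subset.refl _)]
  refine Finset.sum_induction _ p ha h0 ?_
  intro y _
  exact hp _ _ (hw.map (fun j => comp (Quotient.out y) j) (fun j w => cd_comp _ j w))

end Machine




section Machine2

variable {G : Type} [Group G] {H : Subgroup G} (S : SS H)

/-! #### Row exactness -/

/-- the boundary on chains of `X` -/
noncomputable def xd (P : ℕ) : (S.X (P + 1) →₀ ℤ) →ₗ[ℤ] (S.X P →₀ ℤ) :=
  altS (fun i => Finsupp.lmapDomain ℤ ℤ (S.δ i))

/-- exactness of chains of `X` -/
def XEx (P : ℕ) : Prop :=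
  ∀ z : S.X P →₀ ℤ, IsCyc (A := fun P => S.X P →₀ ℤ) (xd S) P z → ∃ y, xd S P y = z

theorem exists_equivariant (H : Subgroup G) :
    ∃ ρ : G → H, ∀ (h : H) (t : G), ρ (h • t) = h * ρ t := by
  have h1 : ∀ t : G, ∃ h : H, h • (Quotient.out (mkO H t)) = t := fun t =>
    mkO_eq.1 (mkO_out (mkO H t))
  choose ρ hρ using h1
  refine ⟨ρ, fun h t => ?_⟩
  have e1 := hρ (h • t)
  rw [mkO_smul] at e1
  have e2 := hρ t
  apply Subtype.ext
  have e3 : (ρ (h • t) : G) * Quotient.out (mkO H t) = (h : G) * t := e1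
  have e4 : (ρ t : G) * Quotient.out (mkO H t) = t := e2
  have e5 : (ρ (h • t) : G) * Quotient.out (mkO H t)
      = ((h : G) * ρ t) * Quotient.out (mkO H t) := by rw [e3, mul_assoc, e4]
  exact mul_right_cancel e5

variable {S}

/-- lift to free chains -/
noncomputable def sig (ρ : G → H) (hρ : ∀ (h : H) (t : G), ρ (h • t) = h * ρ t) (P j : ℕ) :
    AA S P j →ₗ[ℤ] ((Fin (j + 1) → G) →₀ (S.X P →₀ ℤ)) :=
  clift (fun p => Finsupp.lsingle (R := ℤ) ((ρ (p.2 0))⁻¹ • p.2)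
    (Finsupp.single ((ρ (p.2 0))⁻¹ • p.1) (1 : ℤ))) (by
      rintro h ⟨x, t⟩
      have e : ∀ {Y : Type} [MulAction H Y] (y : Y), (ρ ((h • t) 0))⁻¹ • h • y = (ρ (t 0))⁻¹ • y := by
        intro Y _ y
        rw [Pi.smul_apply, hρ, smul_smul, _root_.mul_inv_rev, mul_assoc, inv_mul_cancel, mul_one]
      simp only [Prod.smul_mk]
      rw [e, e])

/-- descend from free chains -/
noncomputable def tau (P j : ℕ) :
    ((Fin (j + 1) → G) →₀ (S.X P →₀ ℤ)) →ₗ[ℤ] AA S P j :=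
  Finsupp.lsum ℤ (fun t => Finsupp.lift _ ℤ _ (fun x => bs H (x, t)))

theorem tau_single (P j : ℕ) (t : Fin (j + 1) → G) (x : S.X P) :
    tau P j (Finsupp.lsingle (R := ℤ) t (Finsupp.single x (1 : ℤ))) = bs H (x, t) := by
  simp only [tau, Finsupp.lsingle_apply, Finsupp.lsum_single, Finsupp.lift_apply]
  rw [Finsupp.sum_single_index (by simp), one_smul]

theorem rowEx_of {P : ℕ} (j : ℕ) (hX : XEx S P) : RowEx (dh S) P j := by
  obtain ⟨ρ, hρ⟩ := exists_equivariant H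
  intro w hw
  have h1 : ∀ z, IsCyc (A := fun P => S.X P →₀ ℤ) (xd S) P (sig ρ hρ P j w z) := by
    intro z
    cases P with
    | zero => trivial
    | succ P =>
      show xd S P _ = 0
      have h2 : ∀ w, Finsupp.mapRange.linearMap (xd S P) (sig ρ hρ (P + 1) j w)
          = sig ρ hρ P j (dh S P j w) := by
        intro w
        refine ch_ext_apply (f := Finsupp.mapRange.linearMap (xd S P) ∘ₗ (sig ρ hρ (P + 1) j))
          (g := sig ρ hρ P j ∘ₗ (dh S P j)) ?_ w
        rintro ⟨x, t⟩
        simp only [LinearMap.comp_apply, dh, altS_apply, hf_bs, map_sum, map_zsmul, sig, clift_bs,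
          xd, Finsupp.mapRange.linearMap_apply, Finsupp.lsingle_apply, Finsupp.mapRange_single,
          Finsupp.lmapDomain_apply, Finsupp.mapDomain_single, S.δ_smul]
        simp only [← Finsupp.lsingle_apply (R := ℤ), map_sum, map_zsmul]
      have h3 : dh S P j w = 0 := hw
      have h4 := h2 w
      rw [h3, map_zero] at h4
      have h5 := DFunLike.congr_fun h4 z
      simpa using h5
  obtain ⟨y, hy⟩ := range_mapRange (xd S P) (sig ρ hρ P j w) (fun z => hX _ (h1 z))
  refine ⟨tau (P + 1) j y, ?_⟩
  have h6 : ∀ y, dh S P j (tau (P + 1) j y)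
      = tau P j (Finsupp.mapRange.linearMap (xd S P) y) := by
    intro y
    have : dh S P j ∘ₗ (tau (P + 1) j) = tau P j ∘ₗ (Finsupp.mapRange.linearMap (xd S P)) := by
      apply Finsupp.lhom_ext'
      intro t
      apply Finsupp.lhom_ext'
      intro x
      apply LinearMap.ext_ring
      simp only [LinearMap.comp_apply, Finsupp.lsingle_apply (R := ℤ) (M := ℤ), tau_single]
      simp only [dh, altS_apply, hf_bs, xd, Finsupp.lsingle_apply,
        Finsupp.mapRange.linearMap_apply, Finsupp.mapRange_single, Finsupp.lmapDomain_apply,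
        Finsupp.mapDomain_single]
      rw [← Finsupp.lsingle_apply (R := ℤ)]
      simp only [map_sum, map_zsmul, tau_single]
    exact LinearMap.congr_fun this y
  rw [h6, hy]
  refine ch_ext_apply (f := tau P j ∘ₗ sig ρ hρ P j) (g := LinearMap.id) ?_ w
  rintro ⟨x, t⟩
  simp only [LinearMap.comp_apply, sig, clift_bs, tau_single, LinearMap.id_apply]
  rw [← Prod.smul_mk, bs_smul]

/-! #### Column comparison -/

variable (S) in
/-- forget the simplex -/
noncomputable def prX (P j : ℕ) : AA S P j →ₗ[ℤ] CC H j := cmap (fun p => p.2) (fun h _ => ⟨h, rfl⟩)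

@[simp] theorem prX_bs (P j : ℕ) (x : S.X P) (t : Fin (j + 1) → G) :
    prX S P j (bs H (x, t)) = bs H t := by simp [prX]

theorem dh_zero_push (x : S.X 1) {L : Subgroup G} (hL : L ≤ stb x) (j : ℕ) (s : CC L j) :
    dh S 0 j (push x hL j s) = push (S.δ 0 x) (hL.trans (stb_le_face x 0)) j s := by
  simp only [dh, altS_apply, hf_push]
  simp

theorem prX_push {P : ℕ} (x : S.X P) {L : Subgroup G} (hL : L ≤ stb x) (j : ℕ) (s : CC L j) :
    prX S P j (push x hL j s) = inc (hL.trans (stb_le x)) j s := by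
  refine ch_ext_apply (f := prX S P j ∘ₗ push x hL j) (g := inc (hL.trans (stb_le x)) j) ?_ s
  intro t
  simp

theorem push_comp_one (x0 : S.X 1) (htr : ∀ x : S.X 1, ∃ h : H, h • x = x0) (j : ℕ)
    (w : AA S 1 j) : push x0 le_rfl j (comp x0 j w) = w := by
  refine ch_ext_apply (f := push x0 le_rfl j ∘ₗ comp x0 j) (g := LinearMap.id) ?_ w
  rintro ⟨x, t⟩
  obtain ⟨h, hh⟩ := htr x
  exact push_comp_bs x0 j x t h hh

theorem machine_surj (hs : Subsingleton (S.X 0)) (x0 : S.X 1)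
    (htr : ∀ x : S.X 1, ∃ h : H, h • x = x0) (q : ℕ) (hX : ∀ P, P ≤ q → XEx S P)
    (hE : ∀ Q j, 1 ≤ Q → Q + j = q → E2 (dh S) (dv S) Q j) : SurjOn (stb x0) H q := by
  have hle : H ≤ stb (S.δ 0 x0) := fun g hg => mem_stb.2 ⟨⟨g, hg⟩, rfl, Subsingleton.elim _ _⟩
  refine ⟨stb_le x0, fun z hz => ?_⟩
  obtain ⟨w, hw, hwz⟩ := dbl_surj (dh_dh S) (dv_dv S) (dh_dv S) q
    (fun P j h => rowEx_of j (hX P (by omega))) hE (push (S.δ 0 x0) hle q z)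
    (hz.map (push (S.δ 0 x0) hle) (dv_push (S.δ 0 x0) hle))
  refine ⟨comp x0 q w, hw.map (fun j => comp x0 j) (fun j w => cd_comp x0 j w), ?_⟩
  have e1 : prX S 0 q (push (S.δ 0 x0) hle q z) = z := by
    rw [prX_push]
    exact ch_ext_apply (f := inc (le_refl H) q) (g := LinearMap.id) (fun x => by simp) z
  have e2 : prX S 0 q (dh S 0 q w) = inc (stb_le x0) q (comp x0 q w) := by
    conv_lhs => rw [← push_comp_one x0 htr q w]
    rw [dh_zero_push, prX_push]
  rw [← e2, hwz, e1, sub_self]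
  exact IsBd.zero

theorem machine_inj (hs : Subsingleton (S.X 0)) (x0 : S.X 1)
    (q : ℕ) (hX : ∀ P, P ≤ q + 1 → XEx S P)
    (hE : ∀ Q j, 2 ≤ Q → Q + j = q + 1 → E2 (dh S) (dv S) Q j)
    (hd : ∀ w : AA S 2 q, IsCyc (dv S 2) q w → IsBd (dv S 1) q (dh S 1 q w)) :
    InjOn (stb x0) H q := by
  have hle : H ≤ stb (S.δ 0 x0) := fun g hg => mem_stb.2 ⟨⟨g, hg⟩, rfl, Subsingleton.elim _ _⟩
  refine ⟨stb_le x0, fun s hs hb => ?_⟩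
  have := dbl_inj (dh_dh S) (dv_dv S) (dh_dv S) q
    (fun P j h => rowEx_of j (hX P (by omega))) hE hd (push x0 le_rfl q s)
    (hs.map (push x0 le_rfl) (dv_push x0 le_rfl)) (by
      have := hb.map (push (S.δ 0 x0) hle) (dv_push (S.δ 0 x0) hle)
      rw [push_inc] at this
      rw [dh_zero_push]
      exact this)
  have h2 := this.map (fun j => comp x0 j) (fun j w => cd_comp x0 j w)
  simp only [comp_push] at h2
  exact h2

/-! #### The special differentials -/

theorem d1_of (q : ℕ) (h : ∀ x : S.X 2, ∃ L : Subgroup G, SurjOn L (stb x) q ∧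
      ∃ g : H, (∀ l ∈ L, (g : G) * l = l * g) ∧ g • S.δ 0 x = S.δ 1 x)
    (w : AA S 2 q) (hw : IsCyc (dv S 2) q w) : IsBd (dv S 1) q (dh S 1 q w) := by
  refine cyc_induction (p := fun w => IsBd (dv S 1) q (dh S 1 q w)) ?_ ?_ ?_ w hw
  · simp only [map_zero]; exact IsBd.zero
  · intro x y hx hy
    simp only [map_add]; exact hx.add hy
  · intro x s hs
    obtain ⟨L, ⟨hL, hsurj⟩, g, hg, hgx⟩ := h x
    obtain ⟨s', hs', hb⟩ := hsurj s hs
    have h1 := (hb.map (push x le_rfl) (dv_push x le_rfl)).map (e := dv S 1)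
      (fun j => dh S 1 j) (fun j w => (dh_dv S 1 j w).symm)
    have h2 := push_homotopic (S.δ 0 x) (S.δ 1 x) (hL.trans (stb_le_face x 0))
      (hL.trans (stb_le_face x 1)) g hg hgx q s' hs'
    have h3 : dh S 1 q (push x hL q s') =
        push (S.δ 0 x) (hL.trans (stb_le_face x 0)) q s'
        - push (S.δ 1 x) (hL.trans (stb_le_face x 1)) q s' := by
      simp only [dh, altS_apply, hf_push]
      rw [Fin.sum_univ_two]
      simp [sub_eq_add_neg]
    have h4 := h1.add h2
    simp only [map_sub] at h4
    rw [push_inc, h3] at h4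
    simpa using h4

theorem E2_special (j : ℕ) (h : ∀ x : S.X 2, ∃ (y : S.X 3) (L : Subgroup G),
      SurjOn L (stb x) j ∧ L ≤ stb y ∧ S.δ 0 y = x ∧
      ∃ g : H, (∀ l ∈ L, (g : G) * l = l * g) ∧ g • S.δ 1 y = S.δ 2 y) :
    E2 (dh S) (dv S) 1 j := by
  intro w hw _
  refine cyc_induction (p := fun w => ∃ y : AA S 3 j, IsCyc (dv S 3) j y ∧
    IsBd (dv S 2) j (w - dh S 2 j y)) ?_ ?_ ?_ w hw
  · exact ⟨0, IsCyc.zero, by rw [map_zero, sub_zero]; exact IsBd.zero⟩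
  · rintro x x' ⟨y, hy, hb⟩ ⟨y', hy', hb'⟩
    refine ⟨y + y', hy.add hy', ?_⟩
    rw [map_add, add_sub_add_comm]
    exact hb.add hb'
  · intro x s hs
    obtain ⟨y, L, ⟨hL, hsurj⟩, hLy, rfl, g, hg, hgx⟩ := h x
    obtain ⟨s', hs', hb⟩ := hsurj s hs
    refine ⟨push y hLy j s', hs'.map (push y hLy) (dv_push y hLy), ?_⟩
    have h1 := hb.map (push (S.δ 0 y) le_rfl) (dv_push (S.δ 0 y) le_rfl)
    have h2 := push_homotopic (S.δ 1 y) (S.δ 2 y) (hLy.trans (stb_le_face y 1))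
      (hLy.trans (stb_le_face y 2)) g hg hgx j s' hs'
    have h3 : dh S 2 j (push y hLy j s') =
        push (S.δ 0 y) hL j s'
        - push (S.δ 1 y) (hLy.trans (stb_le_face y 1)) j s'
        + push (S.δ 2 y) (hLy.trans (stb_le_face y 2)) j s' := by
      simp only [dh, altS_apply, hf_push]
      rw [Fin.sum_univ_three]
      simp [sub_eq_add_neg]
    rw [map_sub, push_inc] at h1
    have h4 := h1.add h2
    rw [h3]
    convert h4 using 1
    abel

/-! #### The generic differential -/

/-- faces on orbits -/
noncomputable def oδ {P : ℕ} (i : Fin (P + 1)) (y : Orb H (S.X (P + 1))) : Orb H (S.X P) :=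
  mkO H (S.δ i (Quotient.out y))

theorem oδ_mk {P : ℕ} (i : Fin (P + 1)) (x : S.X (P + 1)) :
    oδ i (mkO H x) = mkO H (S.δ i x) := by
  obtain ⟨h, hh⟩ := mkO_eq.1 (mkO_out (mkO H x))
  unfold oδ
  rw [← mkO_smul h, ← S.δ_smul, hh]

/-- projection to chains on the orbit space -/
noncomputable def kap (P j : ℕ) : AA S P j →ₗ[ℤ] (Orb H (S.X P) →₀ CC H j) :=
  clift (fun p => Finsupp.lsingle (R := ℤ) (mkO H p.1) (bs H p.2)) (by
    rintro h ⟨x, t⟩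
    simp only [Prod.smul_mk, mkO_smul, bs_smul])

theorem kap_bs (P j : ℕ) (x : S.X P) (t : Fin (j + 1) → G) :
    kap P j (bs H (x, t)) = Finsupp.single (mkO H x) (bs H t) := by
  simp [kap]

theorem kap_apply (P j : ℕ) (w : AA S P j) (y : Orb H (S.X P)) :
    kap P j w y = inc (stb_le (Quotient.out y)) j (comp (Quotient.out y) j w) := by
  refine ch_ext_apply (f := Finsupp.lapply (R := ℤ) y ∘ₗ kap P j)
    (g := inc (stb_le (Quotient.out y)) j ∘ₗ comp (Quotient.out y) j) ?_ w
  rintro ⟨x, t⟩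
  simp only [LinearMap.comp_apply, kap_bs, Finsupp.lapply_apply]
  by_cases h : ∃ h : H, h • x = Quotient.out y
  · obtain ⟨h, hh⟩ := h
    rw [comp_bs _ _ _ _ h hh, inc_bs, bs_smul]
    have : mkO H x = y := by rw [← mkO_smul h, hh, mkO_out]
    rw [this, Finsupp.single_eq_same]
  · rw [comp_bs_not _ _ _ _ h, map_zero]
    have : mkO H x ≠ y := by
      intro he
      apply h
      apply mkO_eq.1
      rw [mkO_out, he]
    rw [Finsupp.single_eq_of_ne' this]

theorem kap_push (P j : ℕ) (x : S.X P) {L : Subgroup G} (hL : L ≤ stb x) (s : CC L j) :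
    kap P j (push x hL j s) = Finsupp.single (mkO H x) (inc (hL.trans (stb_le x)) j s) := by
  refine ch_ext_apply (f := kap P j ∘ₗ push x hL j)
    (g := Finsupp.lsingle (R := ℤ) (mkO H x) ∘ₗ inc (hL.trans (stb_le x)) j) ?_ s
  intro t
  simp [kap_bs]

theorem kap_dh (P j : ℕ) (w : AA S (P + 1) j) :
    altS (fun i => Finsupp.lmapDomain (CC H j) ℤ (oδ (S := S) i)) (kap (P + 1) j w)
      = kap P j (dh S P j w) := by
  apply altS_natural
  intro i w
  refine ch_ext_apply (f := Finsupp.lmapDomain (CC H j) ℤ (oδ (S := S) i) ∘ₗ kap (P + 1) j)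
    (g := kap P j ∘ₗ hf S j i) ?_ w
  rintro ⟨x, t⟩
  simp [kap_bs, oδ_mk]

theorem mapDomain_pred {ι κ M : Type} [AddCommGroup M] {p : M → Prop} (h0 : p 0)
    (ha : ∀ x y, p x → p y → p (x + y)) (f : ι → κ) (k : ι →₀ M) (hk : ∀ i, p (k i)) (y : κ) :
    p (Finsupp.mapDomain f k y) := by
  classical
  unfold Finsupp.mapDomain
  rw [Finsupp.sum_apply]
  refine Finset.sum_induction _ p ha h0 ?_
  intro i _
  show p (Finsupp.single (f i) (k i) y)
  rw [Finsupp.single_apply]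
  split_ifs
  · exact hk i
  · exact h0

theorem altS_pred {ι κ M : Type} [AddCommGroup M] {p : M → Prop} (h0 : p 0)
    (ha : ∀ x y, p x → p y → p (x + y)) (hz : ∀ (c : ℤ) x, p x → p (c • x)) {n : ℕ}
    (f : Fin n → ι → κ) (k : ι →₀ M)
    (hk : ∀ i, p (k i)) (y : κ) :
    p (altS (fun i => Finsupp.lmapDomain M ℤ (f i)) k y) := by
  rw [altS_apply, Finsupp.finsetSum_apply]
  refine Finset.sum_induction _ p ha h0 ?_
  intro i _
  rw [Finsupp.smul_apply]
  exact hz _ _ (mapDomain_pred h0 ha _ _ hk _)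

theorem E2_normal (Q j : ℕ) (cone : ∀ {P : ℕ}, S.X P → S.X (P + 1) → Prop)
    (hc0 : ∀ {P : ℕ} (x : S.X P) (y : S.X (P + 1)), cone x y → S.δ 0 y = x)
    (hcs : ∀ {P : ℕ} (x : S.X (P + 1)) (y : S.X (P + 2)) (i : Fin (P + 1)), cone x y →
      cone (S.δ i x) (S.δ i.succ y))
    (hcu : ∀ {P : ℕ} (x x' : S.X P) (y y' : S.X (P + 1)), cone x y → cone x' y' →
      mkO H x = mkO H x' → mkO H y = mkO H y')
    (hex : ∀ x : S.X (Q + 1), ∃ y, cone x y) (hex0 : ∀ x : S.X Q, ∃ y, cone x y)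
    (hs : ∀ x : S.X (Q + 2), SurjOn (stb x) H j) (hi : ∀ x : S.X (Q + 1), InjOn (stb x) H j) :
    E2 (dh S) (dv S) Q j := by
  classical
  have hc : ∀ P, (∀ x : S.X P, ∃ y, cone x y) → ∃ c : Orb H (S.X P) → Orb H (S.X (P + 1)),
      ∀ x y, cone x y → c (mkO H x) = mkO H y := by
    intro P hP
    choose f hf using hP
    refine ⟨fun y => mkO H (f (Quotient.out y)), fun x y hxy => ?_⟩
    exact hcu _ _ _ _ (hf _) hxy (mkO_out _)
  obtain ⟨c1, hc1⟩ := hc _ hex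
  obtain ⟨c0, hc0'⟩ := hc _ hex0
  intro w hw hb
  -- the contraction
  have hcontr : ∀ k : Orb H (S.X (Q + 1)) →₀ CC H j,
      altS (fun i => Finsupp.lmapDomain (CC H j) ℤ (oδ (S := S) i)) (Finsupp.mapDomain c1 k)
      + Finsupp.mapDomain c0 (altS (fun i => Finsupp.lmapDomain (CC H j) ℤ (oδ (S := S) i)) k)
      = k := by
    intro k
    have : altS (fun i => Finsupp.lmapDomain (CC H j) ℤ (oδ (S := S) i)) ∘ₗ
        Finsupp.lmapDomain (CC H j) ℤ c1 + Finsupp.lmapDomain (CC H j) ℤ c0 ∘ₗ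
        altS (fun i => Finsupp.lmapDomain (CC H j) ℤ (oδ (S := S) i)) = LinearMap.id := by
      apply Finsupp.lhom_ext
      intro y m
      obtain ⟨x, rfl⟩ : ∃ x, mkO H x = y := ⟨_, mkO_out y⟩
      obtain ⟨x', hx'⟩ := hex x
      simp only [LinearMap.add_apply, LinearMap.comp_apply, Finsupp.lmapDomain_apply,
        Finsupp.mapDomain_single, altS_apply, LinearMap.id_apply]
      rw [Fin.sum_univ_succ, hc1 x x' hx', oδ_mk, hc0 x x' hx']
      simp only [Fin.val_zero, pow_zero, one_smul, add_assoc]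
      rw [← Finsupp.lmapDomain_apply (M := CC H j) (R := ℤ), map_sum, ← Finset.sum_add_distrib,
        Finset.sum_eq_zero, add_zero]
      intro i _
      rw [map_zsmul, Finsupp.lmapDomain_apply, Finsupp.mapDomain_single, oδ_mk, oδ_mk,
        hc0' _ _ (hcs x x' i hx'), Fin.val_succ, pow_succ, mul_neg_one, neg_smul, neg_add_cancel]
    exact LinearMap.congr_fun this k
  have hk1 : ∀ y, IsCyc (cd H) j (Finsupp.mapDomain c1 (kap (Q + 1) j w) y) := by
    intro y
    refine mapDomain_pred (p := IsCyc (cd H) j) IsCyc.zero (fun _ _ => IsCyc.add) c1 _ ?_ y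
    intro y
    rw [kap_apply]
    exact (hw.map (fun j => comp (Quotient.out y) j) (fun j w => cd_comp _ j w)).map
      (inc (stb_le _)) (cd_inc _)
  set k1 := Finsupp.mapDomain c1 (kap (Q + 1) j w) with hk1def
  have hlift : ∀ y : Orb H (S.X (Q + 2)), ∃ s : CC (stb (Quotient.out y)) j,
      IsCyc (cd (stb (Quotient.out y))) j s ∧
      IsBd (cd H) j (k1 y - inc (stb_le (Quotient.out y)) j s) := by
    intro y
    obtain ⟨_, h⟩ := hs (Quotient.out y)
    exact h _ (hk1 y)
  choose s hs1 hs2 using hlift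
  let Y : AA S (Q + 2) j := ∑ y ∈ k1.support, push (Quotient.out y) le_rfl j (s y)
  have hYc : IsCyc (dv S (Q + 2)) j Y := by
    refine IsCyc.sum _ _ ?_
    intro y _
    exact (hs1 y).map (push (Quotient.out y) le_rfl) (dv_push _ le_rfl)
  refine ⟨Y, hYc, ?_⟩
  have hYk : ∀ y, IsBd (cd H) j ((k1 - kap (Q + 2) j Y) y) := by
    intro y
    have e1 : kap (Q + 2) j Y = ∑ y ∈ k1.support,
        Finsupp.single y (inc (stb_le (Quotient.out y)) j (s y)) := by
      simp only [Y, map_sum]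
      refine Finset.sum_congr rfl fun y _ => ?_
      rw [kap_push, mkO_out]
    rw [e1, Finsupp.sub_apply, Finsupp.finsetSum_apply]
    by_cases hy : y ∈ k1.support
    · rw [Finset.sum_eq_single_of_mem y hy (fun b _ hb => Finsupp.single_eq_of_ne' hb),
        Finsupp.single_eq_same]
      exact hs2 y
    · rw [Finset.sum_eq_zero, Finsupp.notMem_support_iff.1 hy, sub_zero]
      · exact IsBd.zero
      · intro b hb
        apply Finsupp.single_eq_of_ne'
        rintro rfl
        exact hy hb
  have hu : ∀ y, IsBd (cd H) j (kap (Q + 1) j (w - dh S (Q + 1) j Y) y) := by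
    have e2 : kap (Q + 1) j (w - dh S (Q + 1) j Y) =
        Finsupp.mapDomain c0 (kap Q j (dh S Q j w)) +
        altS (fun i => Finsupp.lmapDomain (CC H j) ℤ (oδ (S := S) i))
          (k1 - kap (Q + 2) j Y) := by
      rw [map_sub, map_sub, ← kap_dh (Q + 1), ← kap_dh Q]
      have := hcontr (kap (Q + 1) j w)
      rw [← hk1def] at this
      nth_rewrite 1 [← this]
      abel
    intro y
    rw [e2, Finsupp.add_apply]
    refine IsBd.add ?_ ?_
    · refine mapDomain_pred (p := IsBd (cd H) j) IsBd.zero (fun _ _ => IsBd.add) c0 _ ?_ y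
      intro y
      rw [kap_apply]
      exact (hb.map (fun j => comp (Quotient.out y) j) (fun j w => cd_comp _ j w)).map
        (inc (stb_le _)) (cd_inc _)
    · exact altS_pred (p := IsBd (cd H) j) IsBd.zero (fun _ _ => IsBd.add)
        (fun c _ => IsBd.zsmul c) _ _ hYk y
  have huc : IsCyc (dv S (Q + 1)) j (w - dh S (Q + 1) j Y) :=
    hw.sub (hYc.map (e := dv S (Q + 1)) (fun j => dh S (Q + 1) j)
      (fun j w => (dh_dv S (Q + 1) j w).symm))
  generalize w - dh S (Q + 1) j Y = u at hu huc
  obtain ⟨t, ht⟩ := decomp u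
  rw [ht t (Finset.Subset.refl _)]
  refine IsBd.sum _ _ ?_
  intro y _
  obtain ⟨_, h⟩ := hi (Quotient.out y)
  have h2 := h _ (huc.map (fun j => comp (Quotient.out y) j) (fun j w => cd_comp _ j w))
    (by have := hu y; rwa [kap_apply] at this)
  exact h2.map (push (Quotient.out y) le_rfl) (dv_push _ le_rfl)

end Machine2



/-- A symplectic space together with a group acting as its full symplectic group. -/
structure Symp (K V G : Type) [Field K] [AddCommGroup V] [Module K V] [FiniteDimensional K V]
    [Group G] [DistribMulAction G V] where
  ω : LinearMap.BilinForm K V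
  alt : ω.IsAlt
  nd : ω.Nondegenerate
  gsmul : ∀ (g : G) (c : K) (x : V), g • (c • x) = c • g • x
  inv : ∀ (g : G) (x y : V), ω (g • x) (g • y) = ω x y
  trans : ∀ (u : V) (c : K), ∃ g : G, ∀ x, g • x = x + (c * ω u x) • u
  faithful : ∀ g h : G, (∀ x : V, g • x = h • x) → g = h

section symp

variable {K V G : Type} [Field K] [AddCommGroup V] [Module K V] [FiniteDimensional K V]
  [Group G] [DistribMulAction G V] (Y : Symp K V G)

open Module Submodule

namespace Symp

theorem self (x : V) : Y.ω x x = 0 := Y.alt x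

theorem swap (x y : V) : Y.ω x y = - Y.ω y x := by
  rw [← LinearMap.IsAlt.neg Y.alt y x]

theorem refl : Y.ω.IsRefl := Y.alt.isRefl

/-- Orthogonal complement. -/
def orth (U : Submodule K V) : Submodule K V := Y.ω.orthogonal U

theorem mem_orth {U : Submodule K V} {x : V} : x ∈ Y.orth U ↔ ∀ u ∈ U, Y.ω u x = 0 :=
  LinearMap.BilinForm.mem_orthogonal_iff

theorem mem_orth_symm {U : Submodule K V} {x : V} (hx : x ∈ Y.orth U) {u : V} (hu : u ∈ U) :
    Y.ω x u = 0 := by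
  rw [Y.swap, Y.mem_orth.1 hx u hu, neg_zero]

theorem orth_orth (U : Submodule K V) : Y.orth (Y.orth U) = U :=
  LinearMap.BilinForm.orthogonal_orthogonal Y.nd Y.refl U

theorem orth_le {U U' : Submodule K V} (h : U ≤ U') : Y.orth U' ≤ Y.orth U :=
  LinearMap.BilinForm.orthogonal_le h

theorem fr_orth (U : Submodule K V) : finrank K (Y.orth U) + finrank K U = finrank K V := by
  have h := LinearMap.BilinForm.finrank_orthogonal Y.nd U
  have h2 := Submodule.finrank_le U
  unfold orth
  omega

theorem orth_sup (U U' : Submodule K V) {x : V} (h : x ∈ Y.orth U) (h' : x ∈ Y.orth U') :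
    x ∈ Y.orth (U ⊔ U') := by
  rw [mem_orth] at *
  intro u hu
  obtain ⟨a, ha, b, hb, rfl⟩ := Submodule.mem_sup.1 hu
  simp [h a ha, h' b hb]

theorem orth_span_singleton {v x : V} : x ∈ Y.orth (K ∙ v) ↔ Y.ω v x = 0 := by
  rw [mem_orth]
  constructor
  · intro h; exact h v (mem_span_singleton_self v)
  · intro h u hu
    obtain ⟨c, rfl⟩ := mem_span_singleton.1 hu
    simp [h]

theorem sep {x : V} (h : ∀ y, Y.ω x y = 0) : x = 0 := Y.nd.1 x h

theorem exists_ne {x : V} (h : x ≠ 0) : ∃ y, Y.ω x y ≠ 0 := by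
  by_contra hc
  push Not at hc
  exact h (Y.sep hc)

/-- The radical. -/
def rad (U : Submodule K V) : Submodule K V := U ⊓ Y.orth U

theorem rad_le (U : Submodule K V) : Y.rad U ≤ U := inf_le_left

theorem rad_le_orth (U : Submodule K V) : Y.rad U ≤ Y.orth U := inf_le_right

/-- Dimension of the nondegenerate quotient of the complement. -/
noncomputable def bb (U : Submodule K V) : ℕ := finrank K (Y.orth U) - finrank K (Y.rad U)

theorem bb_add (U : Submodule K V) :
    Y.bb U + finrank K (Y.rad U) = finrank K (Y.orth U) := by
  have := Submodule.finrank_mono (Y.rad_le_orth U)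
  unfold bb; omega

theorem fr_sup_single (U : Submodule K V) (v : V) :
    finrank K (U ⊔ K ∙ v : Submodule K V) ≤ finrank K U + 1 := by
  have h := Submodule.finrank_add_le_finrank_add_finrank U (K ∙ v)
  have h2 : finrank K (K ∙ v) ≤ 1 := (finrank_span_le_card ({v} : Set V)).trans (by simp)
  omega

theorem bb_step (U : Submodule K V) (v : V) : Y.bb U ≤ Y.bb (U ⊔ K ∙ v) + 2 := by
  have h1 := fr_sup_single U v
  have h2 := Y.fr_orth U
  have h3 := Y.fr_orth (U ⊔ K ∙ v)
  have h4 := Y.bb_add U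
  have h5 := Y.bb_add (U ⊔ K ∙ v)
  have h6 := Submodule.finrank_sup_add_finrank_inf_eq (Y.rad (U ⊔ K ∙ v)) U
  have h7 : finrank K (Y.rad (U ⊔ K ∙ v) ⊔ U : Submodule K V) ≤
      finrank K (U ⊔ K ∙ v : Submodule K V) :=
    Submodule.finrank_mono (sup_le (Y.rad_le _) le_sup_left)
  have h8 : finrank K (Y.rad (U ⊔ K ∙ v) ⊓ U : Submodule K V) ≤ finrank K (Y.rad U) := by
    apply Submodule.finrank_mono
    rintro x ⟨hx, hxU⟩
    exact ⟨hxU, Y.orth_le le_sup_left (Y.rad_le_orth _ hx)⟩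
  omega

theorem bb_anti {U U' : Submodule K V} (h : U ≤ U') : Y.bb U' ≤ Y.bb U := by
  have h4 := Y.bb_add U
  have h5 := Y.bb_add U'
  have h6 := Submodule.finrank_sup_add_finrank_inf_eq (Y.orth U') (Y.rad U)
  have h7 : finrank K (Y.orth U' ⊔ Y.rad U : Submodule K V) ≤ finrank K (Y.orth U) :=
    Submodule.finrank_mono (sup_le (Y.orth_le h) (Y.rad_le_orth U))
  have h8 : finrank K (Y.orth U' ⊓ Y.rad U : Submodule K V) ≤ finrank K (Y.rad U') := by
    apply Submodule.finrank_mono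
    rintro x ⟨hx, hxU⟩
    exact ⟨h (Y.rad_le U hxU), hx⟩
  omega

theorem exists_orth_notMem {U : Submodule K V} (h : 1 ≤ Y.bb U) : ∃ y ∈ Y.orth U, y ∉ U := by
  by_contra hc
  push Not at hc
  have : Y.rad U = Y.orth U := inf_eq_right.2 hc
  have h2 := Y.bb_add U
  rw [this] at h2
  omega

theorem bb_triple (U : Submodule K V) (v0 p1 p2 : V) (h1 : p1 ∈ Y.orth U) (h2 : p2 ∈ Y.orth U)
    (h12 : Y.ω p1 p2 ≠ 0) :
    Y.bb (U ⊔ K ∙ v0) ≤ Y.bb (((U ⊔ K ∙ v0) ⊔ K ∙ p1) ⊔ K ∙ p2) + 2 := by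
  set U1 := U ⊔ K ∙ v0 with hU1
  set U3 := (U1 ⊔ K ∙ p1) ⊔ K ∙ p2 with hU3
  set P : Submodule K V := (K ∙ p1) ⊔ (K ∙ p2) with hP
  have e3 : U3 = U1 ⊔ P := by rw [hU3, hP, sup_assoc]
  have hp1 : p1 ∈ P := le_sup_left (a := K ∙ p1) (mem_span_singleton_self p1)
  have hp2 : p2 ∈ P := le_sup_right (a := K ∙ p1) (mem_span_singleton_self p2)
  have hPU : P ≤ Y.orth U := by
    apply sup_le <;> rw [span_singleton_le_iff_mem] <;> assumption
  have hPnd : ∀ p ∈ P, (∀ p' ∈ P, Y.ω p' p = 0) → p = 0 := by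
    intro p hp hh
    obtain ⟨a, ha, b, hb, rfl⟩ := Submodule.mem_sup.1 hp
    obtain ⟨c, rfl⟩ := mem_span_singleton.1 ha
    obtain ⟨d, rfl⟩ := mem_span_singleton.1 hb
    have e1 := hh p1 hp1
    have e2 := hh p2 hp2
    rw [map_add, map_smul, map_smul, Y.self] at e1 e2
    have : d = 0 := by simpa [h12] using e1
    have h21 : Y.ω p2 p1 ≠ 0 := by rw [Y.swap]; simpa using h12
    have : c = 0 := by simpa [h21] using e2
    simp [*]
  have hd : Y.rad U3 ⊓ P = ⊥ := by
    rw [eq_bot_iff]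
    rintro z ⟨hz, hzP⟩
    refine hPnd z hzP fun p' hp' => ?_
    exact Y.mem_orth.1 (Y.rad_le_orth _ hz) p' (e3 ▸ le_sup_right (a := U1) hp')
  have hle : Y.rad U3 ⊔ P ≤ Y.rad U1 ⊔ P := by
    refine sup_le ?_ le_sup_right
    intro z hz
    have hz3 := Y.rad_le _ hz
    have hzo := Y.mem_orth.1 (Y.rad_le_orth _ hz)
    have hzs : z ∈ U1 ⊔ P := e3 ▸ hz3
    obtain ⟨y, hy, p, hp, rfl⟩ := Submodule.mem_sup.1 hzs
    have hU1le : U1 ≤ U3 := e3 ▸ le_sup_left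
    have hPle : P ≤ U3 := e3 ▸ le_sup_right
    have hULe : U ≤ U1 := le_sup_left
    have hv0 : v0 ∈ U1 := le_sup_right (a := U) (mem_span_singleton_self v0)
    refine Submodule.mem_sup.2 ⟨y, ⟨hy, ?_⟩, p, hp, rfl⟩
    obtain ⟨u, hu, c, hc, hyc⟩ := Submodule.mem_sup.1 hy
    obtain ⟨α, rfl⟩ := mem_span_singleton.1 hc
    have key : Y.ω v0 p = 0 := by
      by_cases hα : α = 0
      · have : p = 0 := by
          refine hPnd p hp fun p' hp' => ?_
          have e := hzo p' (hPle hp')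
          rw [map_add] at e
          have e' : Y.ω p' y = 0 := by
            rw [← hyc, hα, zero_smul, add_zero]
            exact Y.mem_orth_symm (hPU hp') hu
          rwa [e', zero_add] at e
        simp [this]
      · have e := hzo y (hU1le hy)
        rw [map_add, Y.self, zero_add, ← hyc, map_add, LinearMap.add_apply,
          Y.mem_orth.1 (hPU hp) u hu, zero_add, map_smul, LinearMap.smul_apply, smul_eq_mul] at e
        exact (mul_eq_zero.1 e).resolve_left hα
    refine Y.orth_sup U _ ?_ ?_
    · rw [mem_orth]
      intro a ha
      have e := hzo a (hU1le (hULe ha))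
      rwa [map_add, Y.mem_orth.1 (hPU hp) a ha, add_zero] at e
    · rw [Y.orth_span_singleton]
      have e := hzo v0 (hU1le hv0)
      rwa [map_add, key, add_zero] at e
  have q1 := Submodule.finrank_sup_add_finrank_inf_eq (Y.rad U3) P
  rw [hd, finrank_bot] at q1
  have q2 := Submodule.finrank_mono hle
  have q3 := Submodule.finrank_add_le_finrank_add_finrank (Y.rad U1) P
  have q4 := fr_sup_single U1 p1
  have q5 := fr_sup_single (U1 ⊔ K ∙ p1) p2
  have q6 := Y.fr_orth U1
  have q7 := Y.fr_orth U3
  have q8 := Y.bb_add U1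
  have q9 := Y.bb_add U3
  rw [← hU3] at q5
  omega

theorem notMem_of_rad {U : Submodule K V} {ρ v : V} (hρ : ρ ∈ Y.rad U) (hv : Y.ω ρ v ≠ 0) :
    v ∉ U := fun h => hv (Y.mem_orth_symm (Y.rad_le_orth _ hρ) h)

theorem rad_lt {U : Submodule K V} {ρ v : V} (hρ : ρ ∈ Y.rad U) (hv : Y.ω ρ v ≠ 0) :
    finrank K (Y.rad (U ⊔ K ∙ v)) < finrank K (Y.rad U) := by
  apply Submodule.finrank_lt_finrank_of_lt
  refine lt_of_le_of_ne ?_ ?_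
  · intro z hz
    obtain ⟨u, hu, c, hc, rfl⟩ := Submodule.mem_sup.1 (Y.rad_le _ hz)
    obtain ⟨α, rfl⟩ := mem_span_singleton.1 hc
    have hzo := Y.mem_orth.1 (Y.rad_le_orth _ hz)
    have e := hzo ρ (le_sup_left (a := U) (Y.rad_le _ hρ))
    rw [map_add, Y.mem_orth_symm (Y.rad_le_orth _ hρ) hu, zero_add, map_smul, smul_eq_mul] at e
    have : α = 0 := (mul_eq_zero.1 e).resolve_right hv
    subst this
    rw [zero_smul, add_zero] at hz ⊢
    exact ⟨hu, Y.orth_le le_sup_left (Y.rad_le_orth _ hz)⟩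
  · intro he
    rw [← he] at hρ
    exact hv (Y.mem_orth_symm (Y.rad_le_orth _ hρ)
      (le_sup_right (a := U) (mem_span_singleton_self v)))

theorem bb_hyp {U : Submodule K V} {ρ v : V} (hρ : ρ ∈ Y.rad U) (hv : Y.ω ρ v ≠ 0) :
    Y.bb U ≤ Y.bb (U ⊔ K ∙ v) := by
  have h0 := Y.rad_lt hρ hv
  have h1 := fr_sup_single U v
  have h2 := Y.fr_orth U
  have h3 := Y.fr_orth (U ⊔ K ∙ v)
  have h4 := Y.bb_add U
  have h5 := Y.bb_add (U ⊔ K ∙ v)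
  omega

/-- Pointwise stabilizer of a subspace. -/
def fix (_ : Symp K V G) (U : Submodule K V) : Subgroup G where
  carrier := {g | ∀ u ∈ U, g • u = u}
  one_mem' := by simp
  mul_mem' := by
    intro a b ha hb u hu
    rw [mul_smul, hb u hu, ha u hu]
  inv_mem' := by
    intro a ha u hu
    rw [inv_smul_eq_iff, ha u hu]

theorem mem_fix {U : Submodule K V} {g : G} : g ∈ Y.fix U ↔ ∀ u ∈ U, g • u = u := Iff.rfl

theorem fix_le {U U' : Submodule K V} (h : U ≤ U') : Y.fix U' ≤ Y.fix U :=
  fun _ hg u hu => hg u (h hu)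

theorem fix_sup {U U' : Submodule K V} {g : G} (h : g ∈ Y.fix U) (h' : g ∈ Y.fix U') :
    g ∈ Y.fix (U ⊔ U') := by
  intro u hu
  obtain ⟨a, ha, b, hb, rfl⟩ := Submodule.mem_sup.1 hu
  rw [smul_add, h a ha, h' b hb]

theorem fix_single {v : V} {g : G} : g ∈ Y.fix (K ∙ v) ↔ g • v = v := by
  constructor
  · intro h; exact h v (mem_span_singleton_self v)
  · intro h u hu
    obtain ⟨c, rfl⟩ := mem_span_singleton.1 hu
    rw [Y.gsmul, h]

theorem inv_left (g : G) (x y : V) : Y.ω (g • x) y = Y.ω x (g⁻¹ • y) := by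
  rw [← Y.inv g x, smul_inv_smul]

/-- basic transvection step -/
theorem witt_aux {A : Submodule K V} {v v' : V} (h : ∀ a ∈ A, Y.ω a v = Y.ω a v')
    (hne : Y.ω v v' ≠ 0) : ∃ g ∈ Y.fix A, g • v = v' := by
  have h1 : Y.ω (v' - v) v ≠ 0 := by
    rw [map_sub, LinearMap.sub_apply, Y.self, sub_zero, Y.swap]; simpa using hne
  obtain ⟨g, hg⟩ := Y.trans (v' - v) (Y.ω (v' - v) v)⁻¹
  refine ⟨g, fun a ha => ?_, ?_⟩
  · rw [hg, Y.swap (v' - v) a, map_sub (Y.ω a), h a ha]; simp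
  · rw [hg, inv_mul_cancel₀ h1]; simp

theorem witt {A : Submodule K V} {v v' : V} (hv : v ∉ A) (hv' : v' ∉ A)
    (h : ∀ a ∈ A, Y.ω a v = Y.ω a v') : ∃ g ∈ Y.fix A, g • v = v' := by
  by_cases hne : Y.ω v v' = 0
  swap
  · exact Y.witt_aux h hne
  have ex : ∀ w, w ∉ A → ∃ y ∈ Y.orth A, Y.ω y w ≠ 0 := by
    intro w hw
    by_contra hc
    push Not at hc
    exact hw (by rw [← Y.orth_orth A, mem_orth]; exact hc)
  obtain ⟨y, hy, h1, h2⟩ : ∃ y ∈ Y.orth A, Y.ω y v ≠ 0 ∧ Y.ω y v' ≠ 0 := by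
    obtain ⟨y, hy, h1⟩ := ex v hv
    obtain ⟨y', hy', h2⟩ := ex v' hv'
    by_cases c1 : Y.ω y v' = 0
    · by_cases c2 : Y.ω y' v = 0
      · exact ⟨y + y', add_mem hy hy', by simpa [c2] using h1, by simpa [c1] using h2⟩
      · exact ⟨y', hy', c2, h2⟩
    · exact ⟨y, hy, h1, c1⟩
  have ha : ∀ a ∈ A, Y.ω a v = Y.ω a (v + y) := by
    intro a ha
    rw [map_add, Y.mem_orth.1 hy a ha, add_zero]
  obtain ⟨g1, hg1, e1⟩ := Y.witt_aux ha (by rw [map_add, Y.self, zero_add, Y.swap]; simpa using h1)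
  obtain ⟨g2, hg2, e2⟩ := Y.witt_aux (A := A) (v := v + y) (v' := v')
    (fun a h' => by rw [← ha a h', h a h'])
    (by rw [map_add, LinearMap.add_apply, hne, zero_add]; exact h2)
  exact ⟨g2 * g1, mul_mem hg2 hg1, by rw [mul_smul, e1, e2]⟩

theorem compl_of_rad {T : Submodule K V} (h : Y.rad T = ⊥) (x : V) :
    ∃ t ∈ T, ∃ s ∈ Y.orth T, t + s = x := by
  have q := Submodule.finrank_sup_add_finrank_inf_eq T (Y.orth T)
  have h' : T ⊓ Y.orth T = ⊥ := h
  rw [h', finrank_bot] at q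
  have q2 := Y.fr_orth T
  have : T ⊔ Y.orth T = ⊤ := Submodule.eq_top_of_finrank_eq (by omega)
  exact Submodule.mem_sup.1 (this ▸ Submodule.mem_top)

theorem comm_of {T : Submodule K V} (h : Y.rad T = ⊥) {g l : G} (hg : g ∈ Y.fix (Y.orth T))
    (hl : l ∈ Y.fix T) : g * l = l * g := by
  apply Y.faithful
  intro x
  obtain ⟨t, ht, s, hs, rfl⟩ := Y.compl_of_rad h x
  have h1 : l • s ∈ Y.orth T := by
    rw [mem_orth]
    intro u hu
    rw [← hl u hu, Y.inv, Y.mem_orth.1 hs u hu]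
  have h2 : g • t ∈ T := by
    rw [← Y.orth_orth T, mem_orth]
    intro u hu
    rw [← hg u hu, Y.inv, Y.mem_orth_symm hu ht]
  rw [mul_smul, mul_smul, smul_add, smul_add, smul_add, smul_add, hl t ht, hg _ h1, hg s hs,
    hl _ h2]

theorem move {U T : Submodule K V} (hUT : U ≤ T) (h : Y.rad T = ⊥) {v v' : V} (hv : v ∈ T)
    (hv' : v' ∈ T) (nv : v ∉ U) (nv' : v' ∉ U) (hu : ∀ a ∈ U, Y.ω a v = Y.ω a v') :
    ∃ g ∈ Y.fix U, g • v = v' ∧ ∀ l ∈ Y.fix T, g * l = l * g := by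
  have key : ∀ x ∈ T, x ∉ U → x ∉ U ⊔ Y.orth T := by
    intro x hx nx hc
    obtain ⟨a, ha, s, hs, rfl⟩ := Submodule.mem_sup.1 hc
    have hsT : s ∈ T := by
      have := sub_mem hx (hUT ha)
      rwa [add_sub_cancel_left] at this
    have : s ∈ Y.rad T := ⟨hsT, hs⟩
    rw [h, mem_bot] at this
    subst this
    exact nx (by simpa using ha)
  obtain ⟨g, hg, e⟩ := Y.witt (key v hv nv) (key v' hv' nv') (by
    intro a ha
    obtain ⟨b, hb, s, hs, rfl⟩ := Submodule.mem_sup.1 ha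
    simp [hu b hb, Y.mem_orth_symm hs hv, Y.mem_orth_symm hs hv'])
  exact ⟨g, Y.fix_le le_sup_left hg, e, fun l hl => Y.comm_of h (Y.fix_le le_sup_right hg) hl⟩

theorem ndhull {j : ℕ} (m : ℕ) (hstep : ∀ (U : Submodule K V) (v : V), v ∉ U →
    m ≤ Y.bb (U ⊔ K ∙ v) → SurjOn (Y.fix (U ⊔ K ∙ v)) (Y.fix U) j) :
    ∀ (r : ℕ) (U : Submodule K V), finrank K (Y.rad U) = r → m ≤ Y.bb U →
      ∃ T, U ≤ T ∧ Y.rad T = ⊥ ∧ SurjOn (Y.fix T) (Y.fix U) j := by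
  intro r
  induction r using Nat.strong_induction_on with
  | _ r ih =>
    intro U hr hm
    by_cases h : Y.rad U = ⊥
    · exact ⟨U, le_rfl, h, SurjOn.refl _ _⟩
    · obtain ⟨ρ, hρ, hne⟩ := Submodule.exists_mem_ne_zero_of_ne_bot h
      obtain ⟨v, hv⟩ := Y.exists_ne hne
      have hb := Y.bb_hyp hρ hv
      obtain ⟨T, h1, h2, h3⟩ := ih _ (hr ▸ Y.rad_lt hρ hv) (U ⊔ K ∙ v) rfl (hm.trans hb)
      exact ⟨T, le_sup_left.trans h1, h2,
        h3.trans (hstep U v (Y.notMem_of_rad hρ hv) (hm.trans hb))⟩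

/-- image under a group element preserves `bb` -/
theorem bb_smul (g : G) (U U' : Submodule K V) (h : ∀ x, x ∈ U' ↔ g⁻¹ • x ∈ U) :
    Y.bb U = Y.bb U' := by
  let f : V ≃ₗ[K] V :=
    { toFun := fun x => g • x
      invFun := fun x => g⁻¹ • x
      left_inv := fun x => by simp
      right_inv := fun x => by simp
      map_add' := smul_add g
      map_smul' := fun c x => Y.gsmul g c x }
  have key : ∀ A A' : Submodule K V, (∀ x, x ∈ A' ↔ g⁻¹ • x ∈ A) →
      finrank K A = finrank K A' := by
    intro A A' hA
    have : A' = A.map (f : V →ₗ[K] V) := by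
      ext x
      rw [hA, Submodule.mem_map]
      constructor
      · intro hx; exact ⟨_, hx, smul_inv_smul g x⟩
      · rintro ⟨y, hy, rfl⟩
        change g⁻¹ • (g • y) ∈ A
        rwa [inv_smul_smul]
    rw [this, LinearEquiv.finrank_map_eq]
  have ho : ∀ x, x ∈ Y.orth U' ↔ g⁻¹ • x ∈ Y.orth U := by
    intro x
    rw [mem_orth, mem_orth]
    constructor
    · intro hx u hu
      rw [← Y.inv_left]
      exact hx _ ((h _).2 (by rwa [inv_smul_smul]))
    · intro hx u hu
      have := hx _ ((h u).1 hu)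
      rwa [Y.inv] at this
  unfold bb
  rw [key _ _ ho, key (Y.rad U) (Y.rad U')]
  intro x
  exact and_congr (h x) (ho x)

end Symp
end symp


set_option linter.unusedVariables false
set_option linter.unusedSectionVars false

section symp7

variable {K V G : Type} [Field K] [AddCommGroup V] [Module K V] [FiniteDimensional K V]
  [Group G] [DistribMulAction G V] (Y : Symp K V G)

open Module Submodule

/-- The span of `U` and a tuple. -/
def hull (U : Submodule K V) {P : ℕ} (x : Fin P → V) : Submodule K V := U ⊔ span K (Set.range x)

/-- Linear independence modulo `U`. -/
def Ind (U : Submodule K V) {P : ℕ} (x : Fin P → V) : Prop := LinearIndependent K (U.mkQ ∘ x)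

theorem hull_cons (U : Submodule K V) {P : ℕ} (w : V) (x : Fin P → V) :
    hull U (Fin.cons w x : Fin (P + 1) → V) = hull U x ⊔ K ∙ w := by
  unfold hull
  rw [Fin.range_cons, span_insert, sup_assoc, sup_comm (span K (Set.range x))]

theorem hull_zero (U : Submodule K V) (x : Fin 0 → V) : hull U x = U := by
  unfold hull
  simp

theorem le_hull (U : Submodule K V) {P : ℕ} (x : Fin P → V) : U ≤ hull U x := le_sup_left

theorem mem_hull (U : Submodule K V) {P : ℕ} (x : Fin P → V) (i : Fin P) : x i ∈ hull U x :=
  le_sup_right (a := U) (subset_span ⟨i, rfl⟩)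

theorem hull_le {U T : Submodule K V} {P : ℕ} {x : Fin P → V} (h : U ≤ T) (hx : ∀ i, x i ∈ T) :
    hull U x ≤ T := by
  refine sup_le h (span_le.2 ?_)
  rintro _ ⟨i, rfl⟩
  exact hx i

theorem ind_cons {U : Submodule K V} {P : ℕ} {w : V} {x : Fin P → V} :
    Ind U (Fin.cons w x : Fin (P + 1) → V) ↔ Ind U x ∧ w ∉ hull U x := by
  unfold Ind hull
  rw [Fin.comp_cons, linearIndependent_finCons, Set.range_comp, ← Submodule.map_span,
    ← Submodule.comap_map_mkQ, Submodule.mem_comap]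

theorem ind_zero {U : Submodule K V} (x : Fin 0 → V) : Ind U x := linearIndependent_empty_type

theorem ind_iff {U : Submodule K V} {P : ℕ} {x : Fin P → V} :
    Ind U x ↔ ∀ c : Fin P → K, ∑ i, c i • x i ∈ U → ∀ i, c i = 0 := by
  unfold Ind
  rw [Fintype.linearIndependent_iff]
  refine forall_congr' fun c => ?_
  rw [← Submodule.Quotient.mk_eq_zero, ← Submodule.mkQ_apply, map_sum]
  simp

theorem ind_fc {U : Submodule K V} {P : ℕ} {x : Fin (P + 1) → V} (h : Ind U x) (i : Fin (P + 1)) :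
    Ind U (fc i x) :=
  LinearIndependent.comp h i.succAbove Fin.succAbove_right_injective

theorem tail_hull (U : Submodule K V) {P : ℕ} (x : Fin (P + 1) → V) :
    hull U x = hull U (Fin.tail x) ⊔ K ∙ (x 0) := by
  conv_lhs => rw [← Fin.cons_self_tail x]
  rw [hull_cons]

theorem tail_ind {U : Submodule K V} {P : ℕ} {x : Fin (P + 1) → V} :
    Ind U x ↔ Ind U (Fin.tail x) ∧ x 0 ∉ hull U (Fin.tail x) := by
  conv_lhs => rw [← Fin.cons_self_tail x]
  rw [ind_cons]

theorem exists_functional {ι : Type} (x : ι → V) (h : LinearIndependent K x) (a : ι → K) :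
    ∃ f : V →ₗ[K] K, ∀ i, f (x i) = a i := by
  obtain ⟨f, hf⟩ := LinearMap.exists_extend ((Basis.span h).constr K a)
  refine ⟨f, fun i => ?_⟩
  have := LinearMap.congr_fun hf (Basis.span h i)
  rw [Basis.constr_basis] at this
  rw [← this, LinearMap.comp_apply, Submodule.subtype_apply, Basis.span_apply]

namespace Symp

theorem smul_mem_hull {U : Submodule K V} {P : ℕ} {x x' : Fin P → V} {g : G} (hg : g ∈ Y.fix U)
    (h : ∀ i, g • x i = x' i) {y : V} (hy : y ∈ hull U x) : g • y ∈ hull U x' := by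
  let f : V →ₗ[K] V :=
    { toFun := fun x => g • x
      map_add' := smul_add g
      map_smul' := fun c x => Y.gsmul g c x }
  have : hull U x ≤ (hull U x').comap f := by
    refine hull_le (fun u hu => ?_) (fun i => ?_)
    · change g • u ∈ hull U x'
      rw [hg u hu]; exact le_hull U x' hu
    · change g • x i ∈ hull U x'
      rw [h]; exact mem_hull U x' i
  exact this hy

theorem bb_hull_smul {U : Submodule K V} {P : ℕ} {x x' : Fin P → V} {g : G} (hg : g ∈ Y.fix U)
    (h : ∀ i, g • x i = x' i) : Y.bb (hull U x) = Y.bb (hull U x') := by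
  refine Y.bb_smul g _ _ fun y => ⟨fun hy => ?_, fun hy => ?_⟩
  · exact Y.smul_mem_hull (inv_mem hg) (fun i => by rw [← h, inv_smul_smul]) hy
  · have := Y.smul_mem_hull hg h hy
    rwa [smul_inv_smul] at this

theorem fix_hull {U : Submodule K V} {P : ℕ} {x : Fin P → V} {g : G} :
    g ∈ Y.fix (hull U x) ↔ g ∈ Y.fix U ∧ ∀ i, g • x i = x i := by
  constructor
  · intro h
    exact ⟨Y.fix_le (le_hull U x) h, fun i => h _ (mem_hull U x i)⟩
  · rintro ⟨h1, h2⟩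
    refine Y.fix_sup h1 ?_
    intro u hu
    induction hu using Submodule.span_induction with
    | mem y hy => obtain ⟨i, rfl⟩ := hy; exact h2 i
    | zero => simp
    | add a b _ _ ha hb => rw [smul_add, ha, hb]
    | smul c a _ ha => rw [Y.gsmul, ha]

theorem ind_smul {U : Submodule K V} {P : ℕ} {x : Fin P → V} {g : G} (hg : g ∈ Y.fix U)
    (h : Ind U x) : Ind U (fun i => g • x i) := by
  rw [ind_iff] at *
  intro c hc
  apply h
  have e : ∑ i, c i • g • x i = g • ∑ i, c i • x i := by
    rw [Finset.smul_sum]; exact Finset.sum_congr rfl fun i _ => (Y.gsmul _ _ _).symm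
  rw [e] at hc
  have := inv_mem hg _ hc
  rw [inv_smul_smul] at this
  rw [this]; exact hc

theorem witt_tuple {U : Submodule K V} : ∀ {P : ℕ} {x x' : Fin P → V}, Ind U x → Ind U x' →
    (∀ i, ∀ u ∈ U, Y.ω u (x i) = Y.ω u (x' i)) → (∀ i j, Y.ω (x i) (x j) = Y.ω (x' i) (x' j)) →
    ∃ g ∈ Y.fix U, ∀ i, g • x i = x' i := by
  intro P
  induction P with
  | zero => intro x x' _ _ _ _; exact ⟨1, one_mem _, fun i => i.elim0⟩
  | succ P ih =>
    intro x x' hx hx' h1 h2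
    obtain ⟨hx1, hx2⟩ := tail_ind.1 hx
    obtain ⟨hx1', hx2'⟩ := tail_ind.1 hx'
    obtain ⟨g, hg, hgx⟩ := ih hx1 hx1' (fun i u hu => h1 i.succ u hu)
      (fun i j => h2 i.succ j.succ)
    obtain ⟨k, hk, hkx⟩ := Y.witt (A := hull U (Fin.tail x')) (v := g • x 0) (v' := x' 0) (by
      intro hc
      have := Y.smul_mem_hull (inv_mem hg) (x' := Fin.tail x)
        (fun i => by rw [← hgx, inv_smul_smul]) hc
      rw [inv_smul_smul] at this
      exact hx2 this) hx2' (by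
      have key : hull U (Fin.tail x') ≤ LinearMap.ker (Y.ω.flip (g • x 0 - x' 0)) := by
        refine hull_le (fun u hu => ?_) (fun i => ?_)
        · rw [LinearMap.mem_ker, LinearMap.BilinForm.flip_apply, map_sub, ← h1 0 u hu]
          nth_rewrite 1 [← hg u hu]
          rw [Y.inv, sub_self]
        · rw [LinearMap.mem_ker, LinearMap.BilinForm.flip_apply, map_sub]
          nth_rewrite 1 [← hgx i]
          rw [Y.inv]
          exact sub_eq_zero.2 (h2 i.succ 0)
      intro a ha
      have := key ha
      rw [LinearMap.mem_ker, LinearMap.BilinForm.flip_apply, map_sub] at this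
      exact sub_eq_zero.1 this)
    obtain ⟨hk1, hk2⟩ := Y.fix_hull.1 hk
    refine ⟨k * g, mul_mem hk1 hg, fun i => ?_⟩
    refine Fin.cases ?_ (fun i => ?_) i
    · rw [mul_smul, hkx]
    · rw [mul_smul]
      have : g • x i.succ = x' i.succ := hgx i
      rw [this]; exact hk2 i

theorem chain_surj {j m : ℕ} (hstep : ∀ (U : Submodule K V) (v : V), v ∉ U →
    m ≤ Y.bb (U ⊔ K ∙ v) → SurjOn (Y.fix (U ⊔ K ∙ v)) (Y.fix U) j) {U : Submodule K V} :
    ∀ {P : ℕ} {x : Fin P → V}, Ind U x → m ≤ Y.bb (hull U x) →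
      SurjOn (Y.fix (hull U x)) (Y.fix U) j := by
  intro P
  induction P with
  | zero => intro x _ _; rw [hull_zero]; exact SurjOn.refl _ _
  | succ P ih =>
    intro x hx hm
    rw [tail_hull] at *
    obtain ⟨h1, h2⟩ := tail_ind.1 hx
    exact (hstep _ _ h2 hm).trans (ih h1 (hm.trans (Y.bb_anti le_sup_left)))

theorem chain_inj {j m : ℕ} (hstep : ∀ (U : Submodule K V) (v : V), v ∉ U →
    m ≤ Y.bb (U ⊔ K ∙ v) → InjOn (Y.fix (U ⊔ K ∙ v)) (Y.fix U) j) {U : Submodule K V} :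
    ∀ {P : ℕ} {x : Fin P → V}, Ind U x → m ≤ Y.bb (hull U x) →
      InjOn (Y.fix (hull U x)) (Y.fix U) j := by
  intro P
  induction P with
  | zero => intro x _ _; rw [hull_zero]; exact InjOn.refl _ _
  | succ P ih =>
    intro x hx hm
    rw [tail_hull] at *
    obtain ⟨h1, h2⟩ := tail_ind.1 hx
    exact (hstep _ _ h2 hm).trans (ih h1 (hm.trans (Y.bb_anti le_sup_left)))

/-- Genericity, only required over infinite fields. -/
def Gen {P : ℕ} (x : Fin P → V) : Prop :=
  Infinite K → (∀ i j, i < j → Y.ω (x i) (x j) ≠ 0) ∧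
    ∀ i j k, i < j → j < k → Y.ω (x j - x i) (x k - x i) ≠ 0

/-- The tuples which are simplices. -/
structure IsX (U : Submodule K V) (v : V) {P : ℕ} (x : Fin P → V) : Prop where
  val : ∀ i, ∀ u ∈ U, Y.ω u (x i) = Y.ω u v
  ind : Ind U x
  gen : Y.Gen x

variable {Y} in
theorem IsX.face {U : Submodule K V} {v : V} {P : ℕ} {x : Fin (P + 1) → V} (h : Y.IsX U v x)
    (i : Fin (P + 1)) : Y.IsX U v (fc i x) where
  val j := h.val _
  ind := ind_fc h.ind i
  gen hK := ⟨fun a b hab => (h.gen hK).1 _ _ (Fin.strictMono_succAbove i hab),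
    fun a b c hab hbc => (h.gen hK).2 _ _ _ (Fin.strictMono_succAbove i hab)
      (Fin.strictMono_succAbove i hbc)⟩

variable {Y} in
theorem IsX.smul {U : Submodule K V} {v : V} {P : ℕ} {x : Fin P → V} (h : Y.IsX U v x)
    {g : G} (hg : g ∈ Y.fix U) : Y.IsX U v (fun i => g • x i) where
  val i u hu := by
    rw [← h.val i u hu]
    nth_rewrite 1 [← hg u hu]
    rw [Y.inv]
  ind := Y.ind_smul hg h.ind
  gen hK := by
    refine ⟨fun a b hab => ?_, fun a b c hab hbc => ?_⟩
    · rw [Y.inv]; exact (h.gen hK).1 _ _ hab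
    · rw [← smul_sub, ← smul_sub, Y.inv]; exact (h.gen hK).2 _ _ _ hab hbc

theorem isX_cons {U : Submodule K V} {v : V} {P : ℕ} {w : V} {x : Fin P → V} (h : Y.IsX U v x)
    (hw : ∀ u ∈ U, Y.ω u w = Y.ω u v) (hn : w ∉ hull U x)
    (hg : Infinite K → (∀ i, Y.ω w (x i) ≠ 0) ∧ ∀ i j, i < j → Y.ω (x i - w) (x j - w) ≠ 0) :
    Y.IsX U v (Fin.cons w x : Fin (P + 1) → V) where
  val i := by
    refine Fin.cases ?_ (fun i => ?_) i
    · exact hw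
    · exact h.val i
  ind := ind_cons.2 ⟨h.ind, hn⟩
  gen hK := by
    obtain ⟨g1, g2⟩ := hg hK
    obtain ⟨f1, f2⟩ := h.gen hK
    constructor
    · intro i j hij
      induction j using Fin.cases with
      | zero => exact absurd hij (Fin.not_lt_zero i)
      | succ j =>
        induction i using Fin.cases with
        | zero => exact g1 j
        | succ i => exact f1 i j (Fin.succ_lt_succ_iff.1 hij)
    · intro i j k hij hjk
      induction k using Fin.cases with
      | zero => exact absurd hjk (Fin.not_lt_zero j)
      | succ k =>
        induction j using Fin.cases with
        | zero => exact absurd hij (Fin.not_lt_zero i)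
        | succ j =>
          induction i using Fin.cases with
          | zero => exact g2 j k (Fin.succ_lt_succ_iff.1 hjk)
          | succ i => exact f2 i j k (Fin.succ_lt_succ_iff.1 hij) (Fin.succ_lt_succ_iff.1 hjk)

theorem isX_cone {U : Submodule K V} {v : V} {P : ℕ} {w : V} {x : Fin P → V} (h : Y.IsX U v x)
    (hw : ∀ u ∈ U, Y.ω u w = Y.ω u v) (hn : w ∉ hull U x) (h1 : ∀ i, Y.ω w (x i) = 1) :
    Y.IsX U v (Fin.cons w x : Fin (P + 1) → V) := by
  refine Y.isX_cons h hw hn fun hK => ⟨fun i => by rw [h1]; exact one_ne_zero, fun i j hij => ?_⟩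
  have e : Y.ω (x i - w) (x j - w) = Y.ω (x i) (x j) := by
    rw [map_sub, map_sub, LinearMap.sub_apply, LinearMap.sub_apply, Y.self, h1,
      Y.swap (x i) w, h1]
    ring
  rw [e]
  exact (h.gen hK).1 i j hij

theorem exists_coneVec {U : Submodule K V} (v : V) {P : ℕ} {x : Fin P → V} (h : Ind U x) :
    ∃ w, (∀ u ∈ U, Y.ω u w = Y.ω u v) ∧ ∀ i, Y.ω w (x i) = 1 := by
  obtain ⟨f, hf⟩ := exists_functional (U.mkQ ∘ x) h (fun i => 1 - Y.ω v (x i))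
  refine ⟨(Y.ω.toDual Y.nd).symm (Y.ω v + f ∘ₗ U.mkQ), ?_, ?_⟩
  · intro u hu
    rw [Y.swap, Y.swap u v, LinearMap.BilinForm.apply_toDual_symm_apply]
    have : U.mkQ u = 0 := by simpa using hu
    rw [LinearMap.add_apply, LinearMap.comp_apply, this]; simp
  · intro i
    rw [LinearMap.BilinForm.apply_toDual_symm_apply, LinearMap.add_apply, LinearMap.comp_apply]
    have := hf i
    rw [Function.comp_apply] at this
    rw [this]; ring

theorem exists_cone {U : Submodule K V} {v : V} {P : ℕ} {x : Fin P → V} (h : Y.IsX U v x)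
    (hb : 1 ≤ Y.bb (hull U x)) : ∃ w, (∀ i, Y.ω w (x i) = 1) ∧
      Y.IsX U v (Fin.cons w x : Fin (P + 1) → V) := by
  obtain ⟨w, h1, h2⟩ := Y.exists_coneVec v h.ind
  by_cases hw : w ∈ hull U x
  · obtain ⟨y, hy, hn⟩ := Y.exists_orth_notMem hb
    have h2' : ∀ i, Y.ω (w + y) (x i) = 1 := by
      intro i
      rw [map_add, LinearMap.add_apply, h2, Y.mem_orth_symm hy (mem_hull U x i), add_zero]
    refine ⟨w + y, h2', Y.isX_cone h ?_ ?_ h2'⟩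
    · intro u hu
      rw [map_add, h1 u hu, Y.mem_orth.1 hy u (le_hull U x hu), add_zero]
    · intro hc
      exact hn (by simpa using sub_mem hc hw)
  · exact ⟨w, h2, Y.isX_cone h h1 hw h2⟩

variable {Y} in
theorem IsX.tail {U : Submodule K V} {v : V} {P : ℕ} {x : Fin (P + 1) → V} (h : Y.IsX U v x) :
    Y.IsX U v (Fin.tail x) := by
  have := h.face 0
  have e : fc 0 x = Fin.tail x := by funext i; simp [fc, Fin.tail]
  rwa [e] at this

theorem isX_one {U : Submodule K V} {v : V} (hv : v ∉ U) : Y.IsX U v (fun _ : Fin 1 => v) where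
  val _ _ _ := rfl
  ind := by
    rw [tail_ind]
    refine ⟨ind_zero _, ?_⟩
    rw [hull_zero]; exact hv
  gen _ := by
    refine ⟨fun i j hij => ?_, fun i j k hij hjk => ?_⟩ <;> omega

theorem trans_one {U : Submodule K V} {v : V} (hv : v ∉ U) {x : Fin 1 → V} (h : Y.IsX U v x) :
    ∃ g ∈ Y.fix U, ∀ i, g • x i = v := by
  refine Y.witt_tuple h.ind (Y.isX_one hv).ind (fun i => h.val i) ?_
  intro i j
  rw [Subsingleton.elim i j, Y.self, Y.self]

theorem hull_one (U : Submodule K V) (v : V) : hull U (fun _ : Fin 1 => v) = U ⊔ K ∙ v := by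
  unfold hull; simp

theorem bb_isX_one {U : Submodule K V} {v : V} (hv : v ∉ U) {x : Fin 1 → V} (h : Y.IsX U v x) :
    Y.bb (hull U x) = Y.bb (U ⊔ K ∙ v) := by
  obtain ⟨g, hg, e⟩ := Y.trans_one hv h
  rw [Y.bb_hull_smul hg e, hull_one]

theorem count1 {U : Submodule K V} {v : V} (hv : v ∉ U) : ∀ {P : ℕ} {x : Fin (P + 1) → V},
    Y.IsX U v x → Y.bb (U ⊔ K ∙ v) ≤ Y.bb (hull U x) + 2 * P := by
  intro P
  induction P with
  | zero => intro x h; rw [Y.bb_isX_one hv h]; omega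
  | succ P ih =>
    intro x h
    have h1 := ih h.tail
    have h2 := Y.bb_step (hull U (Fin.tail x)) (x 0)
    rw [tail_hull]
    omega

theorem count2 [Infinite K] {U : Submodule K V} {v : V} (hv : v ∉ U) :
    ∀ {P : ℕ} {x : Fin (P + 3) → V},
    Y.IsX U v x → Y.bb (U ⊔ K ∙ v) ≤ Y.bb (hull U x) + 2 * (P + 1) := by
  intro P
  induction P with
  | zero =>
    intro x h
    have h0 : Y.IsX U v (fun _ : Fin 1 => x 2) := by
      have h' := h.tail.tail
      have e : Fin.tail (Fin.tail x) = fun _ : Fin 1 => x 2 := by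
        funext i
        fin_cases i
        rfl
      rwa [e] at h'
    rw [← Y.bb_isX_one hv h0]
    have e : hull U x = ((U ⊔ K ∙ (x 2)) ⊔ K ∙ (x 0 - x 2)) ⊔ K ∙ (x 1 - x 2) := by
      apply le_antisymm
      · have m2 : x 2 ∈ ((U ⊔ K ∙ (x 2)) ⊔ K ∙ (x 0 - x 2)) ⊔ K ∙ (x 1 - x 2) :=
          mem_sup_left (mem_sup_left (mem_sup_right (mem_span_singleton_self _)))
        have m0 : x 0 - x 2 ∈ ((U ⊔ K ∙ (x 2)) ⊔ K ∙ (x 0 - x 2)) ⊔ K ∙ (x 1 - x 2) :=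
          mem_sup_left (mem_sup_right (mem_span_singleton_self _))
        have m1 : x 1 - x 2 ∈ ((U ⊔ K ∙ (x 2)) ⊔ K ∙ (x 0 - x 2)) ⊔ K ∙ (x 1 - x 2) :=
          mem_sup_right (mem_span_singleton_self _)
        refine hull_le (fun u hu => mem_sup_left (mem_sup_left (mem_sup_left hu))) ?_
        intro i
        fin_cases i
        · simpa using add_mem m0 m2
        · simpa using add_mem m1 m2
        · exact m2
      · refine sup_le (sup_le (sup_le (le_hull U x) ?_) ?_) ?_ <;>
          rw [span_singleton_le_iff_mem]
        · exact mem_hull U x 2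
        · exact sub_mem (mem_hull U x 0) (mem_hull U x 2)
        · exact sub_mem (mem_hull U x 1) (mem_hull U x 2)
    have ho : ∀ i, x i - x 2 ∈ Y.orth U := by
      intro i
      rw [mem_orth]; intro u hu
      rw [map_sub, h.val i u hu, h.val 2 u hu, sub_self]
    rw [e, hull_one]
    refine Y.bb_triple U (x 2) (x 0 - x 2) (x 1 - x 2) (ho 0) (ho 1) ?_
    have := (h.gen inferInstance).2 0 1 2 (by decide) (by decide)
    have e2 : Y.ω (x 0 - x 2) (x 1 - x 2) = Y.ω (x 1 - x 0) (x 2 - x 0) := by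
      simp only [map_sub, LinearMap.sub_apply, Y.self]
      rw [Y.swap (x 1) (x 0), Y.swap (x 2) (x 1)]
      ring
    rw [e2]; exact this
  | succ P ih =>
    intro x h
    have h1 := ih h.tail
    have h2 := Y.bb_step (hull U (Fin.tail x)) (x 0)
    rw [tail_hull]
    omega

/-- The semisimplicial set. -/
def XX (U : Submodule K V) (v : V) : SS (Y.fix U) where
  X P := {x : Fin P → V // Y.IsX U v x}
  act P :=
    { smul := fun h x => ⟨fun i => (h : G) • x.1 i, x.2.smul h.2⟩
      one_smul := fun x => Subtype.ext (funext fun i => one_smul G (x.1 i))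
      mul_smul := fun a b x => Subtype.ext (funext fun i => mul_smul (a : G) (b : G) (x.1 i)) }
  δ i x := ⟨fc i x.1, x.2.face i⟩
  δ_smul i h x := rfl
  δ_δ i j h x := Subtype.ext (fc_fc i j h x.1)

theorem XX_smul {U : Submodule K V} {v : V} {P : ℕ} (h : Y.fix U) (x : (Y.XX U v).X P) (i : Fin P) :
    (h • x).1 i = (h : G) • x.1 i := rfl

theorem stb_XX {U : Submodule K V} {v : V} {P : ℕ} (x : (Y.XX U v).X P) :
    stb x = Y.fix (hull U x.1) := by
  ext g
  rw [mem_stb, Y.fix_hull]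
  constructor
  · rintro ⟨h, rfl, e⟩
    refine ⟨h.2, fun i => ?_⟩
    have := congrArg (fun y => y.1 i) e
    exact this
  · rintro ⟨h1, h2⟩
    exact ⟨⟨g, h1⟩, rfl, Subtype.ext (funext h2)⟩

/-- cones -/
def IsCone {U : Submodule K V} {v : V} {P : ℕ} (x : (Y.XX U v).X P) (y : (Y.XX U v).X (P + 1)) :
    Prop := ∃ w, y.1 = (Fin.cons w x.1 : Fin (P + 1) → V) ∧ ∀ i, Y.ω w (x.1 i) = 1

theorem cone_hex {U : Submodule K V} {v : V} {P : ℕ} (x : (Y.XX U v).X P)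
    (hb : 1 ≤ Y.bb (hull U x.1)) : ∃ y, Y.IsCone x y := by
  obtain ⟨w, h1, h2⟩ := Y.exists_cone x.2 hb
  exact ⟨⟨_, h2⟩, w, rfl, h1⟩

theorem cone_hc0 {U : Submodule K V} {v : V} {P : ℕ} (x : (Y.XX U v).X P)
    (y : (Y.XX U v).X (P + 1)) (h : Y.IsCone x y) : (Y.XX U v).δ 0 y = x := by
  obtain ⟨w, e, _⟩ := h
  apply Subtype.ext
  change fc 0 y.1 = x.1
  rw [e, fc_zero_cons]

theorem cone_hcs {U : Submodule K V} {v : V} {P : ℕ} (i : Fin (P + 1)) (x : (Y.XX U v).X (P + 1))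
    (y : (Y.XX U v).X (P + 2)) (h : Y.IsCone x y) :
    Y.IsCone ((Y.XX U v).δ i x) ((Y.XX U v).δ i.succ y) := by
  obtain ⟨w, e, h1⟩ := h
  refine ⟨w, ?_, fun j => h1 _⟩
  change fc i.succ y.1 = _
  rw [e, fc_succ_cons]
  rfl

theorem cone_hcu {U : Submodule K V} {v : V} {P : ℕ} (x x' : (Y.XX U v).X P)
    (y y' : (Y.XX U v).X (P + 1)) (h : Y.IsCone x y) (h' : Y.IsCone x' y')
    (hx : mkO (Y.fix U) x = mkO (Y.fix U) x') : mkO (Y.fix U) y = mkO (Y.fix U) y' := by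
  rw [mkO_eq] at *
  obtain ⟨a, rfl⟩ := hx
  obtain ⟨w, e, h1⟩ := h
  obtain ⟨w', e', h1'⟩ := h'
  obtain ⟨g, hg, hgy⟩ := Y.witt_tuple y.2.ind y'.2.ind
    (fun i u hu => by rw [y.2.val i u hu, y'.2.val i u hu]) (by
      intro i j
      rw [e, e']
      refine Fin.cases ?_ (fun i => ?_) i <;> refine Fin.cases ?_ (fun j => ?_) j
      · simp [Y.self]
      · simp only [Fin.cons_zero, Fin.cons_succ, h1, h1']
      · simp only [Fin.cons_zero, Fin.cons_succ]
        rw [Y.swap, h1, Y.swap _ w', h1']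
      · simp only [Fin.cons_succ]
        rw [XX_smul, XX_smul, Y.inv])
  exact ⟨⟨g, hg⟩, Subtype.ext (funext hgy)⟩

end Symp
end symp7

set_option linter.unusedVariables false
set_option linter.unusedSectionVars false

section lists

variable {V : Type}

/-- chains on lists -/
abbrev LL (V : Type) := List V →₀ ℤ

/-- basis elements -/
noncomputable abbrev ls (x : List V) : LL V := Finsupp.single x 1

/-- put an element in front -/
noncomputable def lcons (v : V) : LL V →ₗ[ℤ] LL V := Finsupp.lmapDomain ℤ ℤ (fun x => v :: x)

/-- concatenate on the left -/
noncomputable def lapp (p : List V) : LL V →ₗ[ℤ] LL V := Finsupp.lmapDomain ℤ ℤ (fun x => p ++ x)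

/-- concatenate on the right -/
noncomputable def rapp (y : List V) : LL V →ₗ[ℤ] LL V := Finsupp.lmapDomain ℤ ℤ (fun x => x ++ y)

@[simp] theorem lcons_ls (v : V) (x : List V) : lcons v (ls x) = ls (v :: x) := by simp [lcons]
@[simp] theorem lapp_ls (p x : List V) : lapp p (ls x) = ls (p ++ x) := by simp [lapp]
@[simp] theorem rapp_ls (p x : List V) : rapp p (ls x) = ls (x ++ p) := by simp [rapp]

/-- boundary of a list -/
noncomputable def ldf : List V → LL V
  | [] => 0
  | v :: x => ls x - lcons v (ldf x)

/-- boundary -/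
noncomputable def ld : LL V →ₗ[ℤ] LL V := Finsupp.lift (LL V) ℤ (List V) ldf

@[simp] theorem ld_ls (x : List V) : ld (ls x) = ldf x := by simp [ld]

theorem ll_ext {f g : LL V →ₗ[ℤ] LL V} (h : ∀ x, f (ls x) = g (ls x)) (z : LL V) : f z = g z := by
  have : f = g := Finsupp.lhom_ext' fun x => LinearMap.ext_ring (h x)
  rw [this]

theorem ld_lcons (v : V) (z : LL V) : ld (lcons v z) = z - lcons v (ld z) :=
  ll_ext (f := ld ∘ₗ lcons v) (g := LinearMap.id - lcons v ∘ₗ ld) (fun x => by simp [ldf]) z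

theorem ld_ldf (x : List V) : ld (ldf x) = 0 := by
  induction x with
  | nil => simp [ldf]
  | cons v x ih => simp only [ldf]; rw [map_sub, ld_ls, ld_lcons, ih]; simp

theorem ld_ld (z : LL V) : ld (ld z) = 0 :=
  ll_ext (f := ld ∘ₗ ld) (g := 0) (fun x => by simp [ld_ldf]) z

theorem ldf_append (p y : List V) :
    ldf (p ++ y) = rapp y (ldf p) + (-1 : ℤ) ^ p.length • lapp p (ldf y) := by
  induction p with
  | nil =>
    have : lapp ([] : List V) (ldf y) = ldf y :=
      ll_ext (f := lapp []) (g := LinearMap.id) (fun x => by simp) _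
    simp [ldf, this]
  | cons v p ih =>
    have h1 : lcons v (rapp y (ldf p)) = rapp y (lcons v (ldf p)) :=
      ll_ext (f := lcons v ∘ₗ rapp y) (g := rapp y ∘ₗ lcons v) (fun x => by simp) _
    have h2 : lcons v (lapp p (ldf y)) = lapp (v :: p) (ldf y) :=
      ll_ext (f := lcons v ∘ₗ lapp p) (g := lapp (v :: p)) (fun x => by simp) _
    simp only [List.cons_append, ldf, ih, map_add, map_sub, rapp_ls, h1, map_zsmul, h2,
      List.length_cons, pow_succ]
    simp only [mul_neg, mul_one, neg_smul]
    abel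

/-- chains supported on a set -/
abbrev sup (s : Set (List V)) : Submodule ℤ (LL V) := Finsupp.supported ℤ ℤ s

theorem sup_map {s : Set (List V)} {f : LL V →ₗ[ℤ] LL V} {N : Submodule ℤ (LL V)}
    (h : ∀ x ∈ s, f (ls x) ∈ N) {z : LL V} (hz : z ∈ sup s) : f z ∈ N := by
  have : sup s ≤ N.comap f := by
    unfold sup
    rw [Finsupp.supported_eq_span_single, Submodule.span_le]
    rintro _ ⟨x, hx, rfl⟩
    exact h x hx
  exact this hz

theorem sup_eq {s : Set (List V)} {f g : LL V →ₗ[ℤ] LL V}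
    (h : ∀ x ∈ s, f (ls x) = g (ls x)) {z : LL V} (hz : z ∈ sup s) : f z = g z := by
  have := sup_map (f := f - g) (N := ⊥) (fun x hx => by simp [h x hx]) hz
  simpa [sub_eq_zero] using this

theorem ls_sup {s : Set (List V)} {x : List V} (h : x ∈ s) : ls x ∈ sup s :=
  Finsupp.single_mem_supported ℤ _ h

/-- faces -/
def faces (x : List V) : Set (List V) := {y | ∃ a q c, x = a ++ q :: c ∧ y = a ++ c}

theorem ldf_sup (x : List V) : ldf x ∈ sup (faces x) := by
  induction x with
  | nil => simp [ldf]
  | cons v x ih =>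
    refine sub_mem (ls_sup ⟨[], v, x, rfl, rfl⟩) (sup_map (s := faces x) ?_ ih)
    rintro _ ⟨a, q, c, rfl, rfl⟩
    rw [lcons_ls]
    exact ls_sup ⟨v :: a, q, c, rfl, rfl⟩

open Classical in
/-- extract the part starting with `p` -/
noncomputable def psi (p : List V) : LL V →ₗ[ℤ] LL V :=
  Finsupp.lift (LL V) ℤ (List V) (fun x => if p <+: x then ls (x.drop p.length) else 0)

theorem psi_app (p y : List V) : psi p (ls (p ++ y)) = ls y := by
  simp [psi]

theorem psi_not {p x : List V} (h : ¬ p <+: x) : psi p (ls x) = 0 := by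
  simp [psi, h]

theorem psi_lapp (p : List V) (z : LL V) : psi p (lapp p z) = z :=
  ll_ext (f := psi p ∘ₗ lapp p) (g := LinearMap.id) (fun x => by simp [psi_app]) z

end lists

section fin

variable {K V : Type} [Field K] [AddCommGroup V] [Module K V]

open Submodule

/-- span of `F` and a list -/
def spn (F : Submodule K V) (x : List V) : Submodule K V := F ⊔ span K {a | a ∈ x}

/-- independence of lists -/
def indL (F : Submodule K V) : List V → Prop
  | [] => True
  | v :: x => indL F x ∧ v ∉ spn F x

theorem spn_nil (F : Submodule K V) : spn F ([] : List V) = F := by simp [spn]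

theorem spn_append (F : Submodule K V) (x y : List V) : spn F (x ++ y) = spn (spn F x) y := by
  have : {a | a ∈ x ++ y} = {a | a ∈ x} ∪ {a | a ∈ y} := by ext; simp
  unfold spn
  rw [this, span_union, sup_assoc]

theorem spn_cons (F : Submodule K V) (v : V) (x : List V) : spn F (v :: x) = spn F x ⊔ K ∙ v := by
  have : {a | a ∈ v :: x} = insert v {a | a ∈ x} := by ext; simp
  unfold spn
  rw [this, span_insert, sup_assoc, sup_comm (span K {a | a ∈ x})]

theorem spn_mid (F : Submodule K V) (a c : List V) (q : V) :
    spn F (a ++ q :: c) = spn F (a ++ c) ⊔ K ∙ q := by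
  have : {b | b ∈ a ++ q :: c} = {b | b ∈ q :: (a ++ c)} := by
    ext; simp only [List.mem_append, List.mem_cons, Set.mem_setOf_eq]; tauto
  rw [← spn_cons]
  unfold spn; rw [this]

theorem spn_mono (F : Submodule K V) {x y : List V} (h : ∀ a ∈ x, a ∈ y) : spn F x ≤ spn F y :=
  sup_le_sup_left (span_mono h) F

theorem exch {W : Submodule K V} {p v : V} (h : v ∈ W ⊔ K ∙ p) (hv : v ∉ W) : p ∈ W ⊔ K ∙ v := by
  obtain ⟨w, hw, c, hc, rfl⟩ := mem_sup.1 h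
  obtain ⟨α, rfl⟩ := mem_span_singleton.1 hc
  have hα : α ≠ 0 := by
    rintro rfl
    exact hv (by simpa using hw)
  refine mem_sup.2 ⟨-(α⁻¹ • w), neg_mem (smul_mem _ _ hw), α⁻¹ • (w + α • p),
    smul_mem _ _ (mem_span_singleton_self _), ?_⟩
  rw [smul_add, smul_smul, inv_mul_cancel₀ hα, one_smul]; abel

theorem indL_mid {F : Submodule K V} {a c : List V} {q : V} :
    indL F (a ++ q :: c) ↔ indL F (a ++ c) ∧ q ∉ spn F (a ++ c) := by
  induction a with
  | nil => rfl
  | cons v a ih =>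
    simp only [List.cons_append, indL, ih, spn_cons, spn_mid]
    constructor
    · rintro ⟨⟨h1, h2⟩, h3⟩
      exact ⟨⟨h1, fun h => h3 (mem_sup_left h)⟩, fun h => h3 (exch h h2)⟩
    · rintro ⟨⟨h1, h2⟩, h3⟩
      exact ⟨⟨h1, fun h => h3 (mem_sup_left h)⟩, fun h => h3 (exch h h2)⟩

theorem indL_append {F : Submodule K V} {p y : List V} :
    indL F (p ++ y) ↔ indL F p ∧ indL (spn F p) y := by
  induction y with
  | nil => simp [indL]
  | cons v y ih => rw [indL_mid, ih, spn_append, indL, and_assoc]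

theorem key_E {F : Submodule K V} {a c a' c' : List V} {q s : V} (hi : indL F (a ++ q :: c))
    (h1 : s ∈ spn F (a' ++ q :: c')) (h2 : s ∉ spn F (a' ++ c'))
    (hsub : ∀ b ∈ a' ++ c', b ∈ a ++ c) : s ∉ spn F (a ++ c) := by
  intro h3
  rw [spn_mid] at h1
  have h4 := exch h1 h2
  have : spn F (a' ++ c') ⊔ K ∙ s ≤ spn F (a ++ c) :=
    sup_le (spn_mono F hsub) ((span_singleton_le_iff_mem _ _).2 h3)
  exact (indL_mid.1 hi).2 (this h4)

/-- admissible lists -/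
def AL (S : Set V) (F : Submodule K V) (P : ℕ) : Set (List V) :=
  {x | x.length = P ∧ (∀ a ∈ x, a ∈ S) ∧ indL F x}

/-- the filtration -/
def DL (F : Submodule K V) (s : V) (t : ℕ) : Set (List V) :=
  {x | s ∈ spn F (x.take t) ∨ s ∉ spn F x}

/-- critical prefixes -/
def Crit (F : Submodule K V) (s : V) (t : ℕ) (p : List V) : Prop :=
  p.length = t + 1 ∧ s ∈ spn F p ∧ s ∉ spn F (p.take t)

theorem AL_face {S : Set V} {F : Submodule K V} {P : ℕ} {a c : List V} {q : V}
    (h : a ++ q :: c ∈ AL S F (P + 1)) : a ++ c ∈ AL S F P := by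
  obtain ⟨h1, h2, h3⟩ := h
  refine ⟨?_, fun b hb => h2 b ?_, (indL_mid.1 h3).1⟩
  · simp at h1 ⊢; omega
  · simp at hb ⊢; tauto

theorem psi_ldf {F : Submodule K V} {s : V} {t : ℕ} {p x : List V} (hp : Crit F s t p)
    (hi : indL F x) (hx : x ∈ DL F s (t + 1)) :
    psi p (ldf x) = (-1 : ℤ) ^ (t + 1) • ld (psi p (ls x)) := by
  obtain ⟨hl, hs, hn⟩ := hp
  by_cases hpx : p <+: x
  · obtain ⟨y, rfl⟩ := hpx
    rw [psi_app, ldf_append, map_add, map_zsmul, psi_lapp, ld_ls, hl]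
    have : psi p (rapp y (ldf p)) = 0 := by
      have := sup_map (f := psi p ∘ₗ rapp y) (N := ⊥) (s := faces p) ?_ (ldf_sup p)
      · simpa using this
      rintro _ ⟨a, q, c, e, rfl⟩
      rw [LinearMap.comp_apply, rapp_ls, psi_not]
      · exact zero_mem _
      rintro ⟨r, hr⟩
      have hlen : (a ++ c).length = t := by
        rw [e] at hl; simp at hl ⊢; omega
      have hs2 : s ∈ spn F (a ++ (c ++ y)) := by
        rw [← List.append_assoc, ← hr, spn_append]
        exact (le_sup_left : spn F p ≤ _) hs
      have hac : p.take t = a ++ c := by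
        have h1 : (p ++ r).take t = p.take t := by rw [List.take_append_of_le_length (by omega)]
        rw [← h1, hr, List.take_append_of_le_length (by omega), List.take_of_length_le (by omega)]
      rw [hac] at hn
      refine key_E (q := q) (a := a) (c := c ++ y) (by rw [e] at hi; simpa using hi)
        (by rw [e] at hs; exact hs) hn ?_ hs2
      intro b hb
      simp at hb ⊢; tauto
    rw [this, zero_add]
  · rw [psi_not hpx, map_zero, smul_zero]
    have := sup_map (f := psi p) (N := ⊥) (s := faces x) ?_ (ldf_sup x)
    · simpa using this
    rintro _ ⟨a, q, c, rfl, rfl⟩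
    rw [psi_not]
    · exact zero_mem _
    rintro ⟨r, hr⟩
    have hs2 : s ∈ spn F (a ++ c) := by
      rw [← hr, spn_append]
      exact (le_sup_left : spn F p ≤ _) hs
    have hs3 : s ∈ spn F (a ++ q :: c) := by
      rw [spn_mid]; exact mem_sup_left hs2
    have hs4 : s ∈ spn F ((a ++ q :: c).take (t + 1)) := hx.resolve_right (fun h => h hs3)
    by_cases hat : t + 1 ≤ a.length
    · apply hpx
      have h1 : p <+: a := by
        refine List.prefix_of_prefix_length_le (l₃ := a ++ c) ⟨r, hr⟩ ⟨c, rfl⟩ (by omega)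
      exact h1.trans ⟨q :: c, rfl⟩
    · push Not at hat
      have e1 : (a ++ q :: c).take (t + 1) = a ++ q :: c.take (t - a.length) := by
        rw [List.take_append, List.take_of_length_le (by omega)]
        have : t + 1 - a.length = (t - a.length) + 1 := by omega
        rw [this, List.take_succ_cons]
      have e2 : p.take t = a ++ c.take (t - a.length) := by
        have h1 : (p ++ r).take t = p.take t := by rw [List.take_append_of_le_length (by omega)]
        rw [← h1, hr, List.take_append, List.take_of_length_le (by omega)]
      rw [e1] at hs4
      rw [e2] at hn
      refine key_E (q := q) hi hs4 hn ?_ hs2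
      intro b hb
      simp only [List.mem_append] at hb ⊢
      exact hb.imp_right List.mem_of_mem_take

theorem fill_step {S : Set V} {F : Submodule K V} {s : V} {t P : ℕ} (htP : t + 1 ≤ P)
    (ih : ∀ p, Crit F s t p → (∀ a ∈ p, a ∈ S) → indL F p → ∀ z ∈ sup (AL S (spn F p) (P - (t + 1))),
      ld z = 0 → ∃ y ∈ sup (AL S (spn F p) (P - (t + 1) + 1)), ld y = z)
    {z : LL V} (hz : z ∈ sup (AL S F P ∩ DL F s (t + 1))) (hd : ld z = 0) :
    ∃ y ∈ sup (AL S F (P + 1)), z - ld y ∈ sup (AL S F P ∩ DL F s t) := by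
  classical
  have hpsi : ∀ p, Crit F s t p → (∀ a ∈ p, a ∈ S) → indL F p →
      ∃ y ∈ sup (AL S (spn F p) (P - (t + 1) + 1)), ld y = psi p z := by
    intro p hp hpS hpi
    refine ih p hp hpS hpi _ ?_ ?_
    · refine sup_map ?_ hz
      rintro x ⟨⟨h1, h2, h3⟩, h4⟩
      by_cases hpx : p <+: x
      · obtain ⟨y, rfl⟩ := hpx
        rw [psi_app]
        refine ls_sup ⟨?_, fun a ha => h2 a (by simp [ha]), (indL_append.1 h3).2⟩
        have := hp.1
        simp at h1; omega
      · rw [psi_not hpx]; exact zero_mem _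
    · have h := sup_eq (f := psi p ∘ₗ ld) (g := (-1 : ℤ) ^ (t + 1) • (ld ∘ₗ psi p))
        (s := AL S F P ∩ DL F s (t + 1)) (by
          rintro x ⟨⟨h1, h2, h3⟩, h4⟩
          show psi p (ld (ls x)) = (-1 : ℤ) ^ (t + 1) • ld (psi p (ls x))
          rw [ld_ls]
          exact psi_ldf hp h3 h4) hz
      simp only [LinearMap.comp_apply, hd, map_zero, LinearMap.smul_apply] at h
      have h5 := congrArg (fun u => (-1 : ℤ) ^ (t + 1) • u) h.symm
      simpa [smul_smul, ← mul_pow] using h5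
  let GP : List V → Prop := fun p => Crit F s t p ∧ (∀ a ∈ p, a ∈ S) ∧ indL F p
  have hch : ∀ p, ∃ y : LL V, GP p → y ∈ sup (AL S (spn F p) (P - (t + 1) + 1)) ∧ ld y = psi p z := by
    intro p
    by_cases h : GP p
    · obtain ⟨y, h1, h2⟩ := hpsi p h.1 h.2.1 h.2.2
      exact ⟨y, fun _ => ⟨h1, h2⟩⟩
    · exact ⟨0, fun h' => absurd h' h⟩
  choose Y hY using hch
  let Q : Finset (List V) := (z.support.image (fun x => x.take (t + 1))).filter GP
  have hQ : ∀ p ∈ Q, GP p := fun p hp => (Finset.mem_filter.1 hp).2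
  let y : LL V := ∑ p ∈ Q, (-1 : ℤ) ^ (t + 1) • lapp p (Y p)
  refine ⟨y, ?_, ?_⟩
  · refine sum_mem fun p hp => Submodule.smul_mem _ _ ?_
    have hg := hQ p hp
    refine sup_map ?_ (hY p hg).1
    rintro x ⟨h1, h2, h3⟩
    rw [lapp_ls]
    refine ls_sup ⟨?_, ?_, indL_append.2 ⟨hg.2.2, h3⟩⟩
    · have := hg.1.1
      simp; omega
    · intro a ha
      rcases List.mem_append.1 ha with h | h
      · exact hg.2.1 a h
      · exact h2 a h
  · have hld : ∀ p ∈ Q, ∃ u ∈ sup (AL S F P ∩ DL F s t),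
        ld ((-1 : ℤ) ^ (t + 1) • lapp p (Y p)) = u + lapp p (psi p z) := by
      intro p hp
      have hg := hQ p hp
      have hl := hg.1.1
      -- the boundary of a product
      let f : LL V →ₗ[ℤ] LL V := ld ∘ₗ lapp p - (-1 : ℤ) ^ (t + 1) • (lapp p ∘ₗ ld)
      have hf : f (Y p) ∈ sup (AL S F P ∩ DL F s t) := by
        refine sup_map ?_ (hY p hg).1
        rintro x ⟨h1, h2, h3⟩
        have e : f (ls x) = rapp x (ldf p) := by
          simp only [f, LinearMap.sub_apply, LinearMap.comp_apply, LinearMap.smul_apply, lapp_ls,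
            ld_ls, ldf_append, hl]
          abel
        rw [e]
        refine sup_map ?_ (ldf_sup p)
        rintro _ ⟨a, q, c, e1, rfl⟩
        rw [rapp_ls]
        have hin : indL F (a ++ q :: (c ++ x)) := by
          have := indL_append.2 ⟨hg.2.2, h3⟩
          rw [e1] at this; simpa using this
        have hlac : (a ++ c).length = t := by
          rw [e1] at hl; simp at hl ⊢; omega
        refine ls_sup ⟨?_, ?_⟩
        · rw [List.append_assoc]
          refine AL_face (q := q) ⟨?_, ?_, hin⟩
          · simp at hlac ⊢; omega
          · intro b hb
            have : b ∈ p ∨ b ∈ x := by rw [e1]; simp at hb ⊢; tauto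
            exact this.elim (hg.2.1 b) (h2 b)
        · by_cases hc : s ∈ spn F (a ++ c)
          · left
            rw [List.take_append_of_le_length (by omega), List.take_of_length_le (by omega)]
            exact hc
          · right
            rw [List.append_assoc]
            refine key_E hin (a' := a) (c' := c) (by rw [← e1]; exact hg.1.2.1) hc ?_
            intro b hb
            simp at hb ⊢; tauto
      refine ⟨(-1 : ℤ) ^ (t + 1) • f (Y p), Submodule.smul_mem _ _ hf, ?_⟩
      simp only [f, LinearMap.sub_apply, LinearMap.comp_apply, LinearMap.smul_apply, map_zsmul,
        (hY p hg).2, smul_sub, smul_smul, ← mul_pow]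
      simp
    have e1 : z - ld y = (z - ∑ p ∈ Q, lapp p (psi p z)) -
        ∑ p ∈ Q, (ld ((-1 : ℤ) ^ (t + 1) • lapp p (Y p)) - lapp p (psi p z)) := by
      rw [Finset.sum_sub_distrib]
      simp only [y, map_sum]
      abel
    rw [e1]
    refine sub_mem ?_ (sum_mem fun p hp => ?_)
    swap
    · obtain ⟨u, hu, e⟩ := hld p hp
      rw [e, add_sub_cancel_right]; exact hu
    · have hz' : z ∈ sup ((AL S F P ∩ DL F s (t + 1)) ∩ z.support) := by
        rw [Finsupp.mem_supported] at hz ⊢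
        exact fun x hx => ⟨hz hx, hx⟩
      have := sup_map (f := LinearMap.id - ∑ p ∈ Q, (lapp p ∘ₗ psi p))
        (N := sup (AL S F P ∩ DL F s t)) ?_ hz'
      · simpa [LinearMap.sum_apply] using this
      rintro x ⟨⟨hxA, hxD⟩, hxz⟩
      have hlx : (x.take (t + 1)).length = t + 1 := by
        rw [List.length_take, hxA.1]; omega
      have hpre : ∀ p, Crit F s t p → p <+: x → p = x.take (t + 1) := by
        rintro p hp ⟨r, rfl⟩
        rw [List.take_append_of_le_length (by rw [hp.1]), List.take_of_length_le (by rw [hp.1])]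
      have hxA' : indL F (x.take (t + 1)) := by
        have := hxA.2.2
        rw [← List.take_append_drop (t + 1) x, indL_append] at this
        exact this.1
      simp only [LinearMap.sub_apply, LinearMap.id_apply, LinearMap.sum_apply,
        LinearMap.comp_apply]
      by_cases hcr : Crit F s t (x.take (t + 1))
      · have hmem : x.take (t + 1) ∈ Q :=
          Finset.mem_filter.2 ⟨Finset.mem_image.2 ⟨x, hxz, rfl⟩, hcr,
            fun a ha => hxA.2.1 a (List.mem_of_mem_take ha), hxA'⟩
        rw [Finset.sum_eq_single (x.take (t + 1))]
        · have : psi (x.take (t + 1)) (ls x) = ls (x.drop (t + 1)) := by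
            conv_lhs => rw [← List.take_append_drop (t + 1) x]
            rw [List.take_append_of_le_length (by rw [hlx]),
              List.take_of_length_le (by rw [hlx]), psi_app]
          rw [this, lapp_ls, List.take_append_drop, sub_self]
          exact zero_mem _
        · intro p hp hne
          rw [psi_not, map_zero]
          intro hpx
          exact hne (hpre p (hQ p hp).1 hpx)
        · intro h; exact absurd hmem h
      · rw [Finset.sum_eq_zero, sub_zero]
        · refine ls_sup ⟨hxA, ?_⟩
          rcases hxD with h | h
          · left
            by_contra hc
            apply hcr
            refine ⟨hlx, h, ?_⟩
            rw [List.take_take, min_eq_left (by omega)]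
            exact hc
          · exact Or.inr h
        · intro p hp
          rw [psi_not, map_zero]
          intro hpx
          exact hcr (hpre p (hQ p hp).1 hpx ▸ (hQ p hp).1)

theorem fill {S : Set V} : ∀ (m : ℕ) (F : Submodule K V),
    (∀ x, indL F x → (∀ a ∈ x, a ∈ S) → x.length < m → ∃ s ∈ S, s ∉ spn F x) →
    ∀ P < m, ∀ z ∈ sup (AL S F P), ld z = 0 → ∃ y ∈ sup (AL S F (P + 1)), ld y = z := by
  intro m
  induction m using Nat.strong_induction_on with
  | _ m ih =>
    intro F hF P hP z hz hd
    obtain ⟨s, hsS, hsF⟩ := hF [] trivial (by simp) (by simp; omega)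
    rw [spn_nil] at hsF
    have main : ∀ t, t ≤ P → ∀ z ∈ sup (AL S F P ∩ DL F s t), ld z = 0 →
        ∃ y ∈ sup (AL S F (P + 1)), ld y = z := by
      intro t
      induction t with
      | zero =>
        intro _ z hz hd
        refine ⟨lcons s z, ?_, ?_⟩
        · refine sup_map ?_ hz
          rintro x ⟨⟨h1, h2, h3⟩, h4⟩
          rw [lcons_ls]
          refine ls_sup ⟨by simp [h1], ?_, h3, ?_⟩
          · intro a ha
            rcases List.mem_cons.1 ha with rfl | h
            · exact hsS
            · exact h2 a h
          · refine h4.resolve_left ?_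
            rw [List.take_zero, spn_nil]; exact hsF
        · rw [ld_lcons, hd, map_zero, sub_zero]
      | succ t iht =>
        intro htP z hz hd
        obtain ⟨y, hy, h2⟩ := fill_step htP (by
          intro p hp hpS hpi z hz hd
          refine ih (m - (t + 1)) (by omega) (spn F p) ?_ _ (by omega) z hz hd
          intro x hx hxS hxm
          have hl := hp.1
          obtain ⟨s, h1, h2⟩ := hF (p ++ x) (indL_append.2 ⟨hpi, hx⟩) (by
            intro a ha
            rcases List.mem_append.1 ha with h | h
            · exact hpS a h
            · exact hxS a h) (by simp; omega)
          exact ⟨s, h1, by rwa [spn_append] at h2⟩) hz hd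
        obtain ⟨y', hy', h3⟩ := iht (by omega) _ h2 (by rw [map_sub, hd, ld_ld, sub_zero])
        exact ⟨y + y', add_mem hy hy', by rw [map_add, h3]; abel⟩
    refine main P le_rfl z ?_ hd
    rw [Finsupp.mem_supported] at hz ⊢
    intro x hx
    refine ⟨hz hx, ?_⟩
    by_cases h : s ∈ spn F x
    · left
      rw [List.take_of_length_le (by rw [(hz hx).1])]; exact h
    · exact Or.inr h

end fin


set_option linter.unusedVariables false
set_option linter.unusedSectionVars false

section symp8

variable {K V G : Type} [Field K] [AddCommGroup V] [Module K V] [FiniteDimensional K V]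
  [Group G] [DistribMulAction G V] (Y : Symp K V G)

open Module Submodule

theorem ldf_ofFn : ∀ {P : ℕ} (x : Fin (P + 1) → V),
    ldf (List.ofFn x) = ∑ i : Fin (P + 1), (-1 : ℤ) ^ (i : ℕ) • ls (List.ofFn (fc i x)) := by
  intro P
  induction P with
  | zero =>
    intro x
    simp [List.ofFn_succ, ldf]
  | succ P ih =>
    intro x
    rw [← Fin.cons_self_tail x]
    generalize Fin.tail x = y
    generalize x 0 = t
    have e : List.ofFn (Fin.cons t y : Fin (P + 2) → V) = t :: List.ofFn y := by
      rw [List.ofFn_succ]; simp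
    rw [e, Fin.sum_univ_succ, fc_zero_cons]
    show ls _ - lcons t (ldf _) = _
    rw [ih, map_sum, sub_eq_add_neg, ← Finset.sum_neg_distrib]
    congr 1
    · simp
    · refine Finset.sum_congr rfl fun i _ => ?_
      have e2 : List.ofFn (Fin.cons t (fc i y) : Fin (P + 1) → V) = t :: List.ofFn (fc i y) := by
        rw [List.ofFn_succ]; simp
      rw [fc_succ_cons, e2, map_zsmul, lcons_ls, Fin.val_succ, pow_succ, mul_neg_one, neg_smul]

theorem spn_ofFn (U : Submodule K V) {P : ℕ} (x : Fin P → V) : spn U (List.ofFn x) = hull U x := by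
  unfold spn hull
  congr 2
  ext a
  simp [List.mem_ofFn]

theorem indL_ofFn {U : Submodule K V} : ∀ {P : ℕ} {x : Fin P → V}, indL U (List.ofFn x) ↔ Ind U x := by
  intro P
  induction P with
  | zero => intro x; simp [indL, ind_zero]
  | succ P ih =>
    intro x
    rw [List.ofFn_succ, tail_ind, ← ih, ← spn_ofFn]
    rfl

namespace Symp

/-- chains on lists -/
noncomputable def tau (U : Submodule K V) (v : V) (P : ℕ) : ((Y.XX U v).X P →₀ ℤ) →ₗ[ℤ] LL V :=
  Finsupp.lmapDomain ℤ ℤ (fun x => List.ofFn x.1)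

/-- lists which are simplices -/
def XL (U : Submodule K V) (v : V) (P : ℕ) : Set (List V) :=
  {l | ∃ x : Fin P → V, Y.IsX U v x ∧ List.ofFn x = l}

theorem tau_inj (U : Submodule K V) (v : V) (P : ℕ) : Function.Injective (Y.tau U v P) :=
  Finsupp.mapDomain_injective fun a b h => Subtype.ext (List.ofFn_injective h)

theorem tau_range (U : Submodule K V) (v : V) (P : ℕ) {z : LL V} (hz : z ∈ sup (Y.XL U v P)) :
    ∃ y, Y.tau U v P y = z := by
  have := sup_map (f := LinearMap.id) (N := LinearMap.range (Y.tau U v P)) (s := Y.XL U v P) ?_ hz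
  · exact this
  rintro _ ⟨x, hx, rfl⟩
  refine ⟨Finsupp.single ⟨x, hx⟩ 1, ?_⟩
  exact Finsupp.mapDomain_single

theorem tau_mem (U : Submodule K V) (v : V) (P : ℕ) (z : (Y.XX U v).X P →₀ ℤ) :
    Y.tau U v P z ∈ sup (Y.XL U v P) := by
  induction z using Finsupp.induction_linear with
  | zero => rw [map_zero]; exact zero_mem _
  | add a b ha hb => rw [map_add]; exact add_mem ha hb
  | single a c =>
    have : Y.tau U v P (Finsupp.single a c) = Finsupp.single (List.ofFn a.1) c := by simp [tau]
    rw [this]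
    exact Finsupp.single_mem_supported ℤ _ ⟨a.1, a.2, rfl⟩

theorem ld_tau (U : Submodule K V) (v : V) (P : ℕ) (z : (Y.XX U v).X (P + 1) →₀ ℤ) :
    ld (Y.tau U v (P + 1) z) = Y.tau U v P (xd (Y.XX U v) P z) := by
  have : ld ∘ₗ Y.tau U v (P + 1) = Y.tau U v P ∘ₗ xd (Y.XX U v) P := by
    apply Finsupp.lhom_ext'
    intro x
    ext
    simp only [LinearMap.comp_apply, Finsupp.lsingle_apply]
    have e : Y.tau U v (P + 1) (Finsupp.single x 1) = ls (List.ofFn x.1) := by simp [tau]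
    rw [e, ld_ls, ldf_ofFn, xd, altS_apply, map_sum]
    congr 1
    refine Finset.sum_congr rfl fun i _ => ?_
    rw [map_zsmul]
    congr 1
    simp [tau]
    rfl
  exact LinearMap.congr_fun this z

theorem xEx_of_list (U : Submodule K V) (v : V) (P : ℕ)
    (h : ∀ z ∈ sup (Y.XL U v P), ld z = 0 → ∃ y ∈ sup (Y.XL U v (P + 1)), ld y = z) :
    XEx (Y.XX U v) P := by
  intro z hz
  obtain ⟨y, hy, e⟩ := h _ (Y.tau_mem U v P z) (by
    cases P with
    | zero =>
      refine sup_eq (f := ld) (g := 0) (s := Y.XL U v 0) ?_ (Y.tau_mem U v 0 z)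
      rintro _ ⟨x, hx, rfl⟩
      simp [ldf]
    | succ P =>
      rw [ld_tau]
      have : xd (Y.XX U v) P z = 0 := hz
      rw [this, map_zero])
  obtain ⟨y, rfl⟩ := Y.tau_range U v _ hy
  exact ⟨y, Y.tau_inj U v P (by rw [← ld_tau, e])⟩

theorem exists_new {U : Submodule K V} {v : V} (hv : v ∉ U) {t : ℕ} (hb : 2 * t ≤ Y.bb (U ⊔ K ∙ v))
    {P : ℕ} (hP : P ≤ t) {x : Fin P → V} (hx : Y.IsX U v x) :
    ∃ w, (∀ u ∈ U, Y.ω u w = Y.ω u v) ∧ w ∉ hull U x := by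
  cases P with
  | zero => exact ⟨v, fun _ _ => rfl, by rw [hull_zero]; exact hv⟩
  | succ P =>
    have := Y.count1 hv hx
    obtain ⟨y, h1, h2⟩ := Y.exists_orth_notMem (U := hull U x) (by omega)
    refine ⟨x 0 + y, fun u hu => ?_, fun h => h2 ?_⟩
    · rw [map_add, hx.val 0 u hu, Y.mem_orth.1 h1 u (le_hull U x hu), add_zero]
    · have := sub_mem h (mem_hull U x 0)
      simpa using this

theorem avoid [Infinite K] {E : Type} [AddCommGroup E] [Module K E] {ι : Type} [Finite ι]
    (p : ι → Submodule K E) (h : ∀ i, p i ≠ ⊤) : ∃ e, ∀ i, e ∉ p i := by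
  by_contra hc
  push Not at hc
  obtain ⟨i, hi⟩ := Subspace.exists_eq_top_of_iUnion_eq_univ (p := p)
    (Set.eq_univ_of_forall fun e => by
      obtain ⟨i, hi⟩ := hc e
      exact Set.mem_iUnion.2 ⟨i, hi⟩)
  exact h i hi

theorem exists_pair {U : Submodule K V} {a : V} (ha : a ∉ U) : ∃ y ∈ Y.orth U, Y.ω y a ≠ 0 := by
  by_contra hc
  push Not at hc
  apply ha
  rw [← Y.orth_orth U, Y.mem_orth]
  exact hc

theorem generic [Infinite K] {U : Submodule K V} {v : V} {P : ℕ} {ι : Type} [Finite ι]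
    (x : ι → Fin P → V) (hx : ∀ a, Y.IsX U v (x a))
    (hn : ∀ a, ∃ w, (∀ u ∈ U, Y.ω u w = Y.ω u v) ∧ w ∉ hull U (x a)) :
    ∃ w, ∀ a, Y.IsX U v (Fin.cons w (x a) : Fin (P + 1) → V) := by
  let L : (Y.orth U) × K →ₗ[K] V :=
    LinearMap.coprod (Y.orth U).subtype (LinearMap.toSpanSingleton K V v)
  have hL : ∀ (y : Y.orth U) (c : K), L (y, c) = y + c • v := by intro y c; simp [L]
  have hflip : ∀ a b, Y.ω.flip a b = Y.ω b a := fun _ _ => rfl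
  have hU : ∀ a i, x a i ∉ U := by
    intro a i hi
    have h1 := (hx a).ind
    have := h1.ne_zero i
    apply this
    simpa using hi
  have hU2 : ∀ a i j, i ≠ j → x a i - x a j ∉ U := by
    intro a i j hij hi
    have h1 := (hx a).ind
    apply hij
    apply h1.injective
    simp only [Function.comp_apply, mkQ_apply]
    exact (Submodule.Quotient.eq U).2 hi
  obtain ⟨e0, h0⟩ := avoid (K := K) (E := (Y.orth U) × K)
    (ι := Unit ⊕ ι ⊕ (ι × Fin P) ⊕ (ι × {jk : Fin P × Fin P // jk.1 < jk.2}))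
    (Sum.elim (fun _ => LinearMap.ker (LinearMap.snd K (Y.orth U) K))
      (Sum.elim (fun a => (hull U (x a)).comap L)
      (Sum.elim (fun ai => LinearMap.ker ((Y.ω.flip (x ai.1 ai.2)) ∘ₗ L))
        (fun q => LinearMap.ker (Y.ω (x q.1 q.2.1.1) (x q.1 q.2.1.2) • LinearMap.snd K (Y.orth U) K
          - Y.ω (x q.1 q.2.1.1) ∘ₗ L - (Y.ω.flip (x q.1 q.2.1.2)) ∘ₗ L))))) (by
      rintro (_ | a | ⟨a, i⟩ | ⟨a, ⟨⟨j, k⟩, hjk⟩⟩) htop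
      · have : ((0, 1) : (Y.orth U) × K) ∈ (⊤ : Submodule K _) := mem_top
        rw [← htop] at this
        simp at this
      · obtain ⟨w, h1, h2⟩ := hn a
        have hw : w - v ∈ Y.orth U := by
          rw [Y.mem_orth]; intro u hu; rw [map_sub, h1 u hu, sub_self]
        have : ((⟨w - v, hw⟩, 1) : (Y.orth U) × K) ∈ (⊤ : Submodule K _) := mem_top
        rw [← htop] at this
        simp [hL] at this
        exact h2 this
      · obtain ⟨y, h1, h2⟩ := Y.exists_pair (hU a i)
        have : ((⟨y, h1⟩, 0) : (Y.orth U) × K) ∈ (⊤ : Submodule K _) := mem_top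
        rw [← htop] at this
        simp [hL] at this
        exact h2 this
      · obtain ⟨y, h1, h2⟩ := Y.exists_pair (hU2 a j k hjk.ne)
        have : ((⟨y, h1⟩, 0) : (Y.orth U) × K) ∈ (⊤ : Submodule K _) := mem_top
        rw [← htop] at this
        simp [hL] at this
        apply h2
        rw [map_sub, Y.swap y (x a j)]
        linear_combination this)
  obtain ⟨⟨y, hy⟩, c⟩ := e0
  have hc : c ≠ 0 := by
    have := h0 (Sum.inl ())
    simpa using this
  have key : L (⟨y, hy⟩, c) = c • (v + c⁻¹ • y) := by
    rw [hL, smul_add, smul_smul, mul_inv_cancel₀ hc, one_smul, add_comm]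
  refine ⟨v + c⁻¹ • y, fun a => Y.isX_cons (hx a) ?_ ?_ fun _ => ⟨fun i => ?_, fun i j hij => ?_⟩⟩
  · intro u hu
    rw [map_add, map_smul, Y.mem_orth.1 hy u hu]; simp
  · intro hm
    refine h0 (Sum.inr (Sum.inl a)) ?_
    simp only [Sum.elim_inr, Sum.elim_inl, mem_comap, key]
    exact smul_mem _ _ hm
  · intro hm
    refine h0 (Sum.inr (Sum.inr (Sum.inl (a, i)))) ?_
    simp only [Sum.elim_inr, Sum.elim_inl, LinearMap.mem_ker, LinearMap.comp_apply, key,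
      map_smul, hflip, LinearMap.smul_apply, hm, smul_zero]
  · intro hm
    refine h0 (Sum.inr (Sum.inr (Sum.inr (a, ⟨(i, j), hij⟩)))) ?_
    simp only [Sum.elim_inr, Sum.elim_inl, LinearMap.mem_ker, LinearMap.comp_apply, key,
      hflip, map_smul, LinearMap.smul_apply, LinearMap.sub_apply,
      LinearMap.snd_apply, smul_eq_mul]
    have hs := Y.self (v + c⁻¹ • y)
    generalize v + c⁻¹ • y = w at *
    simp only [map_sub, LinearMap.sub_apply, hs] at hm
    linear_combination c * hm

theorem xEx {U : Submodule K V} {v : V} (hv : v ∉ U) {t : ℕ} (hb : 2 * t ≤ Y.bb (U ⊔ K ∙ v))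
    {P : ℕ} (hP : P ≤ t) : XEx (Y.XX U v) P := by
  apply Y.xEx_of_list
  rcases finite_or_infinite K with hK | hK
  · have e : ∀ P, Y.XL U v P = AL {w | ∀ u ∈ U, Y.ω u w = Y.ω u v} U P := by
      intro P
      ext l
      constructor
      · rintro ⟨x, hx, rfl⟩
        refine ⟨by simp, ?_, indL_ofFn.2 hx.ind⟩
        intro a ha
        obtain ⟨i, rfl⟩ := List.mem_ofFn.1 ha
        exact hx.val i
      · rintro ⟨rfl, h2, h3⟩
        refine ⟨l.get, ⟨fun i => h2 _ (List.get_mem _ _), ?_, fun h => ?_⟩, List.ofFn_get l⟩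
        · rw [← indL_ofFn, List.ofFn_get]; exact h3
        · exact absurd h (not_infinite_iff_finite.2 hK)
    intro z hz hd
    rw [e] at hz ⊢
    refine fill (t + 1) U ?_ P (by omega) z hz hd
    intro l h1 h2 h3
    have : l ∈ Y.XL U v l.length := by rw [e]; exact ⟨rfl, h2, h1⟩
    obtain ⟨x, hx, hl⟩ := this
    obtain ⟨w, h5, h6⟩ := Y.exists_new hv hb (by omega) hx
    exact ⟨w, h5, by rw [← hl, spn_ofFn]; exact h6⟩
  · intro z hz hd
    have hz' : ∀ l ∈ z.support, l ∈ Y.XL U v P := fun l hl => (Finsupp.mem_supported ℤ z).1 hz hl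
    choose x hx hl using fun a : z.support => hz' a.1 a.2
    obtain ⟨w, hw⟩ := Y.generic x hx (fun a => Y.exists_new hv hb hP (hx a))
    refine ⟨lcons w z, ?_, by rw [ld_lcons, hd, map_zero, sub_zero]⟩
    refine sup_map (s := (z.support : Set (List V))) ?_ ?_
    · intro l hls
      rw [lcons_ls]
      refine ls_sup ⟨_, hw ⟨l, hls⟩, ?_⟩
      rw [List.ofFn_succ]
      simp [hl ⟨l, hls⟩]
    · exact (Finsupp.mem_supported ℤ z).2 (le_refl _)

end Symp

end symp8



set_option linter.unusedVariables false
set_option linter.unusedSectionVars false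

section symp9

variable {K V G : Type} [Field K] [AddCommGroup V] [Module K V] [FiniteDimensional K V]
  [Group G] [DistribMulAction G V] (Y : Symp K V G)

open Module Submodule

namespace Symp

/-- the surjectivity claim -/
def SQ (c q : ℕ) : Prop := ∀ (U : Submodule K V) (v : V), v ∉ U → 2 * (c * q) ≤ Y.bb (U ⊔ K ∙ v) →
  SurjOn (Y.fix (U ⊔ K ∙ v)) (Y.fix U) q

/-- the injectivity claim -/
def IQ (c q : ℕ) : Prop := ∀ (U : Submodule K V) (v : V), v ∉ U →
  2 * (c * q) + 2 ≤ Y.bb (U ⊔ K ∙ v) → InjOn (Y.fix (U ⊔ K ∙ v)) (Y.fix U) q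

theorem count {c : ℕ} (hc : (Infinite K ∧ c = 1) ∨ (Finite K ∧ c = 2)) {U : Submodule K V} {v : V}
    (hv : v ∉ U) {P : ℕ} {x : Fin (P + 3) → V} (hx : Y.IsX U v x) :
    Y.bb (U ⊔ K ∙ v) ≤ Y.bb (hull U x) + 2 * (P + c) := by
  rcases hc with ⟨h, rfl⟩ | ⟨h, rfl⟩
  · exact Y.count2 hv hx
  · exact Y.count1 (P := P + 2) hv hx

theorem e2n {c : ℕ} (hc : (Infinite K ∧ c = 1) ∨ (Finite K ∧ c = 2)) {U : Submodule K V} {v : V}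
    (hv : v ∉ U) {Q j : ℕ} (hS : Y.SQ c j) (hI : Y.IQ c j)
    (hB : 2 * (c * j) + 2 * (Q + c) + 2 ≤ Y.bb (U ⊔ K ∙ v)) :
    E2 (dh (Y.XX U v)) (dv (Y.XX U v)) (Q + 2) j := by
  refine E2_normal (Q + 2) j (fun {P} x y => Y.IsCone x y) (fun x y h => Y.cone_hc0 x y h)
    (fun x y i h => Y.cone_hcs i x y h) (fun x x' y y' h h' hx => Y.cone_hcu x x' y y' h h' hx)
    ?_ ?_ ?_ ?_
  · intro x
    have := Y.count hc hv x.2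
    exact Y.cone_hex x (by omega)
  · intro x
    have := Y.count1 (P := Q + 1) hv x.2
    have : 1 ≤ c := by omega
    exact Y.cone_hex x (by omega)
  · intro x
    have := Y.count (P := Q + 1) hc hv x.2
    rw [stb_XX]
    exact Y.chain_surj (m := 2 * (c * j)) hS x.2.ind (by omega)
  · intro x
    have := Y.count (P := Q) hc hv x.2
    rw [stb_XX]
    exact Y.chain_inj (m := 2 * (c * j) + 2) hI x.2.ind (by omega)

theorem orth_rad_le (U : Submodule K V) : Y.orth (Y.rad U) ≤ U ⊔ Y.orth U := by
  have : Y.orth (U ⊔ Y.orth U) ≤ Y.rad U := by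
    refine le_inf ?_ (Y.orth_le le_sup_left)
    have := Y.orth_le (le_sup_right : Y.orth U ≤ U ⊔ Y.orth U)
    rwa [Y.orth_orth] at this
  have h2 := Y.orth_le this
  rwa [Y.orth_orth] at h2

theorem hull_two (U : Submodule K V) (x : Fin 2 → V) : hull U x = (U ⊔ K ∙ (x 0)) ⊔ K ∙ (x 1) := by
  apply le_antisymm
  · refine hull_le (fun u hu => mem_sup_left (mem_sup_left hu)) fun i => ?_
    fin_cases i
    · exact mem_sup_left (mem_sup_right (mem_span_singleton_self _))
    · exact mem_sup_right (mem_span_singleton_self _)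
  · refine sup_le (sup_le (le_hull U x) ?_) ?_ <;> rw [span_singleton_le_iff_mem]
    · exact mem_hull U x 0
    · exact mem_hull U x 1

theorem special_cone [Infinite K] {U : Submodule K V} {v : V} (hv : v ∉ U)
    (hB : 2 ≤ Y.bb (U ⊔ K ∙ v)) {x : Fin 2 → V} (hx : Y.IsX U v x) :
    ∃ w, (∀ i, Y.ω w (x i) = 1) ∧ Y.IsX U v (Fin.cons w x : Fin 3 → V) := by
  have ht : Y.ω (x 0) (x 1) ≠ 0 := (hx.gen inferInstance).1 0 1 (by decide)
  by_cases hA : ∃ ρ ∈ Y.rad U, Y.ω ρ v ≠ 0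
  · obtain ⟨ρ, hρ, ha⟩ := hA
    obtain ⟨w, h1, h2⟩ := Y.exists_coneVec v hx.ind
    refine ⟨w, h2, Y.isX_cone hx h1 ?_ h2⟩
    intro hw
    set s := Y.ω (x 0) (x 1) / Y.ω ρ v with hs
    have hsa : s * Y.ω ρ v = Y.ω (x 0) (x 1) := by rw [hs]; field_simp
    have hρU := Y.rad_le _ hρ
    have hρo := Y.rad_le_orth _ hρ
    have hr : x 1 - x 0 + s • ρ ∈ Y.orth (hull U x) := by
      rw [hull_two]
      refine Y.orth_sup _ _ (Y.orth_sup _ _ ?_ ?_) ?_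
      · rw [mem_orth]
        intro u hu
        rw [map_add, map_sub, map_smul, hx.val 0 u hu, hx.val 1 u hu, Y.mem_orth.1 hρo u hu]
        simp
      · rw [mem_orth]
        intro u hu
        obtain ⟨k, rfl⟩ := mem_span_singleton.1 hu
        rw [map_smul, LinearMap.smul_apply, map_add, map_sub, map_smul, Y.self,
          Y.swap (x 0) ρ, hx.val 0 ρ hρU]
        simp only [smul_eq_mul]
        linear_combination - k * hsa
      · rw [mem_orth]
        intro u hu
        obtain ⟨k, rfl⟩ := mem_span_singleton.1 hu
        rw [map_smul, LinearMap.smul_apply, map_add, map_sub, map_smul, Y.self,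
          Y.swap (x 1) ρ, hx.val 1 ρ hρU, Y.swap (x 1) (x 0)]
        simp only [smul_eq_mul]
        linear_combination - k * hsa
    have := Y.mem_orth.1 hr w hw
    rw [map_add, map_sub, map_smul, h2, h2, Y.swap w ρ, h1 ρ hρU] at this
    simp only [smul_eq_mul] at this
    apply ht
    linear_combination - this - hsa
  · push Not at hA
    have h0 : x 0 ∈ Y.orth (Y.rad U) := by
      rw [mem_orth]
      intro ρ hρ
      rw [hx.val 0 ρ (Y.rad_le _ hρ), hA ρ hρ]
    obtain ⟨u0, hu0, y, hy, e⟩ := mem_sup.1 (Y.orth_rad_le U h0)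
    have hux : Y.ω u0 v = 0 := by
      rw [← hx.val 0 u0 hu0, ← e, map_add, Y.self, Y.mem_orth.1 hy u0 hu0, add_zero]
    have hyr : y ∈ Y.rad (U ⊔ K ∙ (x 0)) := by
      refine ⟨?_, Y.orth_sup _ _ hy ?_⟩
      · have : y = x 0 - u0 := by rw [← e]; abel
        rw [this]
        exact sub_mem (mem_sup_right (mem_span_singleton_self _)) (mem_sup_left hu0)
      · rw [mem_orth]
        intro u hu
        obtain ⟨k, rfl⟩ := mem_span_singleton.1 hu
        rw [← e, map_smul, LinearMap.smul_apply, map_add, LinearMap.add_apply, Y.self,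
          Y.mem_orth.1 hy u0 hu0]
        simp
    have hyx : Y.ω y (x 1) ≠ 0 := by
      have : Y.ω (x 0) (x 1) = Y.ω u0 (x 1) + Y.ω y (x 1) := by
        nth_rewrite 1 [← e]
        rw [map_add, LinearMap.add_apply]
      rw [hx.val 1 u0 hu0, hux, zero_add] at this
      rwa [← this]
    have hb := Y.bb_hyp hyr hyx
    rw [← hull_two] at hb
    have hone : Y.IsX U v (fun _ : Fin 1 => x 0) := by
      have h' := hx.face 1
      have e : fc 1 x = fun _ : Fin 1 => x 0 := by
        funext i
        fin_cases i
        rfl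
      rwa [e] at h'
    have hb1 := Y.bb_isX_one hv hone
    rw [hull_one] at hb1
    exact Y.exists_cone hx (by omega)

theorem e2s {c : ℕ} (hc : (Infinite K ∧ c = 1) ∨ (Finite K ∧ c = 2)) {U : Submodule K V} {v : V}
    (hv : v ∉ U) {j : ℕ} (hS : Y.SQ c j)
    (hB : 2 * (c * j) + 2 * c ≤ Y.bb (U ⊔ K ∙ v)) :
    E2 (dh (Y.XX U v)) (dv (Y.XX U v)) 1 j := by
  apply E2_special
  intro x
  obtain ⟨w, h1, h2⟩ : ∃ w, (∀ i, Y.ω w (x.1 i) = 1) ∧ Y.IsX U v (Fin.cons w x.1 : Fin 3 → V) := by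
    rcases hc with ⟨h, rfl⟩ | ⟨h, rfl⟩
    · exact Y.special_cone hv (by omega) x.2
    · have := Y.count1 (P := 1) hv x.2
      exact Y.exists_cone x.2 (by omega)
  have hcount := Y.count (P := 0) hc hv h2
  obtain ⟨T, hUT, hT, hTs⟩ := Y.ndhull (2 * (c * j)) hS _ (hull U (Fin.cons w x.1 : Fin 3 → V)) rfl
    (by omega)
  have hwn : w ∉ hull U x.1 := (ind_cons.1 h2.ind).2
  have hind := h2.ind
  let y : (Y.XX U v).X 3 := ⟨_, h2⟩
  have hwT : w ∈ T := hUT (by simpa using mem_hull U (Fin.cons w x.1 : Fin 3 → V) 0)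
  have hxT : ∀ i, x.1 i ∈ T := fun i => hUT (by
    simpa using mem_hull U (Fin.cons w x.1 : Fin 3 → V) i.succ)
  have hxn : ∀ i, x.1 i ∉ U ⊔ K ∙ w := by
    intro i hi
    have hxi : x.1 i ∉ U := by
      have := x.2.ind.ne_zero i
      intro h; apply this; simpa using h
    exact hwn (sup_le (le_hull U x.1) (by
      rw [span_singleton_le_iff_mem]; exact mem_hull U x.1 i) (exch hi hxi))
  obtain ⟨g, hg, hgx, hgl⟩ := Y.move (U := U ⊔ K ∙ w) (T := T) (v := x.1 1) (v' := x.1 0)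
    (sup_le ((le_hull _ _).trans hUT) (by rwa [span_singleton_le_iff_mem])) hT (hxT 1) (hxT 0)
    (hxn 1) (hxn 0) (by
      intro a ha
      obtain ⟨u, hu, b, hb, rfl⟩ := mem_sup.1 ha
      obtain ⟨k, rfl⟩ := mem_span_singleton.1 hb
      simp only [map_add, map_smul, LinearMap.add_apply, LinearMap.smul_apply, h1,
        x.2.val _ u hu])
  refine ⟨y, Y.fix T, ?_, ?_, ?_, ⟨g, Y.fix_le le_sup_left hg⟩, hgl, ?_⟩
  · rw [stb_XX]
    refine hTs.trans ?_
    have hb : 2 * (c * j) ≤ Y.bb (hull U x.1 ⊔ K ∙ w) := by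
      rw [← hull_cons]; omega
    rw [hull_cons]
    exact hS _ _ hwn hb
  · rw [stb_XX]; exact Y.fix_le hUT
  · exact Y.cone_hc0 x y ⟨w, rfl, h1⟩
  · apply Subtype.ext
    funext i
    rw [XX_smul]
    fin_cases i
    · exact hg w (mem_sup_right (mem_span_singleton_self _))
    · exact hgx

theorem d1c {c q : ℕ} {U : Submodule K V} {v : V}
    (hv : v ∉ U) (hS : Y.SQ c q)
    (hB : 2 * (c * q) + 2 ≤ Y.bb (U ⊔ K ∙ v)) (w : AA (Y.XX U v) 2 q)
    (hw : IsCyc (dv (Y.XX U v) 2) q w) :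
    IsBd (dv (Y.XX U v) 1) q (dh (Y.XX U v) 1 q w) := by
  refine d1_of q ?_ w hw
  intro x
  have hcount := Y.count1 (P := 1) hv x.2
  obtain ⟨T, hUT, hT, hTs⟩ := Y.ndhull (2 * (c * q)) hS _ (hull U x.1) rfl (by omega)
  have hxi : ∀ i, x.1 i ∉ U := by
    intro i h
    have := x.2.ind.ne_zero i
    apply this; simpa using h
  obtain ⟨g, hg, hgx, hgl⟩ := Y.move (U := U) (T := T) (v := x.1 1) (v' := x.1 0)
    ((le_hull _ _).trans hUT) hT (hUT (mem_hull _ _ _)) (hUT (mem_hull _ _ _)) (hxi 1) (hxi 0)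
    (fun u hu => by rw [x.2.val _ u hu, x.2.val _ u hu])
  refine ⟨Y.fix T, by rw [stb_XX]; exact hTs, ⟨g, hg⟩, hgl, ?_⟩
  apply Subtype.ext
  funext i
  rw [XX_smul]
  fin_cases i
  exact hgx

theorem claim {c : ℕ} (hc : (Infinite K ∧ c = 1) ∨ (Finite K ∧ c = 2)) :
    ∀ q, Y.SQ c q ∧ Y.IQ c q := by
  intro q
  induction q using Nat.strong_induction_on with
  | _ q ih =>
    have hc1 : 1 ≤ c := by omega
    have hcq : ∀ a : ℕ, a ≤ c * a := fun a => Nat.le_mul_of_pos_left a hc1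
    have hX0 : ∀ (U : Submodule K V) (v : V), Subsingleton ((Y.XX U v).X 0) := fun U v =>
      ⟨fun a b => Subtype.ext (Subsingleton.elim _ _)⟩
    have hst : ∀ (U : Submodule K V) (v : V) (hv : v ∉ U),
        stb (S := Y.XX U v) (P := 1) ⟨fun _ => v, Y.isX_one hv⟩ = Y.fix (U ⊔ K ∙ v) := by
      intro U v hv
      have h := Y.stb_XX (U := U) (v := v) (P := 1) ⟨fun _ => v, Y.isX_one hv⟩
      refine h.trans ?_
      show Y.fix (hull U (fun _ : Fin 1 => v)) = _
      rw [hull_one]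
    have hS : Y.SQ c q := by
      intro U v hv hB
      have hq := hcq q
      rw [← hst U v hv]
      refine machine_surj (hX0 U v) _ ?_ q (fun P hP => Y.xEx hv (t := q) (by omega) hP) ?_
      · intro x
        obtain ⟨g, hg, h⟩ := Y.trans_one hv x.2
        exact ⟨⟨g, hg⟩, Subtype.ext (funext fun i => h i)⟩
      · intro Q j hQ hj
        obtain ⟨hS, hI⟩ := ih j (by omega)
        obtain _ | _ | Q := Q
        · omega
        · refine Y.e2s hc hv hS ?_
          have : q = j + 1 := by omega
          subst this
          rw [Nat.mul_add] at hB
          omega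
        · refine Y.e2n hc hv hS hI ?_
          have : q = j + Q + 2 := by omega
          subst this
          have := hcq Q
          simp only [Nat.mul_add] at hB
          omega
    refine ⟨hS, ?_⟩
    intro U v hv hB
    have hq := hcq q
    rw [← hst U v hv]
    refine machine_inj (hX0 U v) _ q (fun P hP => Y.xEx hv (t := q + 1) (by omega) hP) ?_
      (Y.d1c hv hS hB)
    intro Q j hQ hj
    obtain ⟨hS, hI⟩ := ih j (by omega)
    obtain _ | _ | Q := Q
    · omega
    · omega
    · refine Y.e2n hc hv hS hI ?_
      have : q = j + Q + 1 := by omega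
      subst this
      have := hcq Q
      simp only [Nat.mul_add] at hB
      omega

end Symp

end symp9



section barcmp

variable {G' G : Type} [Group G'] [Group G]

theorem exists_rho (φ : G' →* G) (hφ : Function.Injective φ) :
    ∃ ρ : G → G', (∀ a t, ρ (φ a * t) = a * ρ t) ∧ ρ 1 = 1 := by
  obtain ⟨ρ0, h0⟩ := exists_equivariant φ.range
  let e := (MonoidHom.ofInjective hφ).symm
  have he : ∀ a (h : φ a ∈ φ.range), e ⟨φ a, h⟩ = a := by
    intro a h
    rw [MulEquiv.symm_apply_eq]
    rfl
  refine ⟨fun t => e (ρ0 t * (ρ0 1)⁻¹), fun a t => ?_, by simp⟩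
  have hm : φ a ∈ φ.range := MonoidHom.mem_range.2 ⟨a, rfl⟩
  have h2 : ρ0 (φ a * t) = ⟨φ a, hm⟩ * ρ0 t := h0 ⟨φ a, hm⟩ t
  show e (ρ0 (φ a * t) * (ρ0 1)⁻¹) = _
  rw [h2, mul_assoc, map_mul, he]

/-- consecutive quotients -/
def quo (ρ : G → G') {k : ℕ} (t : Fin (k + 1) → G) : Fin k → G' :=
  fun j => (ρ (t j.castSucc))⁻¹ * ρ (t j.succ)

/-- from homogeneous chains to bar chains -/
noncomputable def toBar (H : Subgroup G) (ρ : G → G')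
    (hinv : ∀ h ∈ H, ∃ a, ∀ t, ρ (h * t) = a * ρ t) (k : ℕ) :
    CC H k →ₗ[ℤ] ((Fin k → G') →₀ ℤ) :=
  clift (fun t => Finsupp.single (quo ρ t) 1) (by
    intro h t
    congr 1
    obtain ⟨a, ha⟩ := hinv h.1 h.2
    funext j
    have e : ∀ i, ρ ((h • t) i) = a * ρ (t i) := fun i => ha (t i)
    simp only [quo, e]
    group)

theorem toBar_bs (H : Subgroup G) (ρ : G → G')
    (hinv : ∀ h ∈ H, ∃ a, ∀ t, ρ (h * t) = a * ρ t) (k : ℕ) (t : Fin (k + 1) → G) :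
    toBar H ρ hinv k (bs H t) = Finsupp.single (quo ρ t) 1 := clift_bs _ _ _

theorem barDiff_single (n : ℕ) (c : Fin (n + 1) → G) : barDiff ℤ G n (Finsupp.single c 1) =
    Finsupp.single (fun j : Fin n => c j.succ) (1 : ℤ)
      + ∑ i : Fin n, Finsupp.single
          (fun j : Fin n => if (j : ℕ) < (i : ℕ) then c (Fin.castSucc j)
            else if (j : ℕ) = (i : ℕ) then c (Fin.castSucc i) * c i.succ
            else c j.succ) ((-1 : ℤ) ^ ((i : ℕ) + 1))
      + Finsupp.single (fun j : Fin n => c (Fin.castSucc j)) ((-1 : ℤ) ^ (n + 1)) := by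
  unfold barDiff
  rw [Finsupp.lift_apply, Finsupp.sum_single_index (by simp), one_smul]

theorem barDiff_quo (ρ : G → G') (n : ℕ) (t : Fin (n + 2) → G) :
    barDiff ℤ G' n (Finsupp.single (quo ρ t) 1) =
      ∑ i : Fin (n + 2), (-1 : ℤ) ^ (i : ℕ) • Finsupp.single (quo ρ (fc i t)) (1 : ℤ) := by
  rw [barDiff_single, Fin.sum_univ_succ, Fin.sum_univ_castSucc, ← add_assoc]
  congr 1
  · congr 1
    · simp only [Fin.val_zero, pow_zero, one_smul]
      congr 1
    · refine Finset.sum_congr rfl fun i _ => ?_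
      rw [Finsupp.smul_single, smul_eq_mul, mul_one]
      congr 1
      funext j
      simp only [quo, fc]
      rcases lt_trichotomy (j : ℕ) (i : ℕ) with h | h | h
      · rw [if_pos h, Fin.succAbove_of_castSucc_lt, Fin.succAbove_of_castSucc_lt]
        · rfl
        · simp only [Fin.lt_def, Fin.le_def, Fin.val_castSucc, Fin.val_succ]; omega
        · simp only [Fin.lt_def, Fin.le_def, Fin.val_castSucc, Fin.val_succ]; omega
      · rw [if_neg (by omega), if_pos h, Fin.succAbove_of_castSucc_lt, Fin.succAbove_of_le_castSucc]
        · have : i = j := Fin.ext h.symm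
          subst this
          rw [Fin.castSucc_succ]
          group
        · simp only [Fin.lt_def, Fin.le_def, Fin.val_castSucc, Fin.val_succ]; omega
        · simp only [Fin.lt_def, Fin.le_def, Fin.val_castSucc, Fin.val_succ]; omega
      · rw [if_neg (by omega), if_neg (by omega), Fin.succAbove_of_le_castSucc,
          Fin.succAbove_of_le_castSucc]
        · rfl
        · simp only [Fin.lt_def, Fin.le_def, Fin.val_castSucc, Fin.val_succ]; omega
        · simp only [Fin.lt_def, Fin.le_def, Fin.val_castSucc, Fin.val_succ]; omega
  · rw [Finsupp.smul_single, smul_eq_mul, mul_one]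
    congr 1
    funext j
    simp only [quo, fc, Fin.succ_last, Fin.succAbove_last]
    rfl

theorem barDiff_toBar (H : Subgroup G) (ρ : G → G')
    (hinv : ∀ h ∈ H, ∃ a, ∀ t, ρ (h * t) = a * ρ t) (k : ℕ) (x : CC H (k + 1)) :
    barDiff ℤ G' k (toBar H ρ hinv (k + 1) x) = toBar H ρ hinv k (cd H k x) := by
  refine ch_ext_apply (f := barDiff ℤ G' k ∘ₗ toBar H ρ hinv (k + 1))
    (g := toBar H ρ hinv k ∘ₗ cd H k) ?_ x
  intro t
  simp only [LinearMap.comp_apply]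
  rw [toBar_bs, barDiff_quo, cd, altS_apply, map_sum]
  refine Finset.sum_congr rfl fun i _ => ?_
  rw [map_zsmul, cf_bs, toBar_bs]

theorem cd_eqm (L : Subgroup G) (f : G → G) (hf : ∀ (l : L) (t : G), f (l • t) = l • f t) (k : ℕ)
    (y : CC L (k + 1)) : cd L k (eqm L f hf (k + 1) y) = eqm L f hf k (cd L k y) := by
  apply altS_natural
  intro i x
  refine ch_ext_apply (f := cf L i ∘ₗ eqm L f hf (k + 1)) (g := eqm L f hf k ∘ₗ cf L i) ?_ x
  intro x
  simp only [LinearMap.comp_apply, cf_bs, eqm_bs]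
  rfl

/-- from bar chains to homogeneous chains -/
noncomputable def ofBar (H : Subgroup G) (φ : G' →* G) (k : ℕ) :
    ((Fin k → G') →₀ ℤ) →ₗ[ℤ] CC H k :=
  Finsupp.lift (CC H k) ℤ (Fin k → G') fun c => bs H (fun i => φ (Fin.partialProd c i))

theorem ofBar_single (H : Subgroup G) (φ : G' →* G) (k : ℕ) (c : Fin k → G') :
    ofBar H φ k (Finsupp.single c 1) = bs H (fun i => φ (Fin.partialProd c i)) := by
  simp [ofBar]

theorem bar_ext {M : Type} [AddCommGroup M] {k : ℕ} {f g : ((Fin k → G') →₀ ℤ) →ₗ[ℤ] M}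
    (h : ∀ c, f (Finsupp.single c 1) = g (Finsupp.single c 1)) (x : (Fin k → G') →₀ ℤ) :
    f x = g x := by
  have : f = g := by
    apply Finsupp.lhom_ext'
    intro y
    apply LinearMap.ext_ring
    exact h y
  rw [this]

section
variable (H : Subgroup G) (φ : G' →* G) (hH : φ.range = H) (ρ : G → G')
  (hρ : ∀ a t, ρ (φ a * t) = a * ρ t) (h1 : ρ 1 = 1)
  (hinv : ∀ h ∈ H, ∃ a, ∀ t, ρ (h * t) = a * ρ t)

include hρ h1 in
theorem toBar_ofBar (k : ℕ) (x : (Fin k → G') →₀ ℤ) : toBar H ρ hinv k (ofBar H φ k x) = x := by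
  have hr : ∀ a, ρ (φ a) = a := by
    intro a
    have := hρ a 1
    rwa [mul_one, h1, mul_one] at this
  refine bar_ext (f := toBar H ρ hinv k ∘ₗ ofBar H φ k) (g := LinearMap.id) ?_ x
  intro c
  simp only [LinearMap.comp_apply, LinearMap.id_apply]
  rw [ofBar_single, toBar_bs]
  congr 1
  funext j
  simp only [quo, hr]
  exact Fin.partialProd_right_inv c j

include hH hρ in
theorem eqm_cond (l : H) (t : G) : φ (ρ (l • t)) = l • φ (ρ t) := by
  obtain ⟨l, hl⟩ := l
  subst hH
  obtain ⟨a, rfl⟩ := hl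
  show φ (ρ (φ a * t)) = φ a * φ (ρ t)
  rw [hρ, map_mul]

theorem ofBar_toBar (k : ℕ) (x : CC H k) : ofBar H φ k (toBar H ρ hinv k x) =
    eqm H (fun t => φ (ρ t)) (eqm_cond H φ hH ρ hρ) k x := by
  refine ch_ext_apply (f := ofBar H φ k ∘ₗ toBar H ρ hinv k)
    (g := eqm H (fun t => φ (ρ t)) (eqm_cond H φ hH ρ hρ) k) ?_ x
  intro t
  simp only [LinearMap.comp_apply]
  rw [toBar_bs, ofBar_single, eqm_bs, ← bs_smul (⟨φ (ρ (t 0)), hH ▸ ⟨_, rfl⟩⟩ : H)]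
  congr 1
  funext i
  have := congrFun (Fin.partialProd_left_inv (fun i => ρ (t i))) i
  simp only [Pi.smul_apply, smul_eq_mul] at this
  show φ (ρ (t 0)) * φ _ = _
  rw [← map_mul]
  exact congrArg φ this

include hH hρ h1 hinv in
theorem cd_ofBar (k : ℕ) (x : (Fin (k + 1) → G') →₀ ℤ) :
    cd H k (ofBar H φ (k + 1) x) = ofBar H φ k (barDiff ℤ G' k x) := by
  rw [← toBar_ofBar H φ ρ hρ h1 hinv (k + 1) x]
  generalize ofBar H φ (k + 1) x = y
  rw [barDiff_toBar, ofBar_toBar H φ hH ρ hρ hinv, ofBar_toBar H φ hH ρ hρ hinv, cd_eqm]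

end

theorem mem_barCycles {k : ℕ} {z : (Fin k → G) →₀ ℤ} :
    z ∈ barCycles ℤ G k ↔ IsCyc (A := fun k => (Fin k → G) →₀ ℤ) (barDiff ℤ G) k z := by
  cases k with
  | zero => simp [barCycles, IsCyc]
  | succ k => simp [barCycles, IsCyc]

theorem mem_barBoundaries {k : ℕ} {z : (Fin k → G) →₀ ℤ} :
    z ∈ barBoundaries ℤ G k ↔ IsBd (A := fun k => (Fin k → G) →₀ ℤ) (barDiff ℤ G) k z := Iff.rfl

theorem inc_ofBar (H : Subgroup G) (φ : G' →* G) (k : ℕ) (h : H ≤ ⊤) (x : (Fin k → G') →₀ ℤ) :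
    ofBar ⊤ (MonoidHom.id G) k (barMap ℤ φ k x) = inc h k (ofBar H φ k x) := by
  refine bar_ext (f := ofBar ⊤ (MonoidHom.id G) k ∘ₗ barMap ℤ φ k) (g := inc h k ∘ₗ ofBar H φ k) ?_ x
  intro c
  have e : barMap ℤ φ k (Finsupp.single c 1) = Finsupp.single (φ ∘ c) 1 := by simp [barMap]
  simp only [LinearMap.comp_apply]
  rw [e, ofBar_single, ofBar_single, inc_bs]
  congr 1
  funext i
  refine Fin.inductionOn i (by simp) fun i hi => ?_
  rw [Fin.partialProd_succ, Fin.partialProd_succ, map_mul, map_mul, hi]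
  rfl

theorem bar_cmp (φ : G' →* G) (hφ : Function.Injective φ) (k : ℕ) :
    (SurjOn φ.range (⊤ : Subgroup G) k → BarInducedSurj ℤ (φ : G' → G) k) ∧
    (InjOn φ.range (⊤ : Subgroup G) k → BarInducedInj ℤ (φ : G' → G) k) := by
  obtain ⟨ρ, hρ, h1⟩ := exists_rho φ hφ
  have hinv : ∀ h ∈ φ.range, ∃ a, ∀ t, ρ (h * t) = a * ρ t := by
    rintro _ ⟨a, rfl⟩
    exact ⟨a, hρ a⟩
  have gH : (MonoidHom.id G).range = ⊤ := by
    rw [MonoidHom.range_eq_top]; exact Function.surjective_id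
  have gρ : ∀ a t : G, id (MonoidHom.id G a * t) = a * id t := fun _ _ => rfl
  have ginv : ∀ h ∈ (⊤ : Subgroup G), ∃ a, ∀ t : G, id (h * t) = a * id t := fun h _ => ⟨h, fun _ => rfl⟩
  have c1 := cd_ofBar φ.range φ rfl ρ hρ h1 hinv
  have c2 := cd_ofBar ⊤ (MonoidHom.id G) gH id gρ rfl ginv
  constructor
  · rintro ⟨hle, hs⟩ z hz
    obtain ⟨w, hw, hb⟩ := hs (ofBar ⊤ (MonoidHom.id G) k z)
      ((mem_barCycles.1 hz).map (fun j => ofBar ⊤ (MonoidHom.id G) j) c2)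
    refine ⟨toBar _ ρ hinv k w, mem_barCycles.2
      (hw.map (fun j => toBar _ ρ hinv j) (barDiff_toBar _ ρ hinv)), ?_⟩
    have h3 := (eqm_homotopic φ.range (fun t => φ (ρ t)) (eqm_cond φ.range φ rfl ρ hρ) k w hw).map
      (fun j => inc hle j) (cd_inc hle)
    rw [← ofBar_toBar φ.range φ rfl ρ hρ hinv, map_sub, ← inc_ofBar] at h3
    have h4 := hb.sub h3
    rw [sub_sub_sub_cancel_right, ← map_sub] at h4
    have h5 := h4.map (fun j => toBar ⊤ id ginv j) (barDiff_toBar ⊤ id ginv)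
    rw [toBar_ofBar ⊤ (MonoidHom.id G) id gρ rfl ginv] at h5
    exact mem_barBoundaries.2 h5
  · rintro ⟨hle, hs⟩ w hw hb
    have h3 := (mem_barBoundaries.1 hb).map (fun j => ofBar ⊤ (MonoidHom.id G) j) c2
    rw [inc_ofBar φ.range φ k hle] at h3
    have h4 := hs _ ((mem_barCycles.1 hw).map (fun j => ofBar φ.range φ j) c1) h3
    have h5 := h4.map (fun j => toBar φ.range ρ hinv j) (barDiff_toBar φ.range ρ hinv)
    rw [toBar_ofBar φ.range φ ρ hρ h1 hinv] at h5
    exact mem_barBoundaries.2 h5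

end barcmp


set_option linter.unusedVariables false
open Matrix
section inst

variable {K : Type} [Field K]

theorem jmat_sq (m : ℕ) : Jmat K m * Jmat K m = -1 := by
  rw [Jmat, fromBlocks_multiply, ← fromBlocks_one, fromBlocks_neg]
  simp

theorem jmat_neg_mul (m : ℕ) : (-Jmat K m) * Jmat K m = 1 := by
  rw [neg_mul, jmat_sq, neg_neg]

/-- an element of the symplectic group from a matrix -/
def spOf (m : ℕ) (A : Matrix (Fin m ⊕ Fin m) (Fin m ⊕ Fin m) K)
    (h : Aᵀ * Jmat K m * A = Jmat K m) : ↥(SpGroup K m) :=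
  have h1 : (-Jmat K m * Aᵀ * Jmat K m) * A = 1 := by
    rw [Matrix.mul_assoc, Matrix.mul_assoc, ← Matrix.mul_assoc Aᵀ, h, jmat_neg_mul]
  ⟨⟨A, -Jmat K m * Aᵀ * Jmat K m, mul_eq_one_comm.1 h1, h1⟩, h⟩

/-- The action on column vectors. -/
instance spAct (m : ℕ) : DistribMulAction ↥(SpGroup K m) (Fin m ⊕ Fin m → K) where
  smul g x := ((g : GL (Fin m ⊕ Fin m) K) : Matrix _ _ K) *ᵥ x
  one_smul x := Matrix.one_mulVec x
  mul_smul g h x := (Matrix.mulVec_mulVec x _ _).symm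
  smul_zero g := Matrix.mulVec_zero _
  smul_add g x y := Matrix.mulVec_add _ x y

instance spSMul (m : ℕ) : SMul ↥(SpGroup K m) (Fin m ⊕ Fin m → K) := (spAct m).toSMul

theorem sp_smul (m : ℕ) (g : ↥(SpGroup K m)) (x : Fin m ⊕ Fin m → K) :
    g • x = ((g : GL (Fin m ⊕ Fin m) K) : Matrix _ _ K) *ᵥ x := rfl

theorem jform_alt (m : ℕ) (x : Fin m ⊕ Fin m → K) : x ⬝ᵥ (Jmat K m *ᵥ x) = 0 := by
  obtain ⟨a, b, rfl⟩ : ∃ a b, x = Sum.elim a b := ⟨x ∘ Sum.inl, x ∘ Sum.inr, by simp⟩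
  rw [Jmat, Matrix.fromBlocks_mulVec]
  simp [Matrix.neg_mulVec, dotProduct_comm]

theorem jform_inv (m : ℕ) (A : Matrix (Fin m ⊕ Fin m) (Fin m ⊕ Fin m) K) (x y) :
    (A *ᵥ x) ⬝ᵥ (Jmat K m *ᵥ (A *ᵥ y)) = x ⬝ᵥ ((Aᵀ * Jmat K m * A) *ᵥ y) := by
  rw [← Matrix.mulVec_mulVec, ← Matrix.mulVec_mulVec, Matrix.dotProduct_mulVec x,
    Matrix.vecMul_transpose]

theorem jform_ext (m : ℕ) {A B : Matrix (Fin m ⊕ Fin m) (Fin m ⊕ Fin m) K}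
    (h : ∀ x y, x ⬝ᵥ (A *ᵥ y) = x ⬝ᵥ (B *ᵥ y)) : A = B := by
  ext i j
  simpa using h (Pi.single i 1) (Pi.single j 1)

/-- The standard symplectic space. -/
noncomputable def stdSymp (m : ℕ) : Symp K (Fin m ⊕ Fin m → K) ↥(SpGroup K m) where
  ω := Matrix.toBilin' (Jmat K m)
  alt x := by
    show Matrix.toBilin' (Jmat K m) x x = 0
    rw [Matrix.toBilin'_apply', jform_alt]
  nd := by
    have hd : (Jmat K m).det ≠ 0 := by
      have := congrArg Matrix.det (jmat_neg_mul (K := K) m)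
      rw [Matrix.det_mul, Matrix.det_one] at this
      exact right_ne_zero_of_mul_eq_one this
    exact (Matrix.nondegenerate_of_det_ne_zero hd).toBilin'
  gsmul g c x := Matrix.mulVec_smul _ c x
  inv g x y := by
    rw [Matrix.toBilin'_apply', Matrix.toBilin'_apply', sp_smul, sp_smul, jform_inv,
      (mem_spGroup_iff K m g.1).1 g.2]
  trans u c := by
    have hT : ∀ x, (1 + c • vecMulVec u (u ᵥ* Jmat K m)) *ᵥ x
        = x + (c * (u ⬝ᵥ (Jmat K m *ᵥ x))) • u := by
      intro x
      rw [Matrix.add_mulVec, Matrix.one_mulVec, Matrix.smul_mulVec, Matrix.vecMulVec_mulVec,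
        ← Matrix.dotProduct_mulVec]
      simp [mul_smul]
    have hsw : ∀ x y : Fin m ⊕ Fin m → K, x ⬝ᵥ (Jmat K m *ᵥ y) = - (y ⬝ᵥ (Jmat K m *ᵥ x)) := by
      intro x y
      have := jform_alt m (x + y)
      rw [Matrix.mulVec_add, add_dotProduct, dotProduct_add, dotProduct_add, jform_alt,
        jform_alt] at this
      linear_combination this
    refine ⟨spOf m (1 + c • vecMulVec u (u ᵥ* Jmat K m)) ?_, fun x => ?_⟩
    · apply jform_ext
      intro x y
      rw [← jform_inv, hT, hT, Matrix.mulVec_add, add_dotProduct, dotProduct_add, dotProduct_add,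
        Matrix.mulVec_smul, dotProduct_smul, smul_dotProduct, smul_dotProduct, dotProduct_smul,
        jform_alt, hsw x u]
      simp only [smul_eq_mul]
      ring
    · rw [Matrix.toBilin'_apply', ← hT]
      rfl
  faithful g h hx := by
    apply Subtype.ext
    apply Units.ext
    exact Matrix.mulVec_injective (funext hx)

theorem embMat_mul (n : ℕ) (A B : Matrix (Fin n ⊕ Fin n) (Fin n ⊕ Fin n) K) :
    embMat K n (A * B) = embMat K n A * embMat K n B := by
  simp [embMat, Matrix.submatrix_mul_equiv, Matrix.fromBlocks_multiply]

theorem embMat_inj (n : ℕ) {A B : Matrix (Fin n ⊕ Fin n) (Fin n ⊕ Fin n) K}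
    (h : embMat K n A = embMat K n B) : A = B := by
  ext i j
  have := congrFun (congrFun h (sumEquiv n (Sum.inl i))) (sumEquiv n (Sum.inl j))
  simpa [embMat] using this

/-- The embedding as a homomorphism. -/
noncomputable def embHom (n : ℕ) : ↥(SpGroup K n) →* ↥(SpGroup K (n + 1)) :=
  MonoidHom.mk' (embSp K n) (fun a b => Subtype.ext (Units.ext (embMat_mul n _ _)))

theorem embHom_inj (n : ℕ) : Function.Injective (embHom (K := K) n) := by
  intro a b h
  apply Subtype.ext
  apply Units.ext
  have h2 : (embHom n a : GL (Fin (n + 1) ⊕ Fin (n + 1)) K) = embHom n b := congrArg _ h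
  have h3 : embMat K n (a : GL (Fin n ⊕ Fin n) K) = embMat K n (b : GL (Fin n ⊕ Fin n) K) :=
    congrArg Units.val h2
  exact embMat_inj n h3

/-- the new basis vectors -/
def nv (n : ℕ) (p : Fin 1 ⊕ Fin 1) : Fin (n + 1) ⊕ Fin (n + 1) → K :=
  Pi.single (sumEquiv n (Sum.inr p)) 1

theorem emb_fix (n : ℕ) (g : ↥(SpGroup K n)) (p) : embHom n g • nv (K := K) n p = nv n p := by
  show embMat K n _ *ᵥ Pi.single _ 1 = _
  rw [Matrix.mulVec_single_one]
  ext i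
  obtain ⟨i, rfl⟩ := (sumEquiv n).surjective i
  rcases i with i | i
  · simp [embMat, nv]
  · simp [embMat, nv, Matrix.one_apply, Pi.single_apply]

theorem fix_emb (n : ℕ) (g : ↥(SpGroup K (n + 1))) (h : ∀ p, g • nv (K := K) n p = nv n p) :
    g ∈ (embHom (K := K) n).range := by
  obtain ⟨A, B, C, E, hM⟩ : ∃ A B C E,
      (((g : GL (Fin (n + 1) ⊕ Fin (n + 1)) K) : Matrix _ _ K)).submatrix (sumEquiv n) (sumEquiv n) = fromBlocks A B C E := ⟨_, _, _, _, (fromBlocks_toBlocks _).symm⟩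
  have hcol : ∀ i p, fromBlocks A B C E i (Sum.inr p) = if i = Sum.inr p then 1 else 0 := by
    intro i p
    have := congrFun (h p) (sumEquiv n i)
    rw [sp_smul, nv, Matrix.mulVec_single_one] at this
    rw [← hM, Matrix.submatrix_apply]
    simpa [Pi.single_apply] using this
  have hB : B = 0 := by
    ext i p
    simpa using hcol (Sum.inl i) p
  have hE : E = 1 := by
    ext i p
    simpa [Matrix.one_apply] using hcol (Sum.inr i) p
  subst hB hE
  have hg : ((g : GL (Fin (n + 1) ⊕ Fin (n + 1)) K) : Matrix _ _ K) = (fromBlocks A 0 C 1).submatrix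
      (sumEquiv n).symm (sumEquiv n).symm := by
    rw [← hM]; ext i j; simp
  have hs := (mem_spGroup_iff K _ g.1).1 g.2
  rw [hg, ← jmat_decomp] at hs
  simp only [Matrix.transpose_submatrix, Matrix.fromBlocks_transpose,
      Matrix.submatrix_mul_equiv, Matrix.fromBlocks_multiply] at hs
  have hs2 := congrArg (fun M => M.submatrix (sumEquiv n) (sumEquiv n)) hs
  simp only [Matrix.submatrix_submatrix, Equiv.symm_comp_self, Matrix.submatrix_id_id] at hs2
  rw [fromBlocks_inj] at hs2
  obtain ⟨h1, h2, h3, h4⟩ := hs2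
  simp at h1 h3
  have hC : C = 0 := by
    rw [← Matrix.one_mul C, ← jmat_neg_mul, Matrix.mul_assoc, h3, Matrix.mul_zero]
  subst hC
  simp at h1
  refine ⟨spOf n A h1, ?_⟩
  apply Subtype.ext
  apply Units.ext
  exact hg.symm

open Submodule Module

theorem final (n k c : ℕ) (hc : (Infinite K ∧ c = 1) ∨ (Finite K ∧ c = 2)) :
    (c * k ≤ n → SurjOn (embHom (K := K) n).range ⊤ k) ∧
    (c * k + 1 ≤ n → InjOn (embHom (K := K) n).range ⊤ k) := by
  set Y := stdSymp (K := K) (n + 1)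
  set e : Fin (n + 1) ⊕ Fin (n + 1) → K := nv n (Sum.inl 0) with he
  set f : Fin (n + 1) ⊕ Fin (n + 1) → K := nv n (Sum.inr 0) with hf
  have hef : Y.ω e f = 1 := by
    show Matrix.toBilin' (Jmat K (n + 1)) e f = 1
    rw [he, hf, nv, nv, Matrix.toBilin'_single]
    simp [Jmat, sumEquiv]
  have h0 : Y.bb ⊥ = 2 * n + 2 := by
    have a1 := Y.bb_add ⊥
    have a2 := Y.fr_orth ⊥
    have a3 := Submodule.finrank_mono (Y.rad_le ⊥)
    rw [finrank_bot] at a2 a3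
    have a4 : finrank K (Fin (n + 1) ⊕ Fin (n + 1) → K) = 2 * n + 2 := by
      simp; omega
    omega
  have b1 := Y.bb_step ⊥ e
  have hrad : e ∈ Y.rad (⊥ ⊔ K ∙ e) := by
    rw [bot_sup_eq]
    refine ⟨mem_span_singleton_self e, Y.orth_span_singleton.2 (Y.self e)⟩
  have b2 := Y.bb_hyp (U := ⊥ ⊔ K ∙ e) (v := f) hrad (by rw [hef]; exact one_ne_zero)
  have n1 : e ∉ (⊥ : Submodule K _) := by
    intro h
    rw [mem_bot] at h
    rw [h] at hef
    simp at hef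
  have n2 : f ∉ (⊥ ⊔ K ∙ e) := by
    intro h
    rw [bot_sup_eq] at h
    obtain ⟨a, ha⟩ := mem_span_singleton.1 h
    rw [← ha, map_smul, Y.self] at hef
    simp at hef
  have r1 : Y.fix ⊥ = ⊤ := by
    rw [eq_top_iff]
    intro g _ u hu
    rw [(mem_bot K).1 hu]
    exact smul_zero g
  have r2 : Y.fix (⊥ ⊔ K ∙ e ⊔ K ∙ f) = (embHom (K := K) n).range := by
    apply le_antisymm
    · intro g hg
      apply fix_emb
      rintro (p | p)
      · rw [Subsingleton.elim p 0]
        exact hg e (mem_sup_left (mem_sup_right (mem_span_singleton_self e)))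
      · rw [Subsingleton.elim p 0]
        exact hg f (mem_sup_right (mem_span_singleton_self f))
    · rintro _ ⟨a, rfl⟩
      have key : ∀ p, embHom n a ∈ Y.fix (K ∙ nv n p) := by
        intro p u hu
        obtain ⟨c, rfl⟩ := mem_span_singleton.1 hu
        exact (Y.gsmul _ _ _).trans (congrArg (c • ·) (emb_fix n a p))
      refine Y.fix_sup (Y.fix_sup ?_ (key _)) (key _)
      rw [r1]
      trivial
  have cl := Y.claim hc k
  rw [← r1, ← r2]
  constructor
  · intro hk
    have hk2 : 2 * (c * k) ≤ 2 * n := by omega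
    exact (cl.1 _ f n2 (by omega)).trans (cl.1 _ e n1 (by omega))
  · intro hk
    exact (cl.2 _ f n2 (by omega)).trans (cl.2 _ e n1 (by omega))

theorem final2 (k n : ℕ) (hk : 1 ≤ k) (hn : 1 ≤ n)
    (h : (Infinite K ∧ ((k = 1 ∧ 2 ≤ n) ∨ (2 ≤ k ∧ k ≤ n))) ∨ (Finite K ∧ 2 * k ≤ n)) :
    BarInducedSurj ℤ (embSp K n) k ∧ BarInducedInj ℤ (embSp K n) (k - 1) := by
  obtain ⟨c, hc, h1⟩ : ∃ c, ((Infinite K ∧ c = 1) ∨ (Finite K ∧ c = 2)) ∧ c * k ≤ n := by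
    rcases h with ⟨h, h'⟩ | ⟨h, h'⟩
    · exact ⟨1, Or.inl ⟨h, rfl⟩, by omega⟩
    · exact ⟨2, Or.inr ⟨h, rfl⟩, h'⟩
  have h2 : c * (k - 1) + 1 ≤ n := by
    rcases hc with ⟨_, rfl⟩ | ⟨_, rfl⟩ <;> omega
  exact ⟨(bar_cmp (embHom n) (embHom_inj n) k).1 ((final n k c hc).1 h1),
    (bar_cmp (embHom n) (embHom_inj n) (k - 1)).2 ((final n (k - 1) c hc).2 h2)⟩

end inst

/-- Let `D` be a field and `k ≥ 1`, `n ≥ 1`.  If `D` is infinite and either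
(`k = 1` and `n ≥ 2`) or (`2 ≤ k ≤ n`), or if `D` is finite and `n ≥ 2k`, then the relative
integral group homology `H_k(Sp_{2n+2}(D), Sp_{2n}(D); ℤ)` vanishes; equivalently, the map
`H_k(Sp_{2n}(D); ℤ) → H_k(Sp_{2n+2}(D); ℤ)` induced by the hyperbolic embedding is
surjective, and the induced map in degree `k − 1` is injective. -/
theorem statement2 (k n : ℕ) (hk : 1 ≤ k) (hn : 1 ≤ n)
    (h : (Infinite D ∧ ((k = 1 ∧ 2 ≤ n) ∨ (2 ≤ k ∧ k ≤ n))) ∨ (Finite D ∧ 2 * k ≤ n)) :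
    BarInducedSurj ℤ (embSp D n) k ∧ BarInducedInj ℤ (embSp D n) (k - 1) := by
  exact final2 k n hk hn h

end Stmt2
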